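/- Let r ≥ 1 and let m_1, …, m_r and d_1, …, d_r be integers forming principal data, and let G be the group with presentation ⟨x, t | w⟩ where w = ∏_{i=1}^{r} t^{-d_i} x^{m_i} t^{d_i} in the free group on x, t. Set e = min_i d_i, D = max_i d_i, δ = D − e, and for 0 ≤ k ≤ δ let a_k = Σ_{i : d_i − e = k} m_i, so that the associated polynomial is A(X) = a_0 + a_1 X + ⋯ + a_{δ−1} X^{δ−1} − m X^{δ} where −m = a_δ is the coefficient coming from the unique index attaining D. Assume that gcd(a_0, …, a_{δ−1}) = 1 and that a_{δ−1} is not divisible by m. If every complex root of A(X) is a positive real number, then G is bi-orderable. -/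

import Mathlib

/-- A group is bi-orderable if it admits a strict total order invariant under
left and right multiplication. -/
def IsBiOrderable (G : Type*) [Group G] : Prop :=
  ∃ lt : G → G → Prop, IsStrictTotalOrder G lt ∧
    ∀ a b c : G, lt a b → lt (c * a) (c * b) ∧ lt (a * c) (b * c)

namespace PrincipalGroup

open PowerSeries

/-- A map from a group to an additive group turning products into sums. -/
def IsLog {Γ A : Type*} [Group Γ] [AddCommGroup A] (f : Γ → A) : Prop :=
  ∀ g h, f (g * h) = f g + f h

namespace IsLog

variable {Γ A : Type*} [Group Γ] [AddCommGroup A] {f : Γ → A}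

/-- The associated additive homomorphism. -/
def toHom (hf : IsLog f) : Γ →* Multiplicative A where
  toFun g := Multiplicative.ofAdd (f g)
  map_one' := by
    have := hf 1 1
    simp at this
    simp [this]
  map_mul' g h := by rw [hf]; rfl

lemma map_one (hf : IsLog f) : f 1 = 0 := congrArg Multiplicative.toAdd (_root_.map_one hf.toHom)

lemma map_inv (hf : IsLog f) (g : Γ) : f g⁻¹ = -f g :=
  congrArg Multiplicative.toAdd (_root_.map_inv hf.toHom g)

lemma map_pow (hf : IsLog f) (g : Γ) (n : ℕ) : f (g ^ n) = n • f g :=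
  congrArg Multiplicative.toAdd (_root_.map_pow hf.toHom g n)

lemma map_zpow (hf : IsLog f) (g : Γ) (n : ℤ) : f (g ^ n) = n • f g :=
  congrArg Multiplicative.toAdd (_root_.map_zpow hf.toHom g n)

end IsLog

/-- The formal exponential `exp (a X)`. -/
noncomputable def ex (a : ℝ) : ℝ⟦X⟧ := rescale a (exp ℝ)

lemma ex_add (a b : ℝ) : ex (a + b) = ex a * ex b := (exp_mul_exp_eq_exp_add a b).symm

lemma ex_zero : ex 0 = 1 := by simp [ex]

lemma constantCoeff_ex (a : ℝ) : constantCoeff (ex a) = 1 := by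
  simp [ex, ← coeff_zero_eq_constantCoeff_apply, coeff_rescale]

lemma ex_ne_zero (a : ℝ) : ex a ≠ 0 := by
  intro h
  have := constantCoeff_ex a
  simp [h] at this

lemma rescale_ex (s a : ℝ) : rescale s (ex a) = ex (s * a) := by
  rw [ex, rescale_rescale, mul_comm]; rfl

lemma isUnit_ex (a : ℝ) : IsUnit (ex a) := by
  rw [isUnit_iff_constantCoeff, constantCoeff_ex]; exact isUnit_one

lemma ex_pow (a : ℝ) (n : ℕ) : ex a ^ n = ex (n * a) := by
  induction n with
  | zero => simp [ex_zero]
  | succ k ih => rw [pow_succ, ih, ← ex_add]; push_cast; ring_nf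

lemma derivative_ex (a : ℝ) : derivative ℝ (ex a) = a • ex a := by
  ext n
  simp only [coeff_derivative, ex, coeff_rescale, coeff_exp, map_smul, smul_eq_mul]
  rw [Nat.factorial_succ]
  have : ((n.factorial : ℕ) : ℝ) ≠ 0 := by positivity
  have h2 : (n : ℝ) + 1 ≠ 0 := by positivity
  simp
  field_simp
  ring

lemma linearIndependent_ex : LinearIndependent ℝ ex := by
  refine Module.End.eigenvectors_linearIndependent' ((derivative ℝ).toLinearMap) id
    Function.injective_id ex fun a => ?_
  rw [Module.End.hasEigenvector_iff, Module.End.mem_eigenspace_iff]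
  exact ⟨derivative_ex a, ex_ne_zero a⟩

lemma ex_injective : Function.Injective ex := linearIndependent_ex.injective

/-- `M` vanishes strictly below the `d`-th superdiagonal. -/
def Above {R : Type*} [Zero R] {n : ℕ} (d : ℕ) (A : Matrix (Fin n) (Fin n) R) : Prop :=
  ∀ i j : Fin n, (j : ℕ) < i + d → A i j = 0

section Above

variable {R : Type*} [CommRing R] {n : ℕ} {a b : ℕ} {A B : Matrix (Fin n) (Fin n) R}

lemma Above.mul (hA : Above a A) (hB : Above b B) : Above (a + b) (A * B) := by
  intro i j hij
  rw [Matrix.mul_apply]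
  refine Finset.sum_eq_zero fun k _ => ?_
  by_cases h : (k : ℕ) < i + a
  · rw [hA i k h, zero_mul]
  · rw [hB k j (by omega), mul_zero]

lemma Above.mul_apply (hA : Above a A) (hB : Above b B) {i k j : Fin n} (hk : (k : ℕ) = i + a)
    (hj : (j : ℕ) = k + b) : (A * B) i j = A i k * B k j := by
  rw [Matrix.mul_apply]
  refine Finset.sum_eq_single k (fun l _ hl => ?_) (by simp)
  by_cases h : (l : ℕ) < i + a
  · rw [hA i l h, zero_mul]
  · have : (l : ℕ) ≠ k := fun h => hl (Fin.ext h)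
    rw [hB l j (by omega), mul_zero]

lemma Above.add (hA : Above a A) (hB : Above a B) : Above a (A + B) := fun i j h => by
  rw [Matrix.add_apply, hA i j h, hB i j h, add_zero]

lemma Above.sub (hA : Above a A) (hB : Above a B) : Above a (A - B) := fun i j h => by
  rw [Matrix.sub_apply, hA i j h, hB i j h, sub_zero]

lemma Above.mono (hA : Above a A) (h : b ≤ a) : Above b A := fun i j hij => hA i j (by omega)

lemma Above.diagonal (v : Fin n → R) : Above 0 (Matrix.diagonal v) := fun i j h => by
  rw [Matrix.diagonal_apply_ne]; rintro rfl; omega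

lemma Above.one : Above 0 (1 : Matrix (Fin n) (Fin n) R) := Above.diagonal _

lemma Above.mul_diag (hA : Above 0 A) (hB : Above 0 B) (i : Fin n) :
    (A * B) i i = A i i * B i i := hA.mul_apply hB (by simp) (by simp)

lemma Above.pow (hA : Above 0 A) (m : ℕ) : Above 0 (A ^ m) := by
  induction m with
  | zero => simpa using Above.one
  | succ k ih => rw [pow_succ]; exact ih.mul hA

lemma Above.pow_diag (hA : Above 0 A) (m : ℕ) (i : Fin n) : (A ^ m) i i = A i i ^ m := by
  induction m with
  | zero => simp
  | succ k ih => rw [pow_succ, (hA.pow k).mul_diag hA, ih, pow_succ]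

lemma Above.pow_add_sub (hA : Above 0 A) {d : ℕ} (hd : 1 ≤ d) (hB : Above d B) (m : ℕ) :
    Above d ((A + B) ^ m - A ^ m) ∧ ∀ i j : Fin n, (j : ℕ) = i + d →
      ((A + B) ^ m - A ^ m) i j =
        (∑ s ∈ Finset.range m, A i i ^ s * A j j ^ (m - 1 - s)) * B i j := by
  induction m with
  | zero => simp [Above]
  | succ m ih =>
    have hAB : Above 0 (A + B) := hA.add (hB.mono (Nat.zero_le _))
    have key : (A + B) ^ (m + 1) - A ^ (m + 1) =
        ((A + B) ^ m - A ^ m) * (A + B) + A ^ m * B := by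
      rw [pow_succ, pow_succ]; noncomm_ring
    rw [key]
    refine ⟨(ih.1.mul hAB).add ?_, fun i j hij => ?_⟩
    · have := (hA.pow m).mul hB
      rwa [zero_add] at this
    · rw [Matrix.add_apply, ih.1.mul_apply hAB hij (by simp),
        (hA.pow m).mul_apply hB (k := i) (by simp) hij, ih.2 i j hij, hA.pow_diag,
        Matrix.add_apply, hB j j (by omega), add_zero]
      simp only [Nat.add_sub_cancel]
      rw [geom_sum₂_succ_eq]
      ring

/-- Upper triangular matrices have roots with prescribed diagonal. -/
lemma Above.exists_root {Y : Matrix (Fin n) (Fin n) R} (hY : Above 0 Y) {M : ℕ} (v : Fin n → R)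
    (hv : ∀ i, v i ^ M = Y i i)
    (hu : ∀ i j, IsUnit (∑ s ∈ Finset.range M, v i ^ s * v j ^ (M - 1 - s))) :
    ∃ A : Matrix (Fin n) (Fin n) R, Above 0 A ∧ (∀ i, A i i = v i) ∧ A ^ M = Y := by
  have key : ∀ d : ℕ, 1 ≤ d → ∃ A : Matrix (Fin n) (Fin n) R, Above 0 A ∧ (∀ i, A i i = v i) ∧
      Above d (A ^ M - Y) := by
    intro d hd
    induction d, hd using Nat.le_induction with
    | base =>
      refine ⟨Matrix.diagonal v, Above.diagonal v, fun i => by simp, fun i j hij => ?_⟩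
      rcases Nat.lt_or_ge j i with h | h
      · exact ((Above.diagonal v).pow M).sub hY i j (by omega)
      · obtain rfl : i = j := Fin.ext (by omega)
        rw [Matrix.sub_apply, (Above.diagonal v).pow_diag, Matrix.diagonal_apply_eq, hv, sub_self]
    | succ d hd ih =>
      obtain ⟨A, hA, hAv, hAY⟩ := ih
      let B : Matrix (Fin n) (Fin n) R := Matrix.of fun i j =>
        if (j : ℕ) = i + d then -((hu i j).unit⁻¹ : Rˣ) * (A ^ M - Y) i j else 0
      have hB : Above d B := fun i j hij => if_neg (by omega)
      obtain ⟨h1, h2⟩ := hA.pow_add_sub hd hB M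
      refine ⟨A + B, hA.add (hB.mono (Nat.zero_le _)), fun i => ?_, fun i j hij => ?_⟩
      · rw [Matrix.add_apply, hAv, hB i i (by omega), add_zero]
      · have e1 : (A + B) ^ M - Y = ((A + B) ^ M - A ^ M) + (A ^ M - Y) := by abel
        rw [e1]
        rcases Nat.lt_or_ge j (i + d) with h | h
        · exact (h1.add hAY) i j h
        · have hj : (j : ℕ) = i + d := by omega
          rw [Matrix.add_apply, h2 i j hj, hAv, hAv]
          simp only [B, Matrix.of_apply, if_pos hj]
          have := (hu i j).mul_val_inv
          generalize (A ^ M - Y) i j = z at *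
          linear_combination (-z) * this
  obtain ⟨A, h1, h2, h3⟩ := key (n + 1) (by omega)
  refine ⟨A, h1, h2, ?_⟩
  ext i j
  have := h3 i j (by omega)
  rwa [Matrix.sub_apply, sub_eq_zero] at this

end Above
end PrincipalGroup

namespace PrincipalGroup

open PowerSeries
open scoped commutatorElement

/-- The abstract properties of the base group `Γ` of the ascending HNN extension: `x k` for
`k < δ` are free to be sent anywhere in a group with `M`-th roots, later ones are `M`-th roots
of words in the earlier ones, and `π` is the rationalised abelianisation. -/
structure IsRootTower {Γ V : Type*} [Group Γ] [AddCommGroup V] [Module ℚ V]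
    (x : ℕ → Γ) (δ M : ℕ) (π : Γ → V) : Prop where
  isLog : IsLog π
  closure_range : Subgroup.closure (Set.range x) = ⊤
  pos : 0 < M
  pow_mem : ∀ k, δ ≤ k → x k ^ M ∈ Subgroup.closure (x '' Set.Iio k)
  exists_hom : ∀ (U : Type) [Group U], (∀ u : U, ∃ v, v ^ M = u) →
    ∀ f : ℕ → U, ∃ ρ : Γ →* U, ∀ j < δ, ρ (x j) = f j
  lattice : ∀ k, ∀ g ∈ Subgroup.closure (x '' Set.Iio k), ∀ q : ℚ, π g = q • π (x k) →
    ∃ j : ℤ, q = j * ((if k < δ then 0 else M : ℕ) : ℚ)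

/-- Pairs consisting of an upper triangular matrix and a real number `ℓ` such that the diagonal
entries are `ex (σ i * ℓ)`. -/
noncomputable def repGroup (n : ℕ) (σ : ℕ → ℝ) :
    Subgroup ((Matrix (Fin n) (Fin n) ℝ⟦X⟧)ˣ × Multiplicative ℝ) where
  carrier := {u | Above 0 u.1.val ∧ ∀ i, u.1.val i i = ex (σ i * u.2.toAdd)}
  one_mem' := ⟨Above.one, fun i => by simp [ex_zero]⟩
  mul_mem' := by
    rintro a b ⟨ha, ha'⟩ ⟨hb, hb'⟩
    refine ⟨ha.mul hb, fun i => ?_⟩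
    have : (a * b).1.val = a.1.val * b.1.val := rfl
    rw [this, ha.mul_diag hb, ha', hb', ← ex_add, Prod.snd_mul, toAdd_mul, mul_add]
  inv_mem' := by
    rintro a ⟨ha, ha'⟩
    have h1 : Above 0 (a⁻¹).1.val := by
      have h : Matrix.BlockTriangular a.1.val (id : Fin n → Fin n) := fun i j h =>
        ha i j (by simpa using h)
      have := Matrix.blockTriangular_inv_of_blockTriangular h
      intro i j hij
      rw [Prod.fst_inv, Matrix.coe_units_inv]
      exact this (by simpa using hij)
    refine ⟨h1, fun i => ?_⟩
    have h2 : a.1.val * (a⁻¹).1.val = 1 := a.1.mul_inv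
    have h3 := congrFun (congrFun h2 i) i
    rw [ha.mul_diag h1, ha', Matrix.one_apply_eq] at h3
    have h4 : ex (σ i * (a⁻¹).2.toAdd) * ex (σ i * a.2.toAdd) = 1 := by
      rw [← ex_add, ← mul_add, Prod.snd_inv, toAdd_inv]; simp [ex_zero]
    exact (left_inv_eq_right_inv h4 h3).symm

lemma repGroup_exists_root {n : ℕ} {σ : ℕ → ℝ} {M : ℕ} (hM : 0 < M) (u : repGroup n σ) :
    ∃ v, v ^ M = u := by
  obtain ⟨⟨u, l⟩, hu, hu'⟩ := u
  have hM' : (M : ℝ) ≠ 0 := by positivity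
  obtain ⟨A, hA, hAv, hAM⟩ := hu.exists_root (M := M)
    (fun i => ex (σ i * (l.toAdd / M))) (fun i => by
      rw [ex_pow, hu']; congr 1; field_simp) (fun i j => by
      rw [isUnit_iff_constantCoeff, map_sum]
      simp [constantCoeff_ex, hM.ne'])
  have hAu : IsUnit A := by
    rw [← isUnit_pow_iff hM.ne', hAM]; exact u.isUnit
  refine ⟨⟨⟨hAu.unit, Multiplicative.ofAdd (l.toAdd / M)⟩, hA, hAv⟩, ?_⟩
  apply Subtype.ext
  refine Prod.ext (Units.ext hAM) ?_
  apply Multiplicative.toAdd.injective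
  change M • (l.toAdd / M) = l.toAdd
  rw [nsmul_eq_mul]; field_simp

/-- `φ` is a crossed homomorphism with respect to the multiplicative map `E`. -/
def IsCrossed {Γ C : Type*} [Group Γ] [CommRing C] (E : Γ →* C) (φ : Γ → C) : Prop :=
  ∀ g h, φ (g * h) = φ g + E g * φ h

namespace IsCrossed

variable {Γ C : Type*} [Group Γ] [CommRing C] {E : Γ →* C} {φ : Γ → C}

lemma map_one (h : IsCrossed E φ) : φ 1 = 0 := by
  have := h 1 1
  simpa using this

lemma map_inv (h : IsCrossed E φ) (g : Γ) : φ g⁻¹ = -(E g⁻¹ * φ g) := by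
  have := h g⁻¹ g
  rw [inv_mul_cancel, h.map_one] at this
  linear_combination -this

lemma map_pow (h : IsCrossed E φ) (g : Γ) (n : ℕ) :
    φ (g ^ n) = (∑ s ∈ Finset.range n, E g ^ s) * φ g := by
  induction n with
  | zero => simp [h.map_one]
  | succ n ih => rw [pow_succ, h, ih, Finset.sum_range_succ, _root_.map_pow]; ring

lemma of_commute (h : IsCrossed E φ) {p q : Γ} (hc : p * q = q * p) :
    (1 - E p) * φ q = (1 - E q) * φ p := by
  have h1 := h p q
  rw [hc, h] at h1
  linear_combination h1

lemma commutator (h : IsCrossed E φ) (p q : Γ) :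
    φ ⁅p, q⁆ = (1 - E q) * φ p - (1 - E p) * φ q := by
  have h1 := h ⁅p, q⁆ (q * p)
  have h2 : ⁅p, q⁆ * (q * p) = p * q := by rw [commutatorElement_def]; group
  have h3 : E ⁅p, q⁆ = 1 := by
    have := congrArg E h2
    have hu : IsUnit (E (q * p)) := (Group.isUnit _).map E
    rw [_root_.map_mul] at this
    apply hu.mul_right_cancel
    rw [this, one_mul, _root_.map_mul, _root_.map_mul, mul_comm]
  rw [h2, h, h, h3] at h1
  linear_combination -h1

lemma conj (h : IsCrossed E φ) (y k : Γ) (hk : E k = 1) :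
    φ (y * k * y⁻¹) = E y * φ k := by
  rw [h, h, h.map_inv, _root_.map_mul, hk]
  have : E y * E y⁻¹ = 1 := by rw [← _root_.map_mul]; simp
  linear_combination -(φ y) * this

lemma sub {φ' : Γ → C} (h : IsCrossed E φ) (h' : IsCrossed E φ') :
    IsCrossed E (fun g => φ g - φ' g) := fun g k => by
  simp only [h g k, h' g k]; ring

/-- The subgroup on which a crossed homomorphism vanishes. -/
def ker (h : IsCrossed E φ) : Subgroup Γ where
  carrier := {g | φ g = 0}
  one_mem' := h.map_one
  mul_mem' := by
    intro a b ha hb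
    simp only [Set.mem_ofPred_eq] at *
    rw [h, ha, hb]; simp
  inv_mem' := by
    intro a ha
    simp only [Set.mem_ofPred_eq] at *
    rw [h.map_inv, ha]; simp

lemma mem_ker (h : IsCrossed E φ) {g : Γ} : g ∈ h.ker ↔ φ g = 0 := Iff.rfl

end IsCrossed

/-- The multiplicative map `g ↦ ex (l g)`. -/
noncomputable def exHom {Γ : Type*} [Group Γ] {l : Γ → ℝ} (hl : IsLog l) : Γ →* ℝ⟦X⟧ where
  toFun g := ex (l g)
  map_one' := by rw [hl.map_one, ex_zero]
  map_mul' g h := by rw [hl, ex_add]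

@[simp] lemma exHom_apply {Γ : Type*} [Group Γ] {l : Γ → ℝ} (hl : IsLog l) (g : Γ) :
    exHom hl g = ex (l g) := rfl

lemma IsLog.linear {Γ V W : Type*} [Group Γ] [AddCommGroup V] [Module ℚ V] [AddCommGroup W]
    [Module ℚ W] {π : Γ → V} (h : IsLog π) (c : V →ₗ[ℚ] W) : IsLog (fun g => c (π g)) :=
  fun g k => by simp only [h g k, map_add]

lemma IsLog.smul {Γ : Type*} [Group Γ] {l : Γ → ℝ} (h : IsLog l) (s : ℝ) :
    IsLog (fun g => s * l g) :=
  fun g k => by simp only [h g k, mul_add]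

namespace IsRootTower

variable {Γ V : Type*} [Group Γ] [AddCommGroup V] [Module ℚ V] {x : ℕ → Γ} {δ M : ℕ} {π : Γ → V}

lemma eq_top (hT : IsRootTower x δ M π) (H : Subgroup Γ) (hx : ∀ j < δ, x j ∈ H)
    (hr : ∀ y, y ^ M ∈ H → y ∈ H) : H = ⊤ := by
  rw [eq_top_iff, ← hT.closure_range, Subgroup.closure_le]
  rintro _ ⟨k, rfl⟩
  induction k using Nat.strong_induction_on with
  | _ k ih =>
    rcases lt_or_ge k δ with h | h
    · exact hx k h
    · refine hr _ ((Subgroup.closure_le H).2 ?_ (hT.pow_mem k h))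
      rintro _ ⟨j, hj, rfl⟩
      exact ih j hj

lemma log_ext (hT : IsRootTower x δ M π) {l l' : Γ → ℝ} (h : IsLog l) (h' : IsLog l')
    (he : ∀ j < δ, l (x j) = l' (x j)) (g : Γ) : l g = l' g := by
  have h0 : IsLog (fun g => l g - l' g) := fun a b => by simp only [h a b, h' a b]; ring
  have := hT.eq_top h0.toHom.ker (fun j hj => by
    rw [MonoidHom.mem_ker]; change l (x j) - l' (x j) = 0; rw [he j hj, sub_self]) (fun y hy => by
    rw [MonoidHom.mem_ker] at *
    have h2 := h0.map_pow y M
    change l (y ^ M) - l' (y ^ M) = 0 at hy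
    rw [hy] at h2
    have := (smul_eq_zero.1 h2.symm).resolve_left hT.pos.ne'
    exact this)
  have hg : g ∈ h0.toHom.ker := by rw [this]; trivial
  exact sub_eq_zero.1 hg

lemma crossed_eq_zero (hT : IsRootTower x δ M π) {l : Γ → ℝ} (hl : IsLog l) {φ : Γ → ℝ⟦X⟧}
    (h : IsCrossed (exHom hl) φ) (he : ∀ j < δ, φ (x j) = 0) (g : Γ) : φ g = 0 := by
  have := hT.eq_top h.ker he fun y hy => by
    rw [h.mem_ker] at *
    rw [h.map_pow] at hy
    refine (mul_eq_zero.1 hy).resolve_left fun h0 => ?_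
    have := congrArg constantCoeff h0
    simp [constantCoeff_ex, hT.pos.ne'] at this
  have hg : g ∈ h.ker := by rw [this]; trivial
  exact hg

lemma crossed_ext (hT : IsRootTower x δ M π) {l : Γ → ℝ} (hl : IsLog l) {φ φ' : Γ → ℝ⟦X⟧}
    (h : IsCrossed (exHom hl) φ) (h' : IsCrossed (exHom hl) φ')
    (he : ∀ j < δ, φ (x j) = φ' (x j)) (g : Γ) : φ g = φ' g :=
  sub_eq_zero.1 (hT.crossed_eq_zero hl (h.sub h') (fun j hj => sub_eq_zero.2 (he j hj)) g)

lemma exists_rep (hT : IsRootTower x δ M π) (c : V →ₗ[ℚ] ℝ) (n : ℕ) (σ : ℕ → ℝ) (J : ℕ → ℕ) :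
    ∃ ρ : Γ →* Matrix (Fin (n + 1)) (Fin (n + 1)) ℝ⟦X⟧, (∀ g, Above 0 (ρ g)) ∧
      (∀ g i, ρ g i i = ex (σ i * c (π g))) ∧
      ∀ j < δ, ∀ i : Fin n, ρ (x j) i.castSucc i.succ =
        if j = J i then ex (σ (i + 1) * c (π (x j))) else 0 := by
  let A : ℕ → Matrix (Fin (n + 1)) (Fin (n + 1)) ℝ⟦X⟧ := fun j => Matrix.of fun a b =>
    if a = b then ex (σ a * c (π (x j))) else
      if (b : ℕ) = a + 1 then (if j = J a then ex (σ b * c (π (x j))) else 0) else 0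
  have hA : ∀ j, Above 0 (A j) := fun j a b hab => by
    simp only [A, Matrix.of_apply]
    rw [if_neg (by rintro rfl; omega), if_neg (by omega)]
  have hd : ∀ j a, A j a a = ex (σ a * c (π (x j))) := fun j a => by simp [A]
  have hu : ∀ j, IsUnit (A j) := fun j => by
    rw [Matrix.isUnit_iff_isUnit_det, Matrix.det_of_isUpperTriangular, IsUnit.prod_univ_iff]
    · intro a
      rw [hd]; exact isUnit_ex _
    · intro a b hab
      exact hA j a b (by simpa using hab)
  obtain ⟨ρ, hρ⟩ := hT.exists_hom (repGroup (n + 1) σ) (repGroup_exists_root hT.pos)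
    (fun j => ⟨⟨(hu j).unit, Multiplicative.ofAdd (c (π (x j)))⟩, hA j, hd j⟩)
  have hl : ∀ g, (ρ g).1.2.toAdd = c (π g) := hT.log_ext
    (fun g h => by simp) (hT.isLog.linear c) (fun j hj => by rw [hρ j hj]; rfl)
  refine ⟨(Units.coeHom _).comp ((MonoidHom.fst _ _).comp ((repGroup (n + 1) σ).subtype.comp ρ)),
    fun g => (ρ g).2.1, fun g i => ?_, fun j hj i => ?_⟩
  · have := (ρ g).2.2 i
    rw [hl] at this
    exact this
  · simp only [MonoidHom.comp_apply, hρ j hj]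
    change A j _ _ = _
    simp [A, Fin.ext_iff]

lemma exists_crossed (hT : IsRootTower x δ M π) (c : V →ₗ[ℚ] ℝ) (j : ℕ) :
    ∃ φ : Γ → ℝ⟦X⟧, IsCrossed (exHom (hT.isLog.linear c)) φ ∧
      ∀ i < δ, φ (x i) = if i = j then 1 else 0 := by
  obtain ⟨ρ, h1, h2, h3⟩ := hT.exists_rep c 1 (fun i => if i = 0 then 1 else 0) (fun _ => j)
  refine ⟨fun g => ρ g 0 1, fun g h => ?_, fun i hi => ?_⟩
  · have a1 := h2 g 0
    have a2 := h2 h 1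
    simp at a1 a2
    have hm : ρ (g * h) 0 1 = ρ g 0 0 * ρ h 0 1 + ρ g 0 1 * ρ h 1 1 := by
      rw [map_mul]
      exact (Matrix.mul_apply ..).trans (Fin.sum_univ_two _)
    simp only [hm, a1, a2, ex_zero, exHom_apply]
    ring
  · have := h3 i hi 0
    simpa [ex_zero] using this

/-- The crossed homomorphisms dual to the generators `x j`, `j < δ`. -/
noncomputable def phi (hT : IsRootTower x δ M π) (c : V →ₗ[ℚ] ℝ) (j : ℕ) : Γ → ℝ⟦X⟧ :=
  (hT.exists_crossed c j).choose

lemma phi_crossed (hT : IsRootTower x δ M π) (c : V →ₗ[ℚ] ℝ) (j : ℕ) :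
    IsCrossed (exHom (hT.isLog.linear c)) (hT.phi c j) := (hT.exists_crossed c j).choose_spec.1

lemma phi_apply_gen (hT : IsRootTower x δ M π) (c : V →ₗ[ℚ] ℝ) (j : ℕ) {i : ℕ} (hi : i < δ) :
    hT.phi c j (x i) = if i = j then 1 else 0 := (hT.exists_crossed c j).choose_spec.2 i hi

/-- The superdiagonal of the triangular representations on the kernel of `π`. -/
lemma rep_superdiagonal (hT : IsRootTower x δ M π) (c : V →ₗ[ℚ] ℝ) {n : ℕ} {σ : ℕ → ℝ}
    {J : ℕ → ℕ} {ρ : Γ →* Matrix (Fin (n + 1)) (Fin (n + 1)) ℝ⟦X⟧} (h1 : ∀ g, Above 0 (ρ g))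
    (h2 : ∀ g i, ρ g i i = ex (σ i * c (π g)))
    (h3 : ∀ j < δ, ∀ i : Fin n, ρ (x j) i.castSucc i.succ =
        if j = J i then ex (σ (i + 1) * c (π (x j))) else 0) (i : Fin n) {g : Γ} (hg : π g = 0) :
    ρ g i.castSucc i.succ = rescale (σ i - σ (i + 1)) (hT.phi c (J i) g) := by
  have hl := hT.isLog.linear c
  have key := hT.crossed_ext (hl.smul (σ i - σ (i + 1)))
    (φ := fun g => ρ g i.castSucc i.succ * ex (-(σ (i + 1) * c (π g))))
    (φ' := fun g => rescale (σ i - σ (i + 1)) (hT.phi c (J i) g)) ?_ ?_ ?_ g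
  · simpa [hg, ex_zero] using key
  · intro g h
    have hm : ρ (g * h) i.castSucc i.succ = ρ g i.castSucc i.castSucc * ρ h i.castSucc i.succ +
        ρ g i.castSucc i.succ * ρ h i.succ i.succ := by
      rw [map_mul, Matrix.mul_apply]
      rw [Finset.sum_eq_add_of_mem i.castSucc i.succ (Finset.mem_univ _) (Finset.mem_univ _)
        (by simp [Fin.ext_iff])]
      rintro k - ⟨hk1, hk2⟩
      simp only [ne_eq, Fin.ext_iff, Fin.val_castSucc, Fin.val_succ] at hk1 hk2
      rcases Nat.lt_or_ge k i with h' | h'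
      · rw [h1 g _ _ (by simpa using h'), zero_mul]
      · rw [h1 h k _ (by simp; omega), mul_zero]
    simp only [hm, h2, exHom_apply, hT.isLog g h, map_add, Fin.val_castSucc, Fin.val_succ]
    have e1 : ex (-(σ (i + 1) * (c (π g) + c (π h)))) =
      ex (-(σ (i + 1) * c (π g))) * ex (-(σ (i + 1) * c (π h))) := by rw [← ex_add]; ring_nf
    have e2 : ex ((σ i - σ (i + 1)) * c (π g)) =
      ex (σ i * c (π g)) * ex (-(σ (i + 1) * c (π g))) := by rw [← ex_add]; ring_nf
    have e3 : ex (σ (i + 1) * c (π h)) * ex (-(σ (i + 1) * c (π h))) = 1 := by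
      rw [← ex_add]; simp [ex_zero]
    rw [e1, e2]
    linear_combination (ρ g i.castSucc i.succ * ex (-(σ (i + 1) * c (π g)))) * e3
  · intro g h
    simp only [hT.phi_crossed c (J i) g h, map_add, map_mul, exHom_apply, rescale_ex]
  · intro j hj
    simp only [h3 j hj, hT.phi_apply_gen c _ hj]
    split_ifs
    · rw [← ex_add]; simp [ex_zero]
    · simp

end IsRootTower

end PrincipalGroup

namespace PrincipalGroup

open PowerSeries
open scoped commutatorElement

lemma exists_linearMap_ker {V : Type} [AddCommGroup V] [Module ℚ V] [FiniteDimensional ℚ V]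
    (W : Submodule ℚ V) : ∃ c : V →ₗ[ℚ] ℝ, ∀ v, c v = 0 ↔ v ∈ W := by
  have h : Module.rank ℚ (V ⧸ W) ≤ Module.rank ℚ ℝ := by
    rw [Real.rank_rat_real]
    exact (Module.rank_lt_aleph0 ℚ _).le.trans Cardinal.aleph0_le_continuum
  obtain ⟨f, hf⟩ := rank_le_iff_exists_linearMap.1 h
  refine ⟨f ∘ₗ W.mkQ, fun v => ?_⟩
  rw [LinearMap.comp_apply, map_eq_zero_iff f hf, Submodule.mkQ_apply,
    Submodule.Quotient.mk_eq_zero]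

lemma linearIndependent_of_boxes {ι T E : Type*} [AddCommGroup E] [Module ℝ E]
    (good : (ℤ × ι) ⊕ (T × ℤ) → Prop) (v : (ℤ × ι) ⊕ (T × ℤ) → E)
    (h : ∀ (s : Finset ℤ) (sB : Finset ι) (sT : Finset T) (f : ℤ → ι → ℝ) (g : T → ℤ → ℝ),
      0 ∈ s → (∀ i b, f i b ≠ 0 → good (.inl (i, b))) →
      (∀ τ i, g τ i ≠ 0 → good (.inr (τ, i))) →
      ∑ i ∈ s, ∑ b ∈ sB, f i b • v (.inl (i, b)) +
        ∑ i ∈ s, ∑ τ ∈ sT, g τ i • v (.inr (τ, i)) = 0 →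
      (∀ i ∈ s, ∀ b ∈ sB, f i b = 0) ∧ (∀ i ∈ s, ∀ τ ∈ sT, g τ i = 0)) :
    LinearIndependent ℝ (fun p : {p // good p} => v p) := by
  classical
  rw [linearIndependent_iff']
  intro S a hS
  let S' : Finset ((ℤ × ι) ⊕ (T × ℤ)) := S.map (Function.Embedding.subtype _)
  let a' : (ℤ × ι) ⊕ (T × ℤ) → ℝ := fun p =>
    if hp : ∃ h : good p, ⟨p, h⟩ ∈ S then a ⟨p, hp.1⟩ else 0
  have ha' : ∀ p, a' p ≠ 0 → good p := fun p hp => by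
    by_contra hn
    exact hp (dif_neg fun h => hn h.1)
  have ha'' : ∀ p, p ∉ S' → a' p = 0 := fun p hp => by
    refine dif_neg fun h => hp ?_
    simp only [S', Finset.mem_map, Function.Embedding.subtype_apply]
    exact ⟨_, h.2, rfl⟩
  let s : Finset ℤ := insert 0 (S'.image (Sum.elim Prod.fst Prod.snd))
  let sB : Finset ι := S'.toLeft.image Prod.snd
  let sT : Finset T := S'.toRight.image Prod.fst
  have hsub : S' ⊆ (s ×ˢ sB).disjSum (sT ×ˢ s) := by
    rintro (⟨i, b⟩ | ⟨τ, i⟩) hp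
    · simp only [Finset.inl_mem_disjSum, Finset.mem_product, s, sB, Finset.mem_insert,
        Finset.mem_image, Finset.mem_toLeft]
      exact ⟨Or.inr ⟨_, hp, rfl⟩, ⟨_, hp, rfl⟩⟩
    · simp only [Finset.inr_mem_disjSum, Finset.mem_product, s, sT, Finset.mem_insert,
        Finset.mem_image, Finset.mem_toRight]
      exact ⟨⟨_, hp, rfl⟩, Or.inr ⟨_, hp, rfl⟩⟩
  have h1 : ∑ p ∈ S', a' p • v p = 0 := by
    rw [Finset.sum_map, ← hS]
    refine Finset.sum_congr rfl fun p hp => ?_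
    simp [a', hp, p.2]
  rw [Finset.sum_subset hsub (fun p _ hp => by rw [ha'' p hp, zero_smul]),
    Finset.sum_disjSum, Finset.sum_product, Finset.sum_product_right] at h1
  obtain ⟨k1, k2⟩ := h s sB sT (fun i b => a' (.inl (i, b))) (fun τ i => a' (.inr (τ, i)))
    (Finset.mem_insert_self _ _) (fun i b => ha' _) (fun τ i => ha' _) h1
  intro p hp
  have hp' : p.1 ∈ (s ×ˢ sB).disjSum (sT ×ˢ s) := hsub (by simpa [S'] using ⟨p.2, hp⟩)
  have h0 : a' p.1 = 0 := by
    rcases p with ⟨⟨i, b⟩ | ⟨τ, i⟩, hp1⟩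
    · simp only [Finset.inl_mem_disjSum, Finset.mem_product] at hp'
      exact k1 i hp'.1 b hp'.2
    · simp only [Finset.inr_mem_disjSum, Finset.mem_product] at hp'
      exact k2 i hp'.2 τ hp'.1
  simpa [a', hp, p.2] using h0

namespace IsRootTower

variable {Γ V : Type} [Group Γ] [AddCommGroup V] [Module ℚ V] {x : ℕ → Γ} {δ M : ℕ} {π : Γ → V}

lemma pi_gen_ne_zero (hT : IsRootTower x δ M π) (k : ℕ) : π (x k) ≠ 0 := by
  intro h
  obtain ⟨j, hj⟩ := hT.lattice k 1 (one_mem _) (1 / 2) (by rw [hT.isLog.map_one, h, smul_zero])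
  have : (1 : ℤ) = 2 * (j * ((if k < δ then 0 else M : ℕ) : ℤ)) := by
    have : (1 : ℚ) = 2 * (j * ((if k < δ then 0 else M : ℕ) : ℚ)) := by linarith
    exact_mod_cast this
  omega

/-- The elements of the group generated by `x j`, `j < k`, on which `π` vanishes. -/
def kerStage (hT : IsRootTower x δ M π) (k : ℕ) : Subgroup Γ :=
  Subgroup.closure (x '' Set.Iio k) ⊓ hT.isLog.toHom.ker

lemma mem_kerStage (hT : IsRootTower x δ M π) {k : ℕ} {g : Γ} :
    g ∈ hT.kerStage k ↔ g ∈ Subgroup.closure (x '' Set.Iio k) ∧ π g = 0 := Iff.rfl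

variable (hT : IsRootTower x δ M π) (c : V →ₗ[ℚ] ℝ)

lemma exists_phi_ne_zero [FiniteDimensional ℚ V] {g : Γ} (hg : π g ≠ 0) :
    ∃ j < δ, hT.phi c j g ≠ 0 := by
  by_contra! h
  obtain ⟨c', hc'⟩ := exists_linearMap_ker (⊥ : Submodule ℚ V)
  have key := hT.log_ext (hT.isLog.linear c')
    (l' := fun g => ∑ j ∈ Finset.range δ, c' (π (x j)) * constantCoeff (hT.phi c j g))
    (fun a b => by
      simp only [hT.phi_crossed c _ a b, map_add, map_mul, exHom_apply, constantCoeff_ex, one_mul,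
        mul_add, Finset.sum_add_distrib])
    (fun i hi => by
      rw [Finset.sum_eq_single i]
      · simp [hT.phi_apply_gen c i hi]
      · intro j _ hj
        simp [hT.phi_apply_gen c j hi, hj.symm]
      · simp [hi]) g
  rw [Finset.sum_eq_zero fun j hj => by rw [h j (Finset.mem_range.1 hj), map_zero, mul_zero]] at key
  exact hg (by simpa using (hc' _).1 key)

/-- The algebra spanned by the exponentials attached to the elements generated by the `x j`,
`j < k`. -/
noncomputable def expAlg (k : ℕ) : Subalgebra ℝ ℝ⟦X⟧ :=
  Algebra.adjoin ℝ ((Subgroup.closure (x '' Set.Iio k)).toSubmonoid.map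
    (exHom (hT.isLog.linear c)) : Set ℝ⟦X⟧)

lemma ex_mem_expAlg {k : ℕ} {g : Γ} (hg : g ∈ Subgroup.closure (x '' Set.Iio k)) :
    ex (c (π g)) ∈ hT.expAlg c k :=
  Algebra.subset_adjoin ⟨g, hg, rfl⟩

lemma expAlg_eq_span (k : ℕ) : Subalgebra.toSubmodule (hT.expAlg c k) =
    Submodule.span ℝ (ex '' ((fun g => c (π g)) '' (Subgroup.closure (x '' Set.Iio k) : Set Γ))) := by
  rw [expAlg, Algebra.adjoin_eq_span, Submonoid.closure_eq, Set.image_image]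
  rfl

/-- The space of fractions of `expAlg` inside the power series. -/
noncomputable def fracSpace (k : ℕ) : Submodule ℝ ℝ⟦X⟧ where
  carrier := {f | ∃ D ∈ hT.expAlg c k, D ≠ 0 ∧ D * f ∈ hT.expAlg c k}
  zero_mem' := ⟨1, one_mem _, one_ne_zero, by simp [zero_mem]⟩
  add_mem' := by
    rintro f g ⟨D, hD, hD0, hf⟩ ⟨E, hE, hE0, hg⟩
    refine ⟨D * E, mul_mem hD hE, mul_ne_zero hD0 hE0, ?_⟩
    have : D * E * (f + g) = E * (D * f) + D * (E * g) := by ring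
    rw [this]
    exact add_mem (mul_mem hE hf) (mul_mem hD hg)
  smul_mem' := by
    rintro r f ⟨D, hD, hD0, hf⟩
    exact ⟨D, hD, hD0, by rw [mul_smul_comm]; exact Subalgebra.smul_mem _ hf r⟩

lemma mul_mem_fracSpace {k : ℕ} {r f : ℝ⟦X⟧} (hr : r ∈ hT.expAlg c k)
    (hf : f ∈ hT.fracSpace c k) : r * f ∈ hT.fracSpace c k := by
  obtain ⟨D, hD, hD0, hf⟩ := hf
  exact ⟨D, hD, hD0, by rw [mul_left_comm]; exact mul_mem hr hf⟩

lemma mem_fracSpace_of_mul {k : ℕ} {r f : ℝ⟦X⟧} (hr : r ∈ hT.expAlg c k) (hr0 : r ≠ 0)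
    (hf : r * f ∈ hT.fracSpace c k) : f ∈ hT.fracSpace c k := by
  obtain ⟨D, hD, hD0, hf⟩ := hf
  exact ⟨D * r, mul_mem hD hr, mul_ne_zero hD0 hr0, by rwa [mul_assoc]⟩

lemma expAlg_le_fracSpace {k : ℕ} {r : ℝ⟦X⟧} (hr : r ∈ hT.expAlg c k) :
    r ∈ hT.fracSpace c k := ⟨1, one_mem _, one_ne_zero, by simpa using hr⟩

lemma expAlg_mono {k l : ℕ} (h : k ≤ l) : hT.expAlg c k ≤ hT.expAlg c l := by
  refine Algebra.adjoin_mono ?_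
  rintro _ ⟨g, hg, rfl⟩
  exact ⟨g, Subgroup.closure_mono (Set.image_mono (Set.Iio_subset_Iio h)) hg, rfl⟩

lemma fracSpace_mono {k l : ℕ} (h : k ≤ l) : hT.fracSpace c k ≤ hT.fracSpace c l := by
  rintro f ⟨D, hD, hD0, hf⟩
  exact ⟨D, hT.expAlg_mono c h hD, hD0, hT.expAlg_mono c h hf⟩

lemma one_sub_ex_ne_zero {a : ℝ} (ha : a ≠ 0) : 1 - ex a ≠ 0 := by
  rw [sub_ne_zero, ← ex_zero]
  exact fun h => ha (ex_injective h).symm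

lemma gen_mem {j k : ℕ} (h : j < k) : x j ∈ Subgroup.closure (x '' Set.Iio k) :=
  Subgroup.subset_closure ⟨j, h, rfl⟩

lemma phi_mem_fracSpace (hc : ∀ v, c v = 0 → v = 0) (j k : ℕ) :
    ∀ g ∈ Subgroup.closure (x '' Set.Iio k), hT.phi c j g ∈ hT.fracSpace c k := by
  induction k using Nat.strong_induction_on with
  | _ k ih =>
    have hφ := hT.phi_crossed c j
    intro g hg
    induction hg using Subgroup.closure_induction with
    | mem g hg =>
      obtain ⟨i, hi, rfl⟩ := hg
      rcases lt_or_ge i δ with h | h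
      · rw [hT.phi_apply_gen c j h]
        split_ifs
        · exact hT.expAlg_le_fracSpace c (one_mem _)
        · exact zero_mem _
      · have h1 := hφ.of_commute (p := x i) (q := x i ^ M) (by rw [← pow_succ, ← pow_succ'])
        have h2 := hT.fracSpace_mono c (le_of_lt hi) (ih i hi _ (hT.pow_mem i h))
        simp only [exHom_apply] at h1
        refine hT.mem_fracSpace_of_mul c
          (sub_mem (one_mem _) (hT.ex_mem_expAlg c (_root_.pow_mem (gen_mem hi) M)))
          (one_sub_ex_ne_zero ?_) (h1 ▸ hT.mul_mem_fracSpace c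
          (sub_mem (one_mem _) (hT.ex_mem_expAlg c (gen_mem hi))) h2)
        intro h0
        have := hc _ h0
        rw [hT.isLog.map_pow, ← Nat.cast_smul_eq_nsmul ℚ] at this
        exact hT.pi_gen_ne_zero i ((smul_eq_zero.1 this).resolve_left
          (Nat.cast_ne_zero.2 hT.pos.ne'))
    | one => rw [hφ.map_one]; exact zero_mem _
    | mul a b ha hb iha ihb =>
      rw [hφ]
      exact add_mem iha (hT.mul_mem_fracSpace c (hT.ex_mem_expAlg c ha) ihb)
    | inv a ha iha =>
      rw [hφ.map_inv]
      exact neg_mem (hT.mul_mem_fracSpace c (hT.ex_mem_expAlg c (inv_mem ha)) iha)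

/-- The order of `x k` modulo the earlier generators. -/
def stageOrder (_ : IsRootTower x δ M π) (k : ℕ) : ℕ := if k < δ then 0 else M

lemma ex_mul_mem_span {k : ℕ} {r : ℝ⟦X⟧} (hr : r ∈ hT.expAlg c k) (a : ℝ) :
    ex a * r ∈ Submodule.span ℝ (ex '' ((fun g => a + c (π g)) ''
      (Subgroup.closure (x '' Set.Iio k) : Set Γ))) := by
  have hr' : r ∈ Subalgebra.toSubmodule (hT.expAlg c k) := hr
  rw [expAlg_eq_span] at hr'
  clear hr
  induction hr' using Submodule.span_induction with
  | mem r hr =>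
    obtain ⟨_, ⟨g, hg, rfl⟩, rfl⟩ := hr
    rw [← ex_add]
    exact Submodule.subset_span ⟨_, ⟨g, hg, rfl⟩, rfl⟩
  | zero => rw [mul_zero]; exact zero_mem _
  | add r s _ _ hr hs => rw [mul_add]; exact add_mem hr hs
  | smul t r _ hr => rw [mul_smul_comm]; exact Submodule.smul_mem _ _ hr

lemma eq_zero_of_sum_expAlg (hc : ∀ v, c v = 0 → v = 0) (k : ℕ) (s : Finset ℤ) (r : ℤ → ℝ⟦X⟧)
    (hr : ∀ i ∈ s, r i ∈ hT.expAlg c k) (hI : ∀ i ∈ s, i % (hT.stageOrder k : ℤ) = i)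
    (h0 : ∑ i ∈ s, ex (i * c (π (x k))) * r i = 0) : ∀ i ∈ s, r i = 0 := by
  intro i hi
  have h1 : ex (i * c (π (x k))) * r i = -∑ j ∈ s.erase i, ex (j * c (π (x k))) * r j := by
    rw [← Finset.add_sum_erase s _ hi] at h0
    exact eq_neg_of_add_eq_zero_left h0
  have hd := linearIndependent_ex.disjoint_span_image
    (s := (fun g => i * c (π (x k)) + c (π g)) '' (Subgroup.closure (x '' Set.Iio k) : Set Γ))
    (t := ⋃ j ∈ s.erase i, (fun g => j * c (π (x k)) + c (π g)) ''
      (Subgroup.closure (x '' Set.Iio k) : Set Γ)) (by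
    rw [Set.disjoint_left]
    rintro _ ⟨g, hg, rfl⟩ h
    simp only [Set.mem_iUnion] at h
    obtain ⟨j, hj, p, hp, he⟩ := h
    obtain ⟨hji, hjs⟩ := Finset.mem_erase.1 hj
    have h2 : π (g * p⁻¹) - ((j - i : ℤ) : ℚ) • π (x k) = 0 := by
      apply hc
      rw [map_sub, map_smul, hT.isLog, hT.isLog.map_inv, map_add, map_neg, Rat.smul_def]
      push_cast
      simp only at he
      linarith
    obtain ⟨q, hq⟩ := hT.lattice k _ (mul_mem hg (inv_mem hp)) _ (sub_eq_zero.1 h2)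
    have h3 : j - i = q * (hT.stageOrder k : ℤ) := by
      exact_mod_cast hq
    have h4 : i ≡ j [ZMOD (hT.stageOrder k : ℤ)] :=
      Int.modEq_iff_dvd.2 ⟨q, by rw [h3, mul_comm]⟩
    rw [Int.ModEq, hI j hjs, hI i hi] at h4
    exact hji h4.symm)
  have h3 : ex (i * c (π (x k))) * r i = 0 := by
    refine Submodule.disjoint_def.1 hd _ (hT.ex_mul_mem_span c (hr i hi) _) ?_
    rw [h1]
    refine neg_mem (sum_mem fun j hj => ?_)
    refine Submodule.span_mono (Set.image_mono ?_)
      (hT.ex_mul_mem_span c (hr j (Finset.mem_of_mem_erase hj)) _)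
    exact Set.subset_biUnion_of_mem (u := fun j : ℤ => (fun g => j * c (π (x k)) + c (π g)) ''
      (Subgroup.closure (x '' Set.Iio k) : Set Γ)) hj
  exact (mul_eq_zero.1 h3).resolve_left (ex_ne_zero _)

lemma eq_zero_of_sum_fracSpace (hc : ∀ v, c v = 0 → v = 0) (k : ℕ) (s : Finset ℤ)
    (z : ℤ → ℝ⟦X⟧) (hz : ∀ i ∈ s, z i ∈ hT.fracSpace c k)
    (hI : ∀ i ∈ s, z i ≠ 0 → i % (hT.stageOrder k : ℤ) = i)
    (h0 : ∑ i ∈ s, ex (i * c (π (x k))) * z i = 0) : ∀ i ∈ s, z i = 0 := by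
  classical
  choose! D hD hD0 hDz using hz
  have hP : ∀ i ∈ s, (∏ j ∈ s, D j) * z i ∈ hT.expAlg c k := fun i hi => by
    rw [← Finset.prod_erase_mul s _ hi, mul_assoc]
    exact mul_mem (prod_mem fun j hj => hD j (Finset.mem_of_mem_erase hj)) (hDz i hi)
  have hP0 : ∏ j ∈ s, D j ≠ 0 := Finset.prod_ne_zero_iff.2 hD0
  have key := hT.eq_zero_of_sum_expAlg c hc k {i ∈ s | z i ≠ 0} (fun i => (∏ j ∈ s, D j) * z i)
    (fun i hi => hP i (Finset.mem_filter.1 hi).1)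
    (fun i hi => hI i (Finset.mem_filter.1 hi).1 (Finset.mem_filter.1 hi).2) (by
      rw [Finset.sum_filter_of_ne (p := fun i => z i ≠ 0)
        (fun i _ h hz => h (by rw [hz, mul_zero, mul_zero]))]
      simp_rw [mul_left_comm _ (∏ j ∈ s, D j)]
      rw [← Finset.mul_sum, h0, mul_zero])
  intro i hi
  by_contra hn
  exact hn ((mul_eq_zero.1 (key i (Finset.mem_filter.2 ⟨hi, hn⟩))).resolve_left hP0)

lemma grading (hc : ∀ v, c v = 0 → v = 0) (k : ℕ) (s : Finset ℤ) (hs : 0 ∈ s)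
    (U v : ℤ → ℝ⟦X⟧) (hU : ∀ i, U i ∈ hT.fracSpace c k) (hv : ∀ i, v i ∈ hT.fracSpace c k)
    (hUI : ∀ i, U i ≠ 0 → i % (hT.stageOrder k : ℤ) = i)
    (hvI : ∀ i, v i ≠ 0 → i % (hT.stageOrder k : ℤ) = i)
    (h0 : ∑ i ∈ s, ex (i * c (π (x k))) * U i +
      ∑ i ∈ s, (1 - ex (i * c (π (x k)))) * v i = 0) :
    (∀ i ∈ s, i ≠ 0 → U i = v i) ∧ U 0 - v 0 + ∑ i ∈ s, v i = 0 := by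
  classical
  have key := hT.eq_zero_of_sum_fracSpace c hc k s
    (fun i => U i - v i + if i = 0 then ∑ j ∈ s, v j else 0) (fun i _ => by
      refine add_mem (sub_mem (hU i) (hv i)) ?_
      split_ifs
      · exact sum_mem fun j _ => hv j
      · exact zero_mem _) (fun i _ hi => by
      by_cases h : i = 0
      · simp [h]
      by_cases h1 : U i = 0
      · by_cases h2 : v i = 0
        · simp [h, h1, h2] at hi
        · exact hvI i h2
      · exact hUI i h1) (by
      simp only [mul_add, mul_sub, Finset.sum_add_distrib, Finset.sum_sub_distrib, mul_ite,
        mul_zero, Finset.sum_ite_eq', hs, if_true, sub_mul, one_mul] at h0 ⊢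
      simp only [Int.cast_zero, zero_mul, ex_zero, one_mul]
      linear_combination h0)
  refine ⟨fun i hi h => ?_, by simpa using key 0 hs⟩
  have := key i hi
  simp only [h, if_false, add_zero] at this
  exact sub_eq_zero.1 this

end IsRootTower

end PrincipalGroup

namespace PrincipalGroup

open PowerSeries
open scoped commutatorElement

lemma exists_linearMap_of_linearIndependent {ι E W : Type*} [AddCommGroup E] [Module ℝ E]
    [AddCommGroup W] [Module ℝ W] {v : ι → E} (hv : LinearIndependent ℝ v) (h : ι → W) :
    ∃ l : E →ₗ[ℝ] W, ∀ i, l (v i) = h i := by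
  obtain ⟨l, hl⟩ := ((Module.Basis.span hv).constr ℝ h).exists_extend
  refine ⟨l, fun i => ?_⟩
  have h1 := LinearMap.congr_fun hl (Module.Basis.span hv i)
  rw [Module.Basis.constr_basis, LinearMap.comp_apply, Submodule.subtype_apply,
    Module.Basis.span_apply] at h1
  exact h1

lemma eq_zero_of_sum_one_sub_ex {Γ : Type*} (T : Set Γ) (l : Γ → ℝ) (hl : Set.InjOn l T)
    (hl0 : ∀ τ ∈ T, l τ ≠ 0) (sT : Finset Γ) (d : Γ → ℝ) (hd : ∀ τ, d τ ≠ 0 → τ ∈ T)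
    (h0 : ∑ τ ∈ sT, d τ • (1 - ex (l τ)) = 0) : ∀ τ ∈ sT, d τ = 0 := by
  classical
  intro τ hτ
  by_contra hn
  obtain ⟨f, hf⟩ := exists_linearMap_of_linearIndependent linearIndependent_ex
    (fun a => if a = l τ then (1 : ℝ) else 0)
  have h1 := congrArg f h0
  rw [map_sum, map_zero, Finset.sum_eq_single τ] at h1
  · rw [map_smul, map_sub, ← ex_zero, hf, hf, if_pos rfl, if_neg (hl0 τ (hd τ hn)).symm] at h1
    simp at h1
    exact hn h1
  · intro σ _ hσ
    by_cases hdσ : d σ = 0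
    · simp [hdσ]
    rw [map_smul, map_sub, ← ex_zero, hf, hf, if_neg (hl0 τ (hd τ hn)).symm,
      if_neg fun h => hσ (hl (hd σ hdσ) (hd τ hn) h)]
    simp
  · exact fun h => absurd hτ h

/-- Generators for the kernel of a map on the group obtained by adjoining `y`. -/
lemma mem_of_mem_closure_insert {Γ A : Type*} [Group Γ] [AddCommGroup A] {π : Γ → A}
    (hπ : IsLog π) (S : Set Γ) (y : Γ) (N : ℕ) (hw : y ^ N ∈ Subgroup.closure S) (T : Set Γ)
    (hT : ∀ p ∈ Subgroup.closure S, ∃ j : ℤ, π (p * (y ^ N) ^ j) = 0 ∨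
      ∃ τ ∈ T, π (p * (y ^ N) ^ j) = π τ)
    (hTS : T ⊆ Subgroup.closure S)
    (hlat : ∀ p ∈ Subgroup.closure S, ∀ i : ℤ, π p = i • π y → ∃ j : ℤ, i = j * N)
    (H : Subgroup Γ) (h1 : ∀ κ ∈ Subgroup.closure S, π κ = 0 → ∀ r : ℤ, r % N = r →
      y ^ r * κ * (y ^ r)⁻¹ ∈ H)
    (h2 : ∀ τ ∈ T, ∀ r : ℤ, r % N = r → r ≠ 0 → ⁅τ, y ^ r⁆ ∈ H) (hH : ∀ h ∈ H, π h = 0) :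
    ∀ g ∈ Subgroup.closure (insert y S), π g = 0 → g ∈ H := by
  set P := Subgroup.closure S
  have hK : ∀ κ ∈ P, π κ = 0 → κ ∈ H := fun κ hκ h0 => by
    simpa using h1 κ hκ h0 0 (by simp)
  have hconj : ∀ (g κ : Γ), π κ = 0 → π (g * κ * g⁻¹) = 0 := fun g κ h => by
    rw [hπ, hπ, hπ.map_inv, h]; abel
  have hdec : ∀ i : ℤ, y ^ i = y ^ (i % N) * (y ^ N) ^ (i / N) := fun i => by
    rw [← zpow_natCast y N, ← zpow_mul, ← zpow_add, Int.emod_add_mul_ediv]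
  have hcomm : ∀ j r : ℤ, (y ^ N) ^ j * y ^ r = y ^ r * (y ^ N) ^ j := fun j r => by
    rw [← zpow_natCast y N, ← zpow_mul, ← zpow_add, ← zpow_add, add_comm]
  have h3 : ∀ p ∈ P, ∀ r : ℤ, r % N = r → ⁅p, y ^ r⁆ ∈ H := by
    intro p hp r hr
    obtain ⟨j, hj⟩ := hT p hp
    have hwj : (y ^ N) ^ j ∈ P := zpow_mem hw j
    rcases hj with hj | ⟨τ, hτ, hj⟩
    · have e : ⁅p, y ^ r⁆ = (p * (y ^ N) ^ j) * (y ^ r * (p * (y ^ N) ^ j)⁻¹ * (y ^ r)⁻¹) := by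
        have := hcomm j r
        rw [commutatorElement_def, mul_inv_rev]
        simp only [mul_assoc]
        rw [← mul_assoc (y ^ r) ((y ^ N) ^ j)⁻¹, ← mul_assoc ((y ^ N) ^ j)]
        congr 1
        have h := hcomm (-j) r
        rw [zpow_neg] at h
        rw [← h]
        group
      rw [e]
      exact mul_mem (hK _ (mul_mem hp hwj) hj) (h1 _ (inv_mem (mul_mem hp hwj))
        (by rw [hπ.map_inv, hj, neg_zero]) r hr)
    · set κ := p * (y ^ N) ^ j * τ⁻¹ with hκ
      have hκP : κ ∈ P := mul_mem (mul_mem hp hwj) (inv_mem (hTS hτ))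
      have hκ0 : π κ = 0 := by rw [hκ, hπ, hj, hπ.map_inv, add_neg_cancel]
      have e : ⁅p, y ^ r⁆ = κ * ⁅τ, y ^ r⁆ * (y ^ r * κ⁻¹ * (y ^ r)⁻¹) := by
        have hpe : p = κ * τ * (y ^ N) ^ (-j) := by rw [hκ]; group
        have h := hcomm (-j) r
        have h' : (y ^ N) ^ (-j) * y ^ r * ((y ^ N) ^ (-j))⁻¹ = y ^ r := by
          rw [h, mul_inv_cancel_right]
        rw [commutatorElement_def, commutatorElement_def]
        calc p * y ^ r * p⁻¹ * (y ^ r)⁻¹ = κ * τ * ((y ^ N) ^ (-j) * y ^ r * ((y ^ N) ^ (-j))⁻¹)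
              * τ⁻¹ * κ⁻¹ * (y ^ r)⁻¹ := by
              conv_lhs => rw [hpe]
              simp only [mul_inv_rev, mul_assoc]
          _ = _ := by rw [h']; simp only [mul_assoc]; simp
      rw [e]
      refine mul_mem (mul_mem (hK _ hκP hκ0) ?_) (h1 _ (inv_mem hκP)
        (by rw [hπ.map_inv, hκ0, neg_zero]) r hr)
      by_cases hr0 : r = 0
      · subst hr0; simp
      · exact h2 τ hτ r hr hr0
  have h4 : ∀ p ∈ P, ∀ i : ℤ, ⁅p, y ^ i⁆ ∈ H := by
    intro p hp i
    set ω := (y ^ N) ^ (i / N)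
    have hω : ω ∈ P := zpow_mem hw _
    have e : ⁅p, y ^ i⁆ = ⁅p, y ^ (i % N)⁆ * (y ^ (i % N) * (p * (ω * p⁻¹ * ω⁻¹ * p) * p⁻¹) *
        (y ^ (i % N))⁻¹) := by
      rw [hdec i, commutatorElement_def, commutatorElement_def]
      change p * (y ^ (i % N) * ω) * p⁻¹ * (y ^ (i % N) * ω)⁻¹ = _
      group
    rw [e]
    refine mul_mem (h3 p hp _ (Int.emod_emod ..)) (h1 _ ?_ ?_ _ (Int.emod_emod ..))
    · exact mul_mem (mul_mem hp (mul_mem (mul_mem (mul_mem hω (inv_mem hp)) (inv_mem hω)) hp))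
        (inv_mem hp)
    · apply hconj
      rw [hπ, hπ, hπ, hπ.map_inv, hπ.map_inv]; abel
  have h5 : ∀ h ∈ H, ∀ i : ℤ, ∀ p ∈ P, ∀ ε : ℤ, ∃ h' ∈ H, h * y ^ i * p * y ^ ε =
      h' * y ^ (i + ε) * p := by
    intro h hh i p hp ε
    refine ⟨h * (⁅p, y ^ i⁆⁻¹ * ⁅p, y ^ (i + ε)⁆), mul_mem hh (mul_mem (inv_mem (h4 p hp i))
      (h4 p hp _)), ?_⟩
    rw [commutatorElement_def, commutatorElement_def]
    group
  have h6 : ∀ g ∈ Subgroup.closure (insert y S), ∃ h ∈ H, ∃ i : ℤ, ∃ p ∈ P,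
      g = h * y ^ i * p := by
    intro g hg
    induction hg using Subgroup.closure_induction_right with
    | one => exact ⟨1, one_mem _, 0, 1, one_mem _, by simp⟩
    | mul_right g _ a ha ih =>
      obtain ⟨h, hh, i, p, hp, rfl⟩ := ih
      rcases ha with rfl | ha
      · obtain ⟨h', hh', e⟩ := h5 h hh i p hp 1
        exact ⟨h', hh', _, p, hp, by rw [← e, zpow_one]⟩
      · exact ⟨h, hh, i, p * a, mul_mem hp (Subgroup.subset_closure ha), by group⟩
    | mul_inv_cancel g _ a ha ih =>
      obtain ⟨h, hh, i, p, hp, rfl⟩ := ih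
      rcases ha with rfl | ha
      · obtain ⟨h', hh', e⟩ := h5 h hh i p hp (-1)
        exact ⟨h', hh', _, p, hp, by rw [← e, zpow_neg_one]⟩
      · exact ⟨h, hh, i, p * a⁻¹, mul_mem hp (inv_mem (Subgroup.subset_closure ha)), by group⟩
  intro g hg hg0
  obtain ⟨h, hh, i, p, hp, rfl⟩ := h6 g hg
  rw [hπ, hπ, hH h hh, zero_add, hπ.map_zpow] at hg0
  obtain ⟨j, hj⟩ := hlat p hp (-i) (by rw [neg_smul]; exact eq_neg_of_add_eq_zero_right hg0)
  have hi : y ^ i = (y ^ N) ^ (-j) := by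
    rw [← zpow_natCast y N, ← zpow_mul]; congr 1; linarith
  rw [mul_assoc]
  refine mul_mem hh (hK _ ?_ ?_)
  · rw [hi]; exact mul_mem (zpow_mem hw _) hp
  · rw [hπ, hπ.map_zpow, hg0]

namespace IsRootTower

variable {Γ V : Type} [Group Γ] [AddCommGroup V] [Module ℚ V] {x : ℕ → Γ} {δ M : ℕ} {π : Γ → V}

variable (hT : IsRootTower x δ M π) (c : V →ₗ[ℚ] ℝ)

lemma phi_mul_of_ker (j : ℕ) {g : Γ} (hg : π g = 0) (h : Γ) :
    hT.phi c j (g * h) = hT.phi c j g + hT.phi c j h := by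
  rw [hT.phi_crossed c j, exHom_apply, hg, map_zero, ex_zero, one_mul]

lemma exists_factor {k : ℕ} {ι : Type} {β : ι → Γ}
    (hβ : Subgroup.closure (Set.range β) = hT.kerStage k)
    (hli : LinearIndependent ℝ fun b (j : Fin δ) => hT.phi c j (β b))
    {W : Type} [AddCommGroup W] [Module ℝ W] (ψ : Γ → W)
    (hψ : ∀ g h, π g = 0 → ψ (g * h) = ψ g + ψ h) :
    ∃ l : (Fin δ → ℝ⟦X⟧) →ₗ[ℝ] W, ∀ g ∈ hT.kerStage k,
      l (fun j => hT.phi c j g) = ψ g := by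
  obtain ⟨l, hl⟩ := exists_linearMap_of_linearIndependent hli (fun b => ψ (β b))
  have h1 : ψ 1 = 0 := by
    have := hψ 1 1 hT.isLog.map_one
    simpa using this
  refine ⟨l, fun g hg => ?_⟩
  rw [← hβ] at hg
  induction hg using Subgroup.closure_induction with
  | mem g hg => obtain ⟨b, rfl⟩ := hg; exact hl b
  | one =>
    rw [h1, ← map_zero l]
    congr 1
    ext1 j
    exact (hT.phi_crossed c j).map_one
  | mul g h hg _ ihg ihh =>
    rw [hβ] at hg
    rw [hψ g h hg.2, ← ihg, ← ihh, ← map_add]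
    congr 1
    ext1 j
    exact hT.phi_mul_of_ker c j hg.2 h
  | inv g hg ih =>
    rw [hβ] at hg
    have e1 := hψ g g⁻¹ hg.2
    rw [mul_inv_cancel, h1] at e1
    rw [← neg_eq_of_add_eq_zero_right e1.symm, ← ih, ← map_neg]
    congr 1
    ext1 j
    have e2 := hT.phi_mul_of_ker c j hg.2 g⁻¹
    rw [mul_inv_cancel, (hT.phi_crossed c j).map_one] at e2
    exact (neg_eq_of_add_eq_zero_right e2.symm).symm

lemma commutator_mem_kerStage {k : ℕ} {p q : Γ} (hp : p ∈ Subgroup.closure (x '' Set.Iio k))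
    (hq : q ∈ Subgroup.closure (x '' Set.Iio k)) : ⁅p, q⁆ ∈ hT.kerStage k := by
  refine ⟨?_, ?_⟩
  · change ⁅p, q⁆ ∈ Subgroup.closure (x '' Set.Iio k)
    exact mul_mem (mul_mem (mul_mem hp hq) (inv_mem hp)) (inv_mem hq)
  · change π ⁅p, q⁆ = 0
    rw [commutatorElement_def, hT.isLog, hT.isLog, hT.isLog, hT.isLog.map_inv, hT.isLog.map_inv]
    abel

/-- Modulo `1 - w`, commutators with `w` of coset representatives are independent. -/
lemma eq_zero_of_commutator_relation [FiniteDimensional ℚ V] {k : ℕ} {ι : Type} {β : ι → Γ}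
    (hβ : Subgroup.closure (Set.range β) = hT.kerStage k)
    (hli : LinearIndependent ℝ fun b (j : Fin δ) => hT.phi c j (β b)) {w : Γ}
    (hw : w ∈ Subgroup.closure (x '' Set.Iio k)) (hw0 : π w ≠ 0)
    (c' : V →ₗ[ℚ] ℝ) (hc' : c' (π w) = 0) (T : Set Γ)
    (hTP : T ⊆ Subgroup.closure (x '' Set.Iio k)) (hinj : Set.InjOn (fun g => c' (π g)) T)
    (hT0 : ∀ τ ∈ T, c' (π τ) ≠ 0) (sB : Finset ι) (sT : Finset Γ) (f : ι → ℝ) (d : Γ → ℝ)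
    (hd : ∀ τ, d τ ≠ 0 → τ ∈ T)
    (h0 : ∀ j : Fin δ, (1 - ex (c (π w))) * ∑ b ∈ sB, f b • hT.phi c j (β b) =
      ∑ τ ∈ sT, d τ • hT.phi c j ⁅τ, w⁆) : ∀ τ ∈ sT, d τ = 0 := by
  obtain ⟨j₀, -, hj₀⟩ := hT.exists_phi_ne_zero c' hw0
  obtain ⟨l, hl⟩ := hT.exists_factor c hβ hli (hT.phi c' j₀)
    (fun g h hg => hT.phi_mul_of_ker c' j₀ hg h)
  have hβK : ∀ b, β b ∈ hT.kerStage k := fun b => hβ ▸ Subgroup.subset_closure ⟨b, rfl⟩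
  have h1 : ∑ b ∈ sB, f b • (fun j : Fin δ => hT.phi c j ⁅β b, w⁆) =
      ∑ τ ∈ sT, d τ • (fun j : Fin δ => hT.phi c j ⁅τ, w⁆) := by
    ext1 j
    simp only [Finset.sum_apply, Pi.smul_apply]
    rw [← h0 j, Finset.mul_sum]
    refine Finset.sum_congr rfl fun b _ => ?_
    rw [(hT.phi_crossed c j).commutator, exHom_apply, exHom_apply, (hT.mem_kerStage.1 (hβK b)).2]
    simp [ex_zero]
  have h2 := congrArg l h1
  rw [map_sum, map_sum] at h2
  have h3 : ∑ b ∈ sB, l (f b • fun j : Fin δ => hT.phi c j ⁅β b, w⁆) = 0 := by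
    refine Finset.sum_eq_zero fun b _ => ?_
    rw [map_smul, hl _ (hT.commutator_mem_kerStage (hβK b).1 hw),
      (hT.phi_crossed c' j₀).commutator, exHom_apply, exHom_apply, (hT.mem_kerStage.1 (hβK b)).2, hc']
    simp [ex_zero]
  rw [h3] at h2
  have h4 : (∑ τ ∈ sT, d τ • (1 - ex (c' (π τ)))) * hT.phi c' j₀ w = 0 := by
    rw [← neg_eq_zero, h2, Finset.sum_mul, ← Finset.sum_neg_distrib]
    refine Finset.sum_congr rfl fun τ _ => ?_
    by_cases hdτ : d τ = 0
    · simp [hdτ]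
    rw [map_smul, hl _ (hT.commutator_mem_kerStage (hTP (hd τ hdτ)) hw),
      (hT.phi_crossed c' j₀).commutator, exHom_apply, exHom_apply, hc', ex_zero, smul_mul_assoc,
      ← smul_neg]
    congr 1
    ring
  exact eq_zero_of_sum_one_sub_ex T _ hinj hT0 sT d hd ((mul_eq_zero.1 h4).resolve_right hj₀)

end IsRootTower

end PrincipalGroup

namespace PrincipalGroup

open PowerSeries
open scoped commutatorElement

namespace IsRootTower

variable {Γ V : Type} [Group Γ] [AddCommGroup V] [Module ℚ V] {x : ℕ → Γ} {δ M : ℕ} {π : Γ → V}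

variable (hT : IsRootTower x δ M π) (c : V →ₗ[ℚ] ℝ)

/-- The kernel of `π` at stage `k` has generators whose crossed homomorphism vectors are linearly
independent. -/
def HasIndependentGenerators (k : ℕ) : Prop :=
  ∃ (ι : Type) (β : ι → Γ), Subgroup.closure (Set.range β) = hT.kerStage k ∧
    LinearIndependent ℝ fun b (j : Fin δ) => hT.phi c j (β b)

/-- The new generators of the kernel after adjoining `y`. -/
def newGen {ι : Type} (β : ι → Γ) (y : Γ) : (ℤ × ι) ⊕ (Γ × ℤ) → Γ
  | .inl (i, b) => y ^ i * β b * (y ^ i)⁻¹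
  | .inr (τ, i) => ⁅τ, y ^ i⁆

/-- The index set of the new generators. -/
def NewGood {ι : Type} (N : ℕ) (T : Set Γ) : (ℤ × ι) ⊕ (Γ × ℤ) → Prop
  | .inl (i, _) => i % (N : ℤ) = i
  | .inr (τ, i) => τ ∈ T ∧ i % (N : ℤ) = i ∧ i ≠ 0

lemma pow_stageOrder_mem (k : ℕ) :
    x k ^ hT.stageOrder k ∈ Subgroup.closure (x '' Set.Iio k) := by
  unfold stageOrder
  split_ifs with h
  · simp
  · exact hT.pow_mem k (not_lt.1 h)

lemma phi_mul_one_sub (j : ℕ) (y : Γ) (i i' : ℤ) :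
    (1 - ex (i * c (π y))) * hT.phi c j (y ^ i') = (1 - ex (i' * c (π y))) * hT.phi c j (y ^ i) := by
  have := (hT.phi_crossed c j).of_commute (p := y ^ i) (q := y ^ i')
    (by rw [← zpow_add, ← zpow_add, add_comm])
  simpa [hT.isLog.map_zpow, zsmul_eq_mul] using this

lemma commutator_phi_mem (hc : ∀ v, c v = 0 → v = 0) (k j : ℕ) {p q : Γ}
    (hp : p ∈ Subgroup.closure (x '' Set.Iio k)) (hq : q ∈ Subgroup.closure (x '' Set.Iio k)) :
    hT.phi c j ⁅p, q⁆ ∈ hT.fracSpace c k :=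
  hT.phi_mem_fracSpace c hc j k _ (hT.mem_kerStage.1 (hT.commutator_mem_kerStage hp hq)).1

/-- The linear independence of the new generators. -/
lemma linearIndependent_newGen [FiniteDimensional ℚ V] (hc : ∀ v, c v = 0 → v = 0) {k : ℕ}
    {ι : Type} {β : ι → Γ} (hβ : Subgroup.closure (Set.range β) = hT.kerStage k)
    (hli : LinearIndependent ℝ fun b (j : Fin δ) => hT.phi c j (β b))
    (c' : V →ₗ[ℚ] ℝ) (hc' : c' (π (x k ^ hT.stageOrder k)) = 0) (T : Set Γ)
    (hTP : T ⊆ Subgroup.closure (x '' Set.Iio k)) (hinj : Set.InjOn (fun g => c' (π g)) T)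
    (hT0 : ∀ τ ∈ T, c' (π τ) ≠ 0) :
    LinearIndependent ℝ fun (p : {p // NewGood (ι := ι) (hT.stageOrder k) T p}) (j : Fin δ) =>
      hT.phi c j (newGen β (x k) p) := by
  refine linearIndependent_of_boxes _ (fun p (j : Fin δ) => hT.phi c j (newGen β (x k) p)) ?_
  intro s sB sT f g hs hf hg h0
  set y := x k with hy
  set N := hT.stageOrder k with hN
  set w := y ^ N with hw
  have hwP : w ∈ Subgroup.closure (x '' Set.Iio k) := hT.pow_stageOrder_mem k
  have hβK : ∀ b, β b ∈ Subgroup.closure (x '' Set.Iio k) ∧ π (β b) = 0 := fun b =>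
    hT.mem_kerStage.1 (hβ ▸ Subgroup.subset_closure ⟨b, rfl⟩)
  let a : Fin δ → ℤ → ℝ⟦X⟧ := fun j i => ∑ b ∈ sB, f i b • hT.phi c j (β b)
  have ha : ∀ j i, a j i ∈ hT.fracSpace c k := fun j i => sum_mem fun b _ =>
    Submodule.smul_mem _ _ (hT.phi_mem_fracSpace c hc j k _ (hβK b).1)
  have haI : ∀ j i, a j i ≠ 0 → i % (N : ℤ) = i := fun j i h => by
    obtain ⟨b, _, hb⟩ := Finset.exists_ne_zero_of_sum_ne_zero h
    exact hf i b fun h => hb (by rw [h, zero_smul])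
  have hgood : ∀ τ i, g τ i ≠ 0 → τ ∈ T ∧ i % (N : ℤ) = i ∧ i ≠ 0 := hg
  have hrel : ∀ j : Fin δ, ∑ i ∈ s, ex (i * c (π y)) * a j i +
      ∑ i ∈ s, ∑ τ ∈ sT, g τ i • hT.phi c j ⁅τ, y ^ i⁆ = 0 := by
    intro j
    have := congrFun h0 j
    simp only [Pi.add_apply, Finset.sum_apply, Pi.smul_apply, Pi.zero_apply, newGen] at this
    rw [← this]
    congr 1
    refine Finset.sum_congr rfl fun i _ => ?_
    rw [Finset.mul_sum]
    refine Finset.sum_congr rfl fun b _ => ?_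
    rw [(hT.phi_crossed c j).conj, exHom_apply, hT.isLog.map_zpow, map_zsmul, zsmul_eq_mul,
      mul_smul_comm]
    rw [exHom_apply, (hβK b).2, map_zero, ex_zero]
  have hfin : (∀ i ∈ s, ∀ τ ∈ sT, g τ i = 0) → ∀ i ∈ s, ∀ b ∈ sB, f i b = 0 := by
    intro hg0
    have h1 : ∀ (j : Fin δ), ∀ i ∈ s, a j i = 0 := by
      intro j
      have h2 := hrel j
      rw [Finset.sum_eq_zero (s := s) (f := fun i => ∑ τ ∈ sT, g τ i • hT.phi c j ⁅τ, y ^ i⁆)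
        (fun i hi => Finset.sum_eq_zero fun τ hτ => by rw [hg0 i hi τ hτ, zero_smul]),
        add_zero] at h2
      exact hT.eq_zero_of_sum_fracSpace c hc k s (a j) (fun i _ => ha j i)
        (fun i _ => haI j i) h2
    intro i hi
    refine linearIndependent_iff'.1 hli sB (f i) ?_
    ext1 j
    simpa using h1 j i hi
  refine (and_iff_right_of_imp hfin).2 ?_
  rcases lt_or_ge k δ with hk | hk
  · have hzero : ∀ p ∈ Subgroup.closure (x '' Set.Iio k), hT.phi c k p = 0 := by
      intro p hp
      have hle : Subgroup.closure (x '' Set.Iio k) ≤ (hT.phi_crossed c k).ker := by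
        rw [Subgroup.closure_le]
        rintro _ ⟨i, hi, rfl⟩
        change hT.phi c k (x i) = 0
        rw [hT.phi_apply_gen c k (lt_trans hi hk), if_neg (ne_of_lt hi)]
      exact hle hp
    have hinj' : Set.InjOn (fun g => c (π g)) T := fun p hp q hq h => by
      refine hinj hp hq ?_
      have h1 : c (π p - π q) = 0 := by rw [map_sub]; exact sub_eq_zero.2 h
      simp only [sub_eq_zero.1 (hc _ h1)]
    have hT0' : ∀ τ ∈ T, c (π τ) ≠ 0 := fun τ hτ h => hT0 τ hτ (by rw [hc _ h, map_zero])
    let v : ℤ → ℝ⟦X⟧ := fun i => ∑ τ ∈ sT, g τ i • (1 - ex (c (π τ)))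
    have h1 : ∑ i ∈ s, (1 - ex (i * c (π y))) * v i = 0 := by
      have h2 := congrArg (fun z => (ex ((1 : ℤ) * c (π y)) - 1) * z) (hrel ⟨k, hk⟩)
      simp only [mul_zero, mul_add] at h2
      rw [Finset.sum_eq_zero (s := s) (f := fun i => ex (i * c (π y)) * a ⟨k, hk⟩ i)
        (fun i _ => by
          have : a ⟨k, hk⟩ i = 0 := Finset.sum_eq_zero fun b _ => by
            rw [hzero _ (hβK b).1, smul_zero]
          rw [this, mul_zero]), mul_zero, zero_add, Finset.mul_sum] at h2
      rw [← h2]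
      refine Finset.sum_congr rfl fun i _ => ?_
      rw [Finset.mul_sum, Finset.mul_sum]
      refine Finset.sum_congr rfl fun τ _ => ?_
      by_cases hgτ : g τ i = 0
      · simp [hgτ]
      rw [mul_smul_comm, mul_smul_comm]
      congr 1
      have h3 := hT.phi_mul_one_sub c k y 1 i
      rw [zpow_one, hT.phi_apply_gen c k hk, if_pos rfl] at h3
      rw [(hT.phi_crossed c k).commutator, hzero τ (hTP (hgood τ i hgτ).1), exHom_apply,
        exHom_apply]
      linear_combination -(1 - ex (c (π τ))) * h3
    obtain ⟨h2, -⟩ := hT.grading c hc k s hs (fun _ => 0) v (fun _ => zero_mem _)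
      (fun i => sum_mem fun τ _ => by
        by_cases hgτ : g τ i = 0
        · rw [hgτ, zero_smul]; exact zero_mem _
        exact Submodule.smul_mem _ _ (hT.expAlg_le_fracSpace c (sub_mem (one_mem _)
          (hT.ex_mem_expAlg c (hTP (hgood τ i hgτ).1)))))
      (fun i h => absurd rfl h) (fun i h => by
        obtain ⟨τ, _, hτ⟩ := Finset.exists_ne_zero_of_sum_ne_zero h
        exact (hgood τ i fun h => hτ (by rw [h, zero_smul])).2.1) (by simpa using h1)
    intro i hi τ hτ
    by_cases hi0 : i = 0
    · by_contra hn
      exact (hgood τ i hn).2.2 hi0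
    · exact eq_zero_of_sum_one_sub_ex T _ hinj' hT0' sT (fun τ => g τ i)
        (fun τ h => (hgood τ i h).1) (h2 i hi hi0).symm τ hτ
  · have hNM : N = M := if_neg (not_lt.2 hk)
    have hw0 : π w ≠ 0 := by
      rw [hw, hT.isLog.map_pow, ← Nat.cast_smul_eq_nsmul ℚ]
      exact smul_ne_zero (Nat.cast_ne_zero.2 (hNM ▸ hT.pos.ne')) (hT.pi_gen_ne_zero k)
    let v : Fin δ → ℤ → ℝ⟦X⟧ := fun j i => ∑ τ ∈ sT, g τ i • hT.phi c j ⁅τ, w⁆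
    have h1 : ∀ j, ∑ i ∈ s, ex (i * c (π y)) * ((1 - ex (c (π w))) * a j i) +
        ∑ i ∈ s, (1 - ex (i * c (π y))) * v j i = 0 := by
      intro j
      have h2 := congrArg (fun z => (1 - ex (c (π w))) * z) (hrel j)
      simp only [mul_zero, mul_add] at h2
      rw [← h2]
      congr 1
      · rw [Finset.mul_sum]
        exact Finset.sum_congr rfl fun i _ => mul_left_comm _ _ _
      · rw [Finset.mul_sum]
        refine Finset.sum_congr rfl fun i _ => ?_
        rw [Finset.mul_sum, Finset.mul_sum]
        refine Finset.sum_congr rfl fun τ _ => ?_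
        rw [mul_smul_comm, mul_smul_comm]
        congr 1
        have h3 := hT.phi_mul_one_sub c j y N i
        rw [zpow_natCast, ← hw] at h3
        have h4 : ((N : ℤ) : ℝ) * c (π y) = c (π w) := by
          rw [hw, hT.isLog.map_pow, map_nsmul, nsmul_eq_mul, Int.cast_natCast]
        rw [h4] at h3
        rw [(hT.phi_crossed c j).commutator, (hT.phi_crossed c j).commutator, exHom_apply,
          exHom_apply, exHom_apply, hT.isLog.map_zpow, map_zsmul, zsmul_eq_mul]
        linear_combination (1 - ex (c (π τ))) * h3
    have h2 : ∀ j : Fin δ, ∀ i ∈ s, i ≠ 0 → (1 - ex (c (π w))) * a j i = v j i := fun j =>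
      (hT.grading c hc k s hs (fun i => (1 - ex (c (π w))) * a j i) (v j)
      (fun i => hT.mul_mem_fracSpace c (sub_mem (one_mem _) (hT.ex_mem_expAlg c hwP)) (ha j i))
      (fun i => sum_mem fun τ _ => by
        by_cases hgτ : g τ i = 0
        · rw [hgτ, zero_smul]; exact zero_mem _
        exact Submodule.smul_mem _ _ (hT.commutator_phi_mem c hc k j (hTP (hgood τ i hgτ).1) hwP))
      (fun i h => haI j i fun h' => h (by rw [h', mul_zero])) (fun i h => by
        obtain ⟨τ, _, hτ⟩ := Finset.exists_ne_zero_of_sum_ne_zero h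
        exact (hgood τ i fun h => hτ (by rw [h, zero_smul])).2.1) (h1 j)).1
    intro i hi
    by_cases hi0 : i = 0
    · intro τ _
      by_contra hn
      exact (hgood τ i hn).2.2 hi0
    · exact hT.eq_zero_of_commutator_relation c hβ hli hwP hw0 c' hc' T hTP hinj hT0 sB sT (f i)
        (fun τ => g τ i) (fun τ h => (hgood τ i h).1) fun j => h2 j i hi hi0

lemma hasIndependentGenerators [FiniteDimensional ℚ V] (hc : ∀ v, c v = 0 → v = 0) (k : ℕ) :
    hT.HasIndependentGenerators c k := by
  induction k with
  | zero =>
    refine ⟨Empty, Empty.elim, ?_, linearIndependent_empty_type⟩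
    have h : Subgroup.closure (x '' Set.Iio 0) = ⊥ := by simp
    rw [kerStage, h]
    simp
  | succ k ih =>
    obtain ⟨ι, β, hβ, hli⟩ := ih
    have hβK : ∀ b, β b ∈ Subgroup.closure (x '' Set.Iio k) ∧ π (β b) = 0 := fun b =>
      hT.mem_kerStage.1 (hβ ▸ Subgroup.subset_closure ⟨b, rfl⟩)
    set y := x k with hy
    set N := hT.stageOrder k with hN
    have hwP : y ^ N ∈ Subgroup.closure (x '' Set.Iio k) := hT.pow_stageOrder_mem k
    obtain ⟨c', hc'⟩ := exists_linearMap_ker (Submodule.span ℚ {π (y ^ N)})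
    have hlat : ∀ p ∈ Subgroup.closure (x '' Set.Iio k), c' (π p) = 0 →
        ∃ j : ℤ, π p = j • π (y ^ N) := by
      intro p hp h
      obtain ⟨q, hq⟩ := Submodule.mem_span_singleton.1 ((hc' _).1 h)
      rw [hT.isLog.map_pow, ← Nat.cast_smul_eq_nsmul ℚ, smul_smul] at hq
      obtain ⟨j, hj⟩ := hT.lattice k p hp _ hq.symm
      refine ⟨j, ?_⟩
      rw [← hq, hj, hT.isLog.map_pow, ← Nat.cast_smul_eq_nsmul ℚ, ← Int.cast_smul_eq_zsmul ℚ,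
        smul_smul]
      rfl
    obtain ⟨T, hTP, hbij⟩ := Set.SurjOn.exists_bijOn_subset (f := fun g => c' (π g))
      (s := (Subgroup.closure (x '' Set.Iio k) : Set Γ))
      (t := ((fun g => c' (π g)) '' (Subgroup.closure (x '' Set.Iio k) : Set Γ)) \ {0})
      (fun _ h => h.1)
    have hT0 : ∀ τ ∈ T, c' (π τ) ≠ 0 := fun τ hτ => (hbij.mapsTo hτ).2
    have hmono : Subgroup.closure (x '' Set.Iio k) ≤ Subgroup.closure (x '' Set.Iio (k + 1)) :=
      Subgroup.closure_mono (Set.image_mono (Set.Iio_subset_Iio k.le_succ))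
    have hyP : y ∈ Subgroup.closure (x '' Set.Iio (k + 1)) := gen_mem k.lt_succ_self
    have hins : x '' Set.Iio (k + 1) = insert y (x '' Set.Iio k) := by
      rw [← Set.image_insert_eq]
      congr 1
      ext i
      simp only [Set.mem_Iio, Set.mem_insert_iff]
      omega
    refine ⟨{p // NewGood (ι := ι) N T p}, fun p => newGen β y p, ?_,
      hT.linearIndependent_newGen c hc hβ hli c' ((hc' _).2 (Submodule.mem_span_singleton_self _))
        T hTP hbij.injOn hT0⟩
    set H := Subgroup.closure (Set.range fun p : {p // NewGood (ι := ι) N T p} => newGen β y p)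
      with hH
    have hle : H ≤ hT.kerStage (k + 1) := by
      rw [hH, Subgroup.closure_le]
      rintro _ ⟨⟨⟨i, b⟩ | ⟨τ, i⟩, hp⟩, rfl⟩
      · refine hT.mem_kerStage.2 ⟨mul_mem (mul_mem (zpow_mem hyP i) (hmono (hβK b).1))
          (inv_mem (zpow_mem hyP i)), ?_⟩
        change π (y ^ i * β b * (y ^ i)⁻¹) = 0
        rw [hT.isLog, hT.isLog, hT.isLog.map_inv, (hβK b).2]
        abel
      · exact hT.commutator_mem_kerStage (hmono (hTP hp.1)) (zpow_mem hyP i)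
    refine le_antisymm hle fun g hg => ?_
    obtain ⟨hg1, hg2⟩ := hT.mem_kerStage.1 hg
    rw [hins] at hg1
    refine mem_of_mem_closure_insert hT.isLog (x '' Set.Iio k) y N hwP T ?_ hTP ?_ H ?_ ?_
      (fun h hh => (hT.mem_kerStage.1 (hle hh)).2) g hg1 hg2
    · intro p hp
      by_cases h0 : c' (π p) = 0
      · obtain ⟨j, hj⟩ := hlat p hp h0
        exact ⟨-j, Or.inl (by rw [hT.isLog, hT.isLog.map_zpow, hj, neg_smul, add_neg_cancel])⟩
      · obtain ⟨τ, hτ, he⟩ := hbij.surjOn ⟨⟨p, hp, rfl⟩, h0⟩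
        simp only at he
        obtain ⟨j, hj⟩ := hlat (p * τ⁻¹) (mul_mem hp (inv_mem (hTP hτ))) (by
          rw [hT.isLog, hT.isLog.map_inv, map_add, map_neg, he, add_neg_cancel])
        rw [hT.isLog, hT.isLog.map_inv] at hj
        refine ⟨-j, Or.inr ⟨τ, hτ, ?_⟩⟩
        rw [hT.isLog, hT.isLog.map_zpow, neg_smul, ← hj]
        abel
    · intro p hp i hi
      obtain ⟨j, hj⟩ := hT.lattice k p hp i (by rw [hi, Int.cast_smul_eq_zsmul])
      exact ⟨j, by exact_mod_cast hj⟩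
    · intro κ hκ h0 r hr
      have hκ' : κ ∈ Subgroup.closure (Set.range β) := by
        rw [hβ]; exact hT.mem_kerStage.2 ⟨hκ, h0⟩
      clear hκ h0
      induction hκ' using Subgroup.closure_induction with
      | mem κ hκ =>
        obtain ⟨b, rfl⟩ := hκ
        exact Subgroup.subset_closure ⟨⟨.inl (r, b), hr⟩, rfl⟩
      | one => simp
      | mul a b _ _ ha hb =>
        have := mul_mem ha hb
        rwa [conj_mul] at this
      | inv a _ ha =>
        have := inv_mem ha
        rwa [conj_inv] at this
    · intro τ hτ r hr hr0
      exact Subgroup.subset_closure ⟨⟨.inr (τ, r), hτ, hr, hr0⟩, rfl⟩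

end IsRootTower

end PrincipalGroup

namespace PrincipalGroup

open PowerSeries

/-- The augmentation ideal of the real group algebra, as a real subspace. -/
noncomputable def aug (Γ : Type*) [Group Γ] : Submodule ℝ (MonoidAlgebra ℝ Γ) :=
  Submodule.span ℝ (Set.range fun g => MonoidAlgebra.of ℝ Γ g - 1)

section Aug

variable {Γ : Type*} [Group Γ]

lemma of_sub_one_mem_aug (g : Γ) : MonoidAlgebra.of ℝ Γ g - 1 ∈ aug Γ :=
  Submodule.subset_span ⟨g, rfl⟩

/-- A multiplicative filtration receiving the augmentation ideal receives all of its powers. -/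
lemma lift_mem_of_mem_aug_pow {B : Type*} [Ring B] [Algebra ℝ B] (ρ : Γ →* B)
    (W : ℕ → Submodule ℝ B) (h1 : ∀ g, ρ g - 1 ∈ W 1)
    (hmul : ∀ n, ∀ a ∈ W n, ∀ b ∈ W 1, a * b ∈ W (n + 1)) {n : ℕ} (hn : 1 ≤ n)
    {z : MonoidAlgebra ℝ Γ} (hz : z ∈ aug Γ ^ n) : MonoidAlgebra.lift ℝ B Γ ρ z ∈ W n := by
  have base : ∀ z ∈ aug Γ, MonoidAlgebra.lift ℝ B Γ ρ z ∈ W 1 := by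
    intro z hz
    have : aug Γ ≤ (W 1).comap (MonoidAlgebra.lift ℝ B Γ ρ).toLinearMap := by
      rw [aug, Submodule.span_le]
      rintro _ ⟨g, rfl⟩
      simpa using h1 g
    exact this hz
  induction n, hn using Nat.le_induction generalizing z with
  | base => exact base z (by simpa using hz)
  | succ n hn ih =>
    rw [pow_succ] at hz
    refine Submodule.mul_induction_on hz (fun a ha b hb => ?_) fun a b ha hb => ?_
    · rw [map_mul]
      exact hmul n _ (ih ha) _ (base b hb)
    · rw [map_add]
      exact add_mem ha hb

lemma of_sub_one_mem_of_closure {ι : Type*} {β : ι → Γ} (hβ : Subgroup.closure (Set.range β) = ⊤)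
    (g : Γ) : MonoidAlgebra.of ℝ Γ g - 1 ∈
      Submodule.span ℝ (Set.range fun b => MonoidAlgebra.of ℝ Γ (β b) - 1) ⊔ aug Γ ^ 2 := by
  have hg : g ∈ Subgroup.closure (Set.range β) := by rw [hβ]; trivial
  induction hg using Subgroup.closure_induction with
  | mem g hg =>
    obtain ⟨b, rfl⟩ := hg
    exact Submodule.mem_sup_left (Submodule.subset_span ⟨b, rfl⟩)
  | one =>
    rw [map_one, sub_self]
    exact zero_mem _
  | mul a b _ _ ha hb =>
    have : MonoidAlgebra.of ℝ Γ (a * b) - 1 = (MonoidAlgebra.of ℝ Γ a - 1) +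
        (MonoidAlgebra.of ℝ Γ b - 1) +
        (MonoidAlgebra.of ℝ Γ a - 1) * (MonoidAlgebra.of ℝ Γ b - 1) := by
      rw [map_mul]; noncomm_ring
    rw [this]
    refine add_mem (add_mem ha hb) (Submodule.mem_sup_right ?_)
    rw [pow_two]
    exact Submodule.mul_mem_mul (of_sub_one_mem_aug _) (of_sub_one_mem_aug _)
  | inv a _ ha =>
    have : MonoidAlgebra.of ℝ Γ a⁻¹ - 1 = -(MonoidAlgebra.of ℝ Γ a - 1) -
        (MonoidAlgebra.of ℝ Γ a⁻¹ - 1) * (MonoidAlgebra.of ℝ Γ a - 1) := by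
      have h : MonoidAlgebra.of ℝ Γ a⁻¹ * MonoidAlgebra.of ℝ Γ a = 1 := by
        rw [← map_mul, inv_mul_cancel, map_one]
      rw [sub_mul, mul_sub, h]; noncomm_ring
    rw [this]
    refine sub_mem (neg_mem ha) (Submodule.mem_sup_right ?_)
    rw [pow_two]
    exact Submodule.mul_mem_mul (of_sub_one_mem_aug _) (of_sub_one_mem_aug _)

lemma aug_le_of_closure {ι : Type*} {β : ι → Γ} (hβ : Subgroup.closure (Set.range β) = ⊤) :
    aug Γ ≤ Submodule.span ℝ (Set.range fun b => MonoidAlgebra.of ℝ Γ (β b) - 1) ⊔ aug Γ ^ 2 := by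
  conv_lhs => rw [aug]
  rw [Submodule.span_le]
  rintro _ ⟨g, rfl⟩
  exact of_sub_one_mem_of_closure hβ g

lemma aug_pow_le_of_closure {ι : Type*} {β : ι → Γ} (hβ : Subgroup.closure (Set.range β) = ⊤)
    {n : ℕ} (hn : 1 ≤ n) :
    aug Γ ^ n ≤ Submodule.span ℝ (Set.range fun l : Fin n → ι =>
      (List.ofFn fun i => MonoidAlgebra.of ℝ Γ (β (l i)) - 1).prod) ⊔ aug Γ ^ (n + 1) := by
  induction n, hn using Nat.le_induction with
  | base =>
    rw [pow_one]
    refine (aug_le_of_closure hβ).trans (sup_le_sup_right (Submodule.span_mono ?_) _)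
    rintro _ ⟨b, rfl⟩
    exact ⟨fun _ => b, by simp⟩
  | succ n hn ih =>
    rw [pow_succ']
    refine (mul_le_mul' (aug_le_of_closure hβ) le_rfl).trans ?_
    rw [Submodule.sup_mul]
    refine sup_le ?_ (le_sup_of_le_right ?_)
    · refine (mul_le_mul' le_rfl ih).trans ?_
      rw [Submodule.mul_sup]
      refine sup_le (le_sup_of_le_left ?_) (le_sup_of_le_right ?_)
      · rw [Submodule.span_mul_span]
        refine Submodule.span_mono ?_
        rintro _ ⟨_, ⟨b, rfl⟩, _, ⟨l, rfl⟩, rfl⟩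
        exact ⟨Fin.cons b l, by simp [List.ofFn_succ]⟩
      · rw [pow_succ' _ (n + 1)]
        refine mul_le_mul' ?_ le_rfl
        rw [Submodule.span_le]
        rintro _ ⟨b, rfl⟩
        exact of_sub_one_mem_aug _
    · rw [← pow_add]
      exact le_of_eq (by congr 1; omega)

end Aug

section Corner

variable {R : Type*} [CommRing R] {N : ℕ}

lemma above_ofFn_prod {n d : ℕ} {A : Fin n → Matrix (Fin N) (Fin N) R} (hA : ∀ i, Above d (A i)) :
    Above (n * d) (List.ofFn A).prod := by
  induction n with
  | zero => simpa using Above.one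
  | succ n ih =>
    rw [List.ofFn_succ, List.prod_cons]
    have := (hA 0).mul (ih fun i => hA i.succ)
    rwa [add_comm, ← Nat.succ_mul] at this

/-- A corner entry of a product of strictly upper triangular matrices. -/
lemma ofFn_prod_apply {n p : ℕ} {A : Fin n → Matrix (Fin N) (Fin N) R} (hA : ∀ i, Above 1 (A i))
    (h : p + n < N) :
    (List.ofFn A).prod ⟨p, by omega⟩ ⟨p + n, h⟩ =
      ∏ i : Fin n, A i ⟨p + i, by omega⟩ ⟨p + i + 1, by omega⟩ := by
  induction n generalizing p with
  | zero => simp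
  | succ n ih =>
    rw [List.ofFn_succ, List.prod_cons, Fin.prod_univ_succ]
    have h2 := above_ofFn_prod fun i : Fin n => hA i.succ
    rw [mul_one] at h2
    rw [(hA 0).mul_apply h2 (k := ⟨p + 1, by omega⟩) rfl (by simp; omega)]
    have := ih (p := p + 1) (fun i => hA i.succ) (by omega)
    have e : (⟨p + (n + 1), h⟩ : Fin N) = ⟨p + 1 + n, by omega⟩ := Fin.ext (by simp; omega)
    rw [e, this]
    congr 1
    refine Finset.prod_congr rfl fun i _ => ?_
    congr 1 <;> simp [Fin.ext_iff] <;> omega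

/-- A corner entry of a product of upper triangular bidiagonal matrices. -/
lemma bidiagonal_prod_apply {n p : ℕ} {A : Fin n → Matrix (Fin N) (Fin N) R}
    (hA : ∀ i, ∀ a b : Fin N, (a : ℕ) + 1 < b → A i a b = 0) (h : p + n < N) :
    (List.ofFn A).prod ⟨p, by omega⟩ ⟨p + n, h⟩ =
      ∏ i : Fin n, A i ⟨p + i, by omega⟩ ⟨p + i + 1, by omega⟩ := by
  have key : ∀ n (A : Fin n → Matrix (Fin N) (Fin N) R),
      (∀ i, ∀ a b : Fin N, (a : ℕ) + 1 < b → A i a b = 0) → ∀ a b : Fin N, (a : ℕ) + n < b →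
        (List.ofFn A).prod a b = 0 := by
    intro n
    induction n with
    | zero =>
      intro A _ a b hab
      rw [List.ofFn_zero, List.prod_nil, Matrix.one_apply_ne]
      rintro rfl; omega
    | succ n ih =>
      intro A hA a b hab
      rw [List.ofFn_succ, List.prod_cons, Matrix.mul_apply]
      refine Finset.sum_eq_zero fun k _ => ?_
      by_cases hk : (a : ℕ) + 1 < k
      · rw [hA 0 a k hk, zero_mul]
      · rw [ih _ (fun i => hA i.succ) k b (by omega), mul_zero]
  induction n generalizing p with
  | zero => simp
  | succ n ih =>
    rw [List.ofFn_succ, List.prod_cons, Fin.prod_univ_succ, Matrix.mul_apply,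
      Finset.sum_eq_single ⟨p + 1, by omega⟩]
    · have := ih (A := fun i => A i.succ) (p := p + 1) (fun i => hA i.succ) (by omega)
      have e : (⟨p + (n + 1), h⟩ : Fin N) = ⟨p + 1 + n, by omega⟩ := Fin.ext (by simp; omega)
      rw [e, this]
      congr 1
      refine Finset.prod_congr rfl fun i _ => ?_
      congr 1 <;> simp [Fin.ext_iff] <;> omega
    · intro k _ hk
      by_cases hk' : p + 1 < k
      · rw [hA 0 _ k hk', zero_mul]
      · have : (k : ℕ) ≠ p + 1 := fun h => hk (Fin.ext h)
        rw [key n _ (fun i => hA i.succ) k _ (by simp; omega), mul_zero]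
    · simp

/-- The subspace of matrices vanishing strictly below the `d`-th superdiagonal. -/
def aboveSubmodule (S : Type*) [CommRing S] [Algebra S R] (N d : ℕ) :
    Submodule S (Matrix (Fin N) (Fin N) R) where
  carrier := {A | Above d A}
  add_mem' := Above.add
  zero_mem' := fun _ _ _ => rfl
  smul_mem' := fun s A hA i j h => by rw [Matrix.smul_apply, hA i j h, smul_zero]

end Corner

end PrincipalGroup

namespace PrincipalGroup

open PowerSeries

section FreeGroup

/-- The strictly upper triangular matrix recording the positions of `b` in a list of letters. -/
def letterMatrix {ι : Type*} {L : ℕ} (B : Fin L → ι) [DecidableEq ι] (b : ι) :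
    Matrix (Fin (L + 1)) (Fin (L + 1)) ℝ :=
  Matrix.of fun i j => if h : (j : ℕ) = i + 1 then if B ⟨i, by omega⟩ = b then 1 else 0 else 0

variable {ι : Type*} [DecidableEq ι] {L : ℕ} {B : Fin L → ι}

lemma letterMatrix_apply (b : ι) (i : Fin L) :
    letterMatrix B b i.castSucc i.succ = if B i = b then 1 else 0 := by
  simp [letterMatrix]

lemma letterMatrix_eq_zero (b : ι) {i j : Fin (L + 1)} (h : (j : ℕ) ≠ i + 1) :
    letterMatrix B b i j = 0 := by
  simp [letterMatrix, h]

lemma letterMatrix_sq (hB : ∀ i, (h : i + 1 < L) → B ⟨i, by omega⟩ ≠ B ⟨i + 1, h⟩) (b : ι) :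
    letterMatrix B b * letterMatrix B b = 0 := by
  ext i j
  rw [Matrix.mul_apply, Matrix.zero_apply]
  refine Finset.sum_eq_zero fun k _ => ?_
  by_contra hne
  obtain ⟨h1, h2⟩ := ne_zero_and_ne_zero_of_mul hne
  simp only [letterMatrix, Matrix.of_apply, ne_eq, dite_eq_right_iff, ite_eq_right_iff,
    one_ne_zero, imp_false, not_forall, not_not] at h1 h2
  obtain ⟨a1, a2⟩ := h1
  obtain ⟨b1, b2⟩ := h2
  refine hB i (by omega) ?_
  rw [a2, ← b2]
  congr 1
  simp [a1]

/-- The unit `1 + letterMatrix B b`. -/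
def letterUnit (hB : ∀ i, (h : i + 1 < L) → B ⟨i, by omega⟩ ≠ B ⟨i + 1, h⟩) (b : ι) :
    (Matrix (Fin (L + 1)) (Fin (L + 1)) ℝ)ˣ where
  val := 1 + letterMatrix B b
  inv := 1 - letterMatrix B b
  val_inv := by
    have := letterMatrix_sq hB b
    rw [mul_sub, add_mul, add_mul, this]; simp
  inv_val := by
    have := letterMatrix_sq hB b
    rw [mul_add, sub_mul, sub_mul, this]; simp

lemma letterUnit_zpow (hB : ∀ i, (h : i + 1 < L) → B ⟨i, by omega⟩ ≠ B ⟨i + 1, h⟩) (b : ι)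
    (k : ℤ) : ((letterUnit hB b ^ k : (Matrix (Fin (L + 1)) (Fin (L + 1)) ℝ)ˣ) :
      Matrix (Fin (L + 1)) (Fin (L + 1)) ℝ) = 1 + (k : ℝ) • letterMatrix B b := by
  have hs := letterMatrix_sq hB b
  induction k using Int.induction_on with
  | zero => simp
  | succ k ih =>
    rw [zpow_add_one, Units.val_mul, ih]
    change (1 + _) * (1 + letterMatrix B b) = _
    rw [mul_add, add_mul, add_mul, smul_mul_assoc, smul_mul_assoc, hs]
    push_cast
    simp only [mul_one, one_mul, smul_zero, add_zero, add_smul, one_smul]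
    abel
  | pred k ih =>
    rw [zpow_sub_one, Units.val_mul, ih]
    change (1 + _) * (1 - letterMatrix B b) = _
    rw [mul_sub, add_mul, add_mul, smul_mul_assoc, smul_mul_assoc, hs]
    push_cast
    simp only [mul_one, one_mul, smul_zero, add_zero, sub_smul, one_smul]
    abel

/-- A nontrivial element of a free group is detected by a unipotent representation. -/
lemma exists_unipotent_ne_one {ι : Type*} {u : FreeGroup ι} (hu : u ≠ 1) :
    ∃ (N : ℕ) (ρ : FreeGroup ι →* Matrix (Fin N) (Fin N) ℝ),
      (∀ g, Above 1 (ρ g - 1)) ∧ ρ u ≠ 1 := by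
  classical
  set w := Monoid.CoprodI.Word.equiv (freeGroupEquivCoprodI u) with hw
  have hwu : w.prod = freeGroupEquivCoprodI u := Monoid.CoprodI.Word.equiv.symm_apply_apply _
  set l := w.toList with hl
  have hl0 : 0 < l.length := by
    rw [List.length_pos_iff]
    intro h0
    apply hu
    rw [← map_eq_one_iff _ freeGroupEquivCoprodI.injective, ← hwu, Monoid.CoprodI.Word.prod,
      ← hl, h0]
    simp
  have hB : ∀ i, (h : i + 1 < l.length) → (fun i : Fin l.length => (l.get i).1) ⟨i, by omega⟩ ≠
      (fun i : Fin l.length => (l.get i).1) ⟨i + 1, h⟩ := fun i h =>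
    (List.isChain_iff_getElem.1 w.chain_ne) i h
  let f : ι → FreeGroup Unit →* (Matrix (Fin (l.length + 1)) (Fin (l.length + 1)) ℝ)ˣ :=
    fun b => FreeGroup.lift fun _ => letterUnit (B := fun i : Fin l.length => (l.get i).1) hB b
  have hf : ∀ b h, ∃ k : ℤ, ((f b h : (Matrix (Fin (l.length + 1)) (Fin (l.length + 1)) ℝ)ˣ) :
      Matrix (Fin (l.length + 1)) (Fin (l.length + 1)) ℝ) =
        1 + (k : ℝ) • letterMatrix (fun i : Fin l.length => (l.get i).1) b ∧
      (h ≠ 1 → k ≠ 0) := by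
    intro b h
    obtain ⟨k, rfl⟩ := FreeGroup.freeGroupUnitEquivInt.symm.surjective h
    refine ⟨k, ?_, ?_⟩
    · change ((f b (FreeGroup.of () ^ k) :
        (Matrix (Fin (l.length + 1)) (Fin (l.length + 1)) ℝ)ˣ) :
        Matrix (Fin (l.length + 1)) (Fin (l.length + 1)) ℝ) = _
      rw [map_zpow, FreeGroup.lift_apply_of, letterUnit_zpow]
    · rintro h rfl
      exact h (zpow_zero _)
  let P := (Units.coeHom _).comp ((Monoid.CoprodI.lift f).comp freeGroupEquivCoprodI.toMonoidHom)
  refine ⟨l.length + 1, P, fun g => ?_, fun h1 => ?_⟩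
  · have hP : ∀ b, (Monoid.CoprodI.lift f) (freeGroupEquivCoprodI (FreeGroup.of b)) =
        letterUnit (B := fun i : Fin l.length => (l.get i).1) hB b := by
      intro b
      have h1 : freeGroupEquivCoprodI (FreeGroup.of b) =
          Monoid.CoprodI.of (M := fun _ : ι => FreeGroup Unit) (i := b) (FreeGroup.of ()) := by
        simp [freeGroupEquivCoprodI]
      rw [h1, Monoid.CoprodI.lift_of, FreeGroup.lift_apply_of]
    have hX : ∀ b, Above 1 (letterMatrix (fun i : Fin l.length => (l.get i).1) b) :=
      fun b i j hij => letterMatrix_eq_zero _ (by omega)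
    induction g using FreeGroup.induction_on with
    | C1 => rw [map_one, sub_self]; exact fun _ _ _ => rfl
    | of b =>
      have : P (FreeGroup.of b) = 1 + letterMatrix (fun i : Fin l.length => (l.get i).1) b :=
        congrArg Units.val (hP b)
      change Above 1 (P (FreeGroup.of b) - 1)
      rw [this, add_sub_cancel_left]
      exact hX b
    | inv_of b hb =>
      have : P (FreeGroup.of b)⁻¹ = 1 - letterMatrix (fun i : Fin l.length => (l.get i).1) b := by
        have h := hP b
        change ((Monoid.CoprodI.lift f (freeGroupEquivCoprodI (FreeGroup.of b)⁻¹) :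
          (Matrix (Fin (l.length + 1)) (Fin (l.length + 1)) ℝ)ˣ) :
          Matrix (Fin (l.length + 1)) (Fin (l.length + 1)) ℝ) = _
        rw [map_inv, map_inv, h]
        rfl
      change Above 1 (P (FreeGroup.of b)⁻¹ - 1)
      rw [this, sub_sub_cancel_left]
      have := Above.sub (A := 0) (fun _ _ _ => rfl) (hX b)
      rwa [zero_sub] at this
    | mul a b ha hb =>
      have : P (a * b) - 1 = (P a - 1) + (P b - 1) + (P a - 1) * (P b - 1) := by
        rw [map_mul]; noncomm_ring
      rw [this]
      exact (ha.add hb).add ((ha.mul hb).mono (by omega))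
  · choose k hk hk0 using hf
    have h2 : P u = (List.ofFn fun i : Fin l.length =>
        ((f (l.get i).1 (l.get i).2 : (Matrix (Fin (l.length + 1)) (Fin (l.length + 1)) ℝ)ˣ) :
      Matrix (Fin (l.length + 1)) (Fin (l.length + 1)) ℝ)).prod := by
      change ((Monoid.CoprodI.lift f (freeGroupEquivCoprodI u) :
        (Matrix (Fin (l.length + 1)) (Fin (l.length + 1)) ℝ)ˣ) :
        Matrix (Fin (l.length + 1)) (Fin (l.length + 1)) ℝ) = _
      rw [← hwu, Monoid.CoprodI.Word.prod, map_list_prod]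
      rw [← Units.coeHom_apply, map_list_prod]
      congr 1
      rw [List.map_map, List.map_map, ← hl]
      refine List.ext_get (by simp) fun i h1 h2 => ?_
      simp
    rw [h2] at h1
    have h3 := bidiagonal_prod_apply (N := l.length + 1) (p := 0) (A := fun i : Fin l.length =>
        ((f (l.get i).1 (l.get i).2 : (Matrix (Fin (l.length + 1)) (Fin (l.length + 1)) ℝ)ˣ) :
      Matrix (Fin (l.length + 1)) (Fin (l.length + 1)) ℝ)) (fun i a b hab => by
        rw [hk, Matrix.add_apply, Matrix.smul_apply, letterMatrix_eq_zero _ (by omega),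
          Matrix.one_apply_ne (by rintro rfl; omega)]
        simp) (by omega)
    rw [h1, Matrix.one_apply_ne (by simp [Fin.ext_iff]; omega)] at h3
    obtain ⟨i, -, hi⟩ := Finset.prod_eq_zero_iff.1 h3.symm
    have e1 : (⟨0 + i, by omega⟩ : Fin (l.length + 1)) = i.castSucc := Fin.ext (by simp)
    have e2 : (⟨0 + i + 1, by omega⟩ : Fin (l.length + 1)) = i.succ := Fin.ext (by simp)
    rw [hk, Matrix.add_apply, Matrix.smul_apply, e1, e2, letterMatrix_apply, if_pos rfl,
      Matrix.one_apply_ne (by simp [Fin.ext_iff])] at hi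
    exact hk0 _ _ (w.ne_one _ (List.get_mem _ _)) (by simpa using hi)

end FreeGroup

end PrincipalGroup

namespace PrincipalGroup

open PowerSeries

section Independent

lemma linearIndependent_mul {R α β ι ι' : Type*} [CommRing R] {f : ι → α → R} {g : ι' → β → R}
    (hf : LinearIndependent R f) (hg : LinearIndependent R g) :
    LinearIndependent R fun (p : ι × ι') (q : α × β) => f p.1 q.1 * g p.2 q.2 := by
  classical
  rw [linearIndependent_iff'] at *
  intro s c h
  have key : ∀ b, ∀ i ∈ s.image Prod.fst,
      ∑ j ∈ s.image Prod.snd, (if (i, j) ∈ s then c (i, j) else 0) * g j b = 0 := by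
    intro b
    refine hf _ _ ?_
    ext a
    have h1 := congrFun h (a, b)
    simp only [Finset.sum_apply, Pi.smul_apply, smul_eq_mul, Pi.zero_apply] at h1 ⊢
    refine Eq.trans ?_ h1
    simp_rw [Finset.sum_mul]
    rw [← Finset.sum_product', ← Finset.sum_subset (s₁ := s) (fun p hp => Finset.mem_product.2
      ⟨Finset.mem_image_of_mem _ hp, Finset.mem_image_of_mem _ hp⟩)
      (fun p _ hp => by rw [if_neg hp, zero_mul, zero_mul])]
    refine Finset.sum_congr rfl fun p hp => ?_
    rw [if_pos hp]
    ring
  intro p hp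
  have h2 := hg (s.image Prod.snd) (fun j => if (p.1, j) ∈ s then c (p.1, j) else 0) (by
    ext b
    have := key b p.1 (Finset.mem_image_of_mem _ hp)
    simpa only [Finset.sum_apply, Pi.smul_apply, smul_eq_mul, Pi.zero_apply] using this) p.2
    (Finset.mem_image_of_mem _ hp)
  simpa [hp] using h2

lemma linearIndependent_pi_prod {R α ι : Type*} [CommRing R] [Nontrivial R] {f : ι → α → R}
    (hf : LinearIndependent R f) (n : ℕ) :
    LinearIndependent R fun (l : Fin n → ι) (κ : Fin n → α) => ∏ i, f (l i) (κ i) := by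
  induction n with
  | zero =>
    rw [linearIndependent_iff']
    intro s c h l hl
    have h1 := congrFun h Fin.elim0
    have : s = {l} := by ext a; simp [Subsingleton.elim a l, hl]
    simpa [this] using h1
  | succ n ih =>
    have h1 := linearIndependent_mul hf ih
    refine LinearIndependent.of_comp (LinearMap.funLeft R R (Fin.consEquiv fun _ => α)) ?_
    rw [← linearIndependent_equiv (Fin.consEquiv fun _ => ι)]
    convert h1 using 1
    ext p q
    simp [LinearMap.funLeft, Fin.prod_univ_succ, Fin.consEquiv]

lemma linearIndependent_rescale {ι α : Type*} {v : ι → α → ℝ⟦X⟧} (hv : LinearIndependent ℝ v) :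
    LinearIndependent ℝ⟦X⟧ fun b (κ : ℝ × α) => rescale κ.1 (v b κ.2) := by
  rw [linearIndependent_iff'] at *
  intro s C h b hb
  ext q
  refine hv s (fun b => coeff q (C b)) ?_ b hb
  ext J p
  let P : Polynomial ℝ := ∑ z ∈ Finset.HasAntidiagonal.antidiagonal (p + q),
    Polynomial.monomial z.1 (∑ b ∈ s, coeff z.1 (v b J) * coeff z.2 (C b))
  have hP : P = 0 := by
    refine Polynomial.funext fun t => ?_
    have h1 := congrArg (coeff (p + q)) (congrFun h (t, J))
    simp only [Finset.sum_apply, Pi.smul_apply, smul_eq_mul, map_sum, Pi.zero_apply, map_zero] at h1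
    rw [Polynomial.eval_zero, ← h1]
    simp only [P, Polynomial.eval_finsetSum, Polynomial.eval_monomial, mul_comm (C _),
      coeff_mul, coeff_rescale]
    rw [Finset.sum_comm]
    refine Finset.sum_congr rfl fun z _ => ?_
    rw [Finset.sum_mul]
    exact Finset.sum_congr rfl fun b _ => by ring
  have h2 := congrArg (fun P => P.coeff p) hP
  simp only [P, Polynomial.finsetSum_coeff, Polynomial.coeff_monomial, Polynomial.coeff_zero] at h2
  rw [Finset.sum_eq_single (p, q)] at h2
  · simp only [if_true] at h2
    simp only [Finset.sum_apply, Pi.smul_apply, map_sum, Pi.zero_apply, map_zero, coeff_smul]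
    rw [← h2]
    exact Finset.sum_congr rfl fun b _ => by simp [mul_comm]
  · rintro ⟨a, b⟩ h3 h4
    rw [if_neg]
    intro (h5 : a = p)
    subst h5
    rw [Finset.HasAntidiagonal.mem_antidiagonal] at h3
    exact h4 (by simp at h3 ⊢; omega)
  · simp

end Independent

section Residual

/-- The filtration of upper triangular matrices over `ℝ⟦X⟧` in which `X` and the
superdiagonal have degree one. -/
def weightSubmodule (N d : ℕ) : Submodule ℝ (Matrix (Fin N) (Fin N) ℝ⟦X⟧) where
  carrier := {A | Above 0 A ∧ ∀ i j : Fin N, (X : ℝ⟦X⟧) ^ (d + i - j) ∣ A i j}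
  add_mem' ha hb := ⟨ha.1.add hb.1, fun i j => dvd_add (ha.2 i j) (hb.2 i j)⟩
  zero_mem' := ⟨fun _ _ _ => rfl, fun _ _ => dvd_zero _⟩
  smul_mem' s A hA := ⟨fun i j h => by rw [Matrix.smul_apply, hA.1 i j h, smul_zero], fun i j => by
    rw [Matrix.smul_apply]; exact (hA.2 i j).trans ⟨C s, by rw [mul_comm, ← smul_eq_C_mul]⟩⟩

lemma mul_mem_weightSubmodule {N a b : ℕ} {A B : Matrix (Fin N) (Fin N) ℝ⟦X⟧}
    (hA : A ∈ weightSubmodule N a) (hB : B ∈ weightSubmodule N b) :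
    A * B ∈ weightSubmodule N (a + b) := by
  refine ⟨hA.1.mul hB.1, fun i j => ?_⟩
  rw [Matrix.mul_apply]
  refine Finset.dvd_sum fun k _ => ?_
  by_cases h1 : (k : ℕ) < i
  · rw [hA.1 i k (by omega), zero_mul]; exact dvd_zero _
  by_cases h2 : (j : ℕ) < k
  · rw [hB.1 k j (by omega), mul_zero]; exact dvd_zero _
  refine (pow_dvd_pow X ?_).trans ((pow_add X (a + i - k) (b + k - j)).dvd.trans
    (mul_dvd_mul (hA.2 i k) (hB.2 k j)))
  omega

/-- Being congruent to one modulo every power of the augmentation ideal. -/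
def IsResidual {Γ : Type*} [Group Γ] (g : Γ) : Prop :=
  ∀ n, 1 ≤ n → MonoidAlgebra.of ℝ Γ g - 1 ∈ aug Γ ^ n

namespace IsRootTower

variable {Γ V : Type} [Group Γ] [AddCommGroup V] [Module ℚ V] {x : ℕ → Γ} {δ M : ℕ} {π : Γ → V}

lemma rep_eq_one_of_isResidual {N : ℕ} {ρ : Γ →* Matrix (Fin N) (Fin N) ℝ⟦X⟧}
    (h1 : ∀ g, Above 0 (ρ g)) (h2 : ∀ g i, constantCoeff (ρ g i i) = 1) {g : Γ}
    (hg : IsResidual g) : ρ g = 1 := by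
  have key : ∀ n, 1 ≤ n → ρ g - 1 ∈ weightSubmodule N n := by
    intro n hn
    have := lift_mem_of_mem_aug_pow ρ (weightSubmodule N)
      (fun g => ⟨(h1 g).sub Above.one, fun i j => ?_⟩)
      (fun n a ha b hb => mul_mem_weightSubmodule ha hb) hn (hg n hn)
    · simpa using this
    · rcases lt_trichotomy (i : ℕ) j with h | h | h
      · rw [Nat.sub_eq_zero_of_le (by omega), pow_zero]; exact one_dvd _
      · obtain rfl : i = j := Fin.ext h
        rw [Nat.add_sub_cancel, pow_one, X_dvd_iff, Matrix.sub_apply, map_sub, h2,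
          Matrix.one_apply_eq, map_one, sub_self]
      · rw [(h1 g).sub Above.one i j (by omega)]; exact dvd_zero _
  rw [← sub_eq_zero]
  ext i j q
  have := (key (q + 1 + j) (by omega)).2 i j
  rw [X_pow_dvd_iff] at this
  simpa using this q (by omega)

lemma exists_mem_closure (hT : IsRootTower x δ M π) (g : Γ) :
    ∃ k, g ∈ Subgroup.closure (x '' Set.Iio k) := by
  have hg : g ∈ Subgroup.closure (Set.range x) := by rw [hT.closure_range]; trivial
  have hmono : Monotone fun k : ℕ => Subgroup.closure (x '' Set.Iio k) := fun a b hab =>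
    Subgroup.closure_mono (Set.image_mono (Set.Iio_subset_Iio hab))
  induction hg using Subgroup.closure_induction with
  | mem g hg =>
    obtain ⟨k, rfl⟩ := hg
    exact ⟨k + 1, Subgroup.subset_closure ⟨k, by simp, rfl⟩⟩
  | one => exact ⟨0, one_mem _⟩
  | mul a b _ _ ha hb =>
    obtain ⟨k, hk⟩ := ha
    obtain ⟨l, hl⟩ := hb
    exact ⟨max k l, mul_mem (hmono (le_max_left k l) hk) (hmono (le_max_right k l) hl)⟩
  | inv a _ ha =>
    obtain ⟨k, hk⟩ := ha
    exact ⟨k, inv_mem hk⟩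

/-- The base group is residually (torsion-free nilpotent), in terms of its real group algebra. -/
lemma eq_one_of_isResidual [FiniteDimensional ℚ V] (hT : IsRootTower x δ M π) {g : Γ}
    (hg : IsResidual g) : g = 1 := by
  obtain ⟨c, hc⟩ := exists_linearMap_ker (⊥ : Submodule ℚ V)
  have hc' : ∀ v, c v = 0 → v = 0 := fun v h => by simpa using (hc v).1 h
  have hrep : ∀ n (σ : ℕ → ℝ) (J : ℕ → ℕ) (ρ : Γ →* Matrix (Fin (n + 1)) (Fin (n + 1)) ℝ⟦X⟧),
      ((∀ g, Above 0 (ρ g)) ∧ (∀ g (i : Fin (n + 1)), ρ g i i = ex (σ i * c (π g))) ∧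
      ∀ j < δ, ∀ i : Fin n, ρ (x j) i.castSucc i.succ =
        if j = J i then ex (σ (i + 1) * c (π (x j))) else 0) → ρ g = 1 :=
    fun n σ J ρ h => rep_eq_one_of_isResidual h.1 (fun g i => by rw [h.2.1, constantCoeff_ex]) hg
  have hπ : π g = 0 := by
    obtain ⟨ρ, hρ⟩ := hT.exists_rep c 0 (fun _ => 1) (fun _ => 0)
    have h1 := hρ.2.1 g 0
    rw [hrep 0 (fun _ => 1) (fun _ => 0) ρ hρ, Matrix.one_apply_eq, one_mul, ← ex_zero] at h1
    exact hc' _ (ex_injective h1).symm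
  obtain ⟨k, hk⟩ := hT.exists_mem_closure g
  obtain ⟨ι, β, hβ, hli⟩ := hT.hasIndependentGenerators c hc' k
  have hβ0 : ∀ b, π (β b) = 0 := fun b => (hT.mem_kerStage.1 (show β b ∈ hT.kerStage k by
    rw [← hβ]; exact Subgroup.subset_closure ⟨b, rfl⟩)).2
  have hg' : g ∈ Subgroup.closure (Set.range β) := by rw [hβ]; exact hT.mem_kerStage.2 ⟨hk, hπ⟩
  rw [← FreeGroup.range_lift_eq_closure] at hg'
  obtain ⟨u, rfl⟩ := hg'
  have hβF : Subgroup.closure (Set.range (FreeGroup.of : ι → _)) = ⊤ :=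
    FreeGroup.closure_range_of ι
  have hr0 : ∀ w, π (FreeGroup.lift β w) = 0 := by
    intro w
    induction w using FreeGroup.induction_on with
    | C1 => rw [map_one, hT.isLog.map_one]
    | of b => rw [FreeGroup.lift_apply_of, hβ0]
    | inv_of b hb => rw [map_inv, hT.isLog.map_inv, hb, neg_zero]
    | mul a b ha hb => rw [map_mul, hT.isLog, ha, hb, add_zero]
  have hu : IsResidual u := by
    intro n hn
    induction n, hn using Nat.le_induction with
    | base => rw [pow_one]; exact of_sub_one_mem_aug u
    | succ n hn ih =>
      obtain ⟨z, hz, z', hz', hzz⟩ := Submodule.mem_sup.1 (aug_pow_le_of_closure hβF hn ih)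
      obtain ⟨a, rfl⟩ := (Finsupp.mem_span_range_iff_exists_finsupp).1 hz
      suffices a = 0 by
        rw [this, Finsupp.sum_zero_index, zero_add] at hzz
        rwa [← hzz]
      have hind := (linearIndependent_pi_prod (linearIndependent_rescale hli) n)
      have hind' : LinearIndependent ℝ fun (l : Fin n → ι) (κ : Fin n → ℝ × Fin δ) =>
          ∏ i, rescale (κ i).1 (hT.phi c (κ i).2 (β (l i))) := hind.restrict_scalars
            (fun r s h => by simpa using congrArg constantCoeff h)
      rw [linearIndependent_iff] at hind'
      refine hind' a ?_
      ext1 κ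
      rw [Finsupp.linearCombination_apply, Finsupp.sum, Finset.sum_apply, Pi.zero_apply]
      let σ : ℕ → ℝ := fun i => -∑ j ∈ Finset.range i, if h : j < n then (κ ⟨j, h⟩).1 else 0
      let J : ℕ → ℕ := fun j => if h : j < n then (κ ⟨j, h⟩).2 else 0
      obtain ⟨ρ, hρ⟩ := hT.exists_rep c n σ J
      have h1 := hrep _ _ _ ρ hρ
      have hab : ∀ w, Above 1 (ρ (FreeGroup.lift β w) - 1) := by
        intro w i j hij
        rcases Nat.lt_or_ge j i with h | h
        · exact ((hρ.1 _).sub Above.one) i j (by omega)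
        · obtain rfl : i = j := Fin.ext (by omega)
          rw [Matrix.sub_apply, hρ.2.1, hr0, map_zero, mul_zero, ex_zero, Matrix.one_apply_eq,
            sub_self]
      let Φ := MonoidAlgebra.lift ℝ (Matrix (Fin (n + 1)) (Fin (n + 1)) ℝ⟦X⟧) _
        (ρ.comp (FreeGroup.lift β))
      have h2 : Φ z' ∈ aboveSubmodule ℝ (n + 1) (n + 1) :=
        lift_mem_of_mem_aug_pow (ρ.comp (FreeGroup.lift β)) (aboveSubmodule ℝ (n + 1)) hab
          (fun m a ha b hb => Above.mul ha hb) (by omega) hz'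
      have h3 := congrArg (fun z => Φ z 0 (Fin.last n)) hzz
      have h4 : Φ (MonoidAlgebra.of ℝ (FreeGroup ι) u - 1) = 0 := by
        rw [map_sub, map_one, MonoidAlgebra.lift_of, MonoidHom.comp_apply, h1, sub_self]
      simp only [h4, map_add, Matrix.add_apply, Matrix.zero_apply] at h3
      rw [h2 0 (Fin.last n) (by simp), add_zero, Finsupp.sum, map_sum, Matrix.sum_apply] at h3
      rw [← h3]
      refine Finset.sum_congr rfl fun l _ => ?_
      rw [map_smul, Pi.smul_apply, Matrix.smul_apply, map_list_prod, List.map_ofFn]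
      congr 1
      have h5 := ofFn_prod_apply (p := 0) (N := n + 1)
        (A := fun i => ρ (FreeGroup.lift β (FreeGroup.of (l i))) - 1) (fun i => hab _) (by omega)
      have e1 : (⟨0 + n, by omega⟩ : Fin (n + 1)) = Fin.last n := Fin.ext (by simp)
      rw [e1] at h5
      have e2 : (⇑Φ ∘ fun i => MonoidAlgebra.of ℝ (FreeGroup ι) (FreeGroup.of (l i)) - 1) =
          fun i => ρ (FreeGroup.lift β (FreeGroup.of (l i))) - 1 := by
        ext1 i
        simp only [Function.comp_apply, map_sub, map_one, Φ, MonoidAlgebra.lift_of,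
          MonoidHom.comp_apply]
      rw [e2]
      refine Eq.trans ?_ h5.symm
      refine Finset.prod_congr rfl fun i _ => ?_
      have e3 : (⟨0 + i, by omega⟩ : Fin (n + 1)) = i.castSucc := Fin.ext (by simp)
      have e4 : (⟨0 + i + 1, by omega⟩ : Fin (n + 1)) = i.succ := Fin.ext (by simp)
      rw [e3, e4, Matrix.sub_apply, Matrix.one_apply_ne (by simp [Fin.ext_iff]), sub_zero,
        hT.rep_superdiagonal c hρ.1 hρ.2.1 hρ.2.2 i (hr0 _), FreeGroup.lift_apply_of]
      have e5 : σ i - σ (i + 1) = (κ i).1 := by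
        simp [σ, Finset.sum_range_succ]
      have e6 : J i = (κ i).2 := by simp [J]
      rw [e5, e6]
  by_contra hne
  have hne' : u ≠ 1 := fun h => hne (by rw [h, map_one])
  obtain ⟨N, ρ, h1, h2⟩ := exists_unipotent_ne_one hne'
  refine h2 ?_
  have h3 := lift_mem_of_mem_aug_pow ρ (aboveSubmodule ℝ N) h1
    (fun n a ha b hb => Above.mul ha hb) (Nat.le_add_left 1 N) (hu (N + 1) (by omega))
  rw [map_sub, map_one, MonoidAlgebra.lift_of] at h3
  rw [← sub_eq_zero]
  ext i j
  exact h3 i j (by omega)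

end IsRootTower

end Residual

end PrincipalGroup

namespace PrincipalGroup

section VectorOrder

/-- Real vector spaces carry total cones. -/
lemma exists_total_cone (E : Type*) [AddCommGroup E] [Module ℝ E] :
    ∃ P : Set E, 0 ∉ P ∧ (∀ a ∈ P, ∀ b ∈ P, a + b ∈ P) ∧ (∀ a, a ≠ 0 → a ∈ P ∨ -a ∈ P) ∧
      ∀ r : ℝ, 0 < r → ∀ a ∈ P, r • a ∈ P := by
  classical
  let b := Module.Basis.ofVectorSpace ℝ E
  let _ : LinearOrder (Module.Basis.ofVectorSpaceIndex ℝ E) := linearOrderOfSTO WellOrderingRel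
  refine ⟨{a | ∃ j, (∀ i < j, b.repr a i = 0) ∧ 0 < b.repr a j}, ?_, ?_, ?_, ?_⟩
  · rintro ⟨j, -, h⟩
    simp at h
  · rintro u ⟨j, hj, hj'⟩ v ⟨k, hk, hk'⟩
    rcases lt_trichotomy j k with h | rfl | h
    · refine ⟨j, fun i hi => ?_, ?_⟩
      · simp [hj i hi, hk i (hi.trans h)]
      · simpa [hk j h] using hj'
    · refine ⟨j, fun i hi => ?_, ?_⟩
      · simp [hj i hi, hk i hi]
      · simpa using add_pos hj' hk'
    · refine ⟨k, fun i hi => ?_, ?_⟩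
      · simp [hk i hi, hj i (hi.trans h)]
      · simpa [hj k h] using hk'
  · intro u hu
    have hne : (b.repr u).support.Nonempty := by
      rw [Finsupp.support_nonempty_iff]
      simpa using hu
    set j := (b.repr u).support.min' hne with hj
    have h1 : b.repr u j ≠ 0 := Finsupp.mem_support_iff.1 (Finset.min'_mem _ hne)
    have h2 : ∀ i < j, b.repr u i = 0 := fun i hi => by
      by_contra h
      exact absurd (Finset.min'_le _ i (Finsupp.mem_support_iff.2 h)) (not_le.2 hi)
    rcases lt_or_gt_of_ne h1 with h | h
    · exact Or.inr ⟨j, fun i hi => by simp [h2 i hi], by simpa using h⟩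
    · exact Or.inl ⟨j, h2, h⟩
  · rintro r hr u ⟨j, hj, hj'⟩
    exact ⟨j, fun i hi => by simp [hj i hi], by simpa using mul_pos hr hj'⟩

end VectorOrder

section Step

variable {A : Type*} [Ring A] [Algebra ℝ A]

/-- `T` acts on `H' / H` as multiplication by a positive real number. -/
def Step (T : A →ₐ[ℝ] A) (H H' : Submodule ℝ A) : Prop :=
  H ≤ H' ∧ ∃ μ : ℝ, 0 < μ ∧ ∀ a ∈ H', T a - μ • a ∈ H

variable {T : A →ₐ[ℝ] A} {H H' U W : Submodule ℝ A}

lemma Step.map_mem_of_mem (h : Step T H H') {a : A} (ha : a ∈ H) : T a ∈ H := by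
  obtain ⟨h1, μ, -, h2⟩ := h
  have := add_mem (h2 a (h1 ha)) (H.smul_mem μ ha)
  simpa using this

lemma le_of_chain (h : Relation.ReflTransGen (Step T) H H') : H ≤ H' := by
  induction h with
  | refl => exact le_rfl
  | tail _ h ih => exact ih.trans h.1

/-- A chain of steps yields a cone inducing a `T`-invariant order on the quotient. -/
lemma exists_cone_of_chain (h : Relation.ReflTransGen (Step T) H H') :
    ∃ P : Set A, (∀ a ∈ P, a ∈ H' ∧ a ∉ H) ∧ (∀ a ∈ P, ∀ b ∈ P, a + b ∈ P) ∧
      (∀ a ∈ P, ∀ b ∈ H, a + b ∈ P) ∧ (∀ a ∈ H', a ∉ H → a ∈ P ∨ -a ∈ P) ∧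
      ∀ a ∈ P, T a ∈ P := by
  induction h with
  | refl => exact ⟨∅, by simp, by simp, by simp, fun a h h' => absurd h h', by simp⟩
  | @tail K K' hc hs ih =>
    obtain ⟨P, p1, p2, p3, p4, p5⟩ := ih
    obtain ⟨hle, μ, hμ, hT⟩ := hs
    have hHK := le_of_chain hc
    obtain ⟨Q, q1, q2, q3, q4⟩ := exists_total_cone (A ⧸ K)
    have hq : ∀ a, a ∈ K ↔ K.mkQ a = 0 := fun a => by simp
    refine ⟨P ∪ {a | a ∈ K' ∧ K.mkQ a ∈ Q}, ?_, ?_, ?_, ?_, ?_⟩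
    · rintro a (ha | ⟨ha, ha'⟩)
      · exact ⟨hle (p1 a ha).1, (p1 a ha).2⟩
      · refine ⟨ha, fun h => q1 ?_⟩
        rwa [(hq a).1 (hHK h)] at ha'
    · rintro a (ha | ⟨ha, ha'⟩) b (hb | ⟨hb, hb'⟩)
      · exact Or.inl (p2 a ha b hb)
      · refine Or.inr ⟨add_mem (hle (p1 a ha).1) hb, ?_⟩
        rwa [map_add, (hq a).1 (p1 a ha).1, zero_add]
      · refine Or.inr ⟨add_mem ha (hle (p1 b hb).1), ?_⟩
        rwa [map_add, (hq b).1 (p1 b hb).1, add_zero]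
      · exact Or.inr ⟨add_mem ha hb, by rw [map_add]; exact q2 _ ha' _ hb'⟩
    · rintro a (ha | ⟨ha, ha'⟩) b hb
      · exact Or.inl (p3 a ha b hb)
      · refine Or.inr ⟨add_mem ha (hle (hHK hb)), ?_⟩
        rwa [map_add, (hq b).1 (hHK hb), add_zero]
    · intro a ha ha'
      by_cases hK : a ∈ K
      · exact (p4 a hK ha').imp Or.inl Or.inl
      · refine (q3 (K.mkQ a) (fun h => hK ((hq a).2 h))).imp (fun h => Or.inr ⟨ha, h⟩)
          (fun h => Or.inr ⟨neg_mem ha, by rwa [map_neg]⟩)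
    · rintro a (ha | ⟨ha, ha'⟩)
      · exact Or.inl (p5 a ha)
      · have h1 := hT a ha
        have h2 : T a = (T a - μ • a) + μ • a := by abel
        refine Or.inr ⟨?_, ?_⟩
        · rw [h2]; exact add_mem (hle h1) (K'.smul_mem μ ha)
        · rw [h2, map_add, (hq _).1 h1, zero_add, map_smul]
          exact q4 μ hμ _ ha'

lemma chain_mul_of_step (hs : Step T H H') (hU : Relation.ReflTransGen (Step T) U W)
    (hW : ∀ a ∈ W, T a ∈ W) : Relation.ReflTransGen (Step T) (H' * U ⊔ H * W) (H' * W) := by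
  induction hU using Relation.ReflTransGen.head_induction_on with
  | refl =>
    rw [sup_eq_left.2 (mul_le_mul' hs.1 le_rfl)]
  | @head U U' h h' ih =>
    refine Relation.ReflTransGen.head ?_ ih
    have hH := fun a => hs.map_mem_of_mem (a := a)
    have hUW := le_of_chain h'
    obtain ⟨h1, μ, hμ, h2⟩ := hs
    obtain ⟨h3, ν, hν, h4⟩ := h
    refine ⟨sup_le_sup_right (mul_le_mul' le_rfl h3) _, μ * ν, mul_pos hμ hν, ?_⟩
    let F : A →ₗ[ℝ] A := T.toLinearMap - (μ * ν) • LinearMap.id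
    have hF : ∀ a, F a = T a - (μ * ν) • a := fun a => rfl
    suffices H' * U' ⊔ H * W ≤ (H' * U ⊔ H * W).comap F from fun a ha => this ha
    refine sup_le ?_ ?_
    · rw [Submodule.mul_le]
      intro a ha b hb
      rw [Submodule.mem_comap, hF]
      have e : T (a * b) - (μ * ν) • (a * b) =
          μ • (a * (T b - ν • b)) + (T a - μ • a) * T b := by
        rw [map_mul, mul_sub, sub_mul, smul_sub, mul_smul_comm, smul_mul_assoc, smul_smul]
        abel
      rw [e]
      have hb' : T b ∈ W := hW b (hUW hb)
      exact add_mem (Submodule.mem_sup_left (Submodule.smul_mem _ _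
        (Submodule.mul_mem_mul ha (h4 b hb))))
        (Submodule.mem_sup_right (Submodule.mul_mem_mul (h2 a ha) hb'))
    · rw [Submodule.mul_le]
      intro a ha b hb
      rw [Submodule.mem_comap, hF, map_mul]
      exact Submodule.mem_sup_right (sub_mem (Submodule.mul_mem_mul (hH a ha) (hW b hb))
        (Submodule.smul_mem _ _ (Submodule.mul_mem_mul ha hb)))

lemma chain_mul (hH : Relation.ReflTransGen (Step T) H H')
    (hU : Relation.ReflTransGen (Step T) U W) (hW : ∀ a ∈ W, T a ∈ W) (hle : H' * U ≤ H * W) :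
    Relation.ReflTransGen (Step T) (H * W) (H' * W) := by
  induction hH using Relation.ReflTransGen.head_induction_on with
  | refl => exact .refl
  | @head H K h h' ih =>
    have h1 : K * U ≤ H * W := (mul_le_mul' (le_of_chain h') le_rfl).trans hle
    have := chain_mul_of_step h hU hW
    rw [sup_eq_right.2 h1] at this
    exact this.trans (ih (hle.trans (mul_le_mul' h.1 le_rfl)))

end Step

section AugOrder

variable {Γ : Type*} [Group Γ] (τ : Γ →* Γ)

/-- The endomorphism of the real group algebra induced by an endomorphism of the group. -/
noncomputable def algMap : MonoidAlgebra ℝ Γ →ₐ[ℝ] MonoidAlgebra ℝ Γ :=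
  MonoidAlgebra.lift ℝ _ Γ ((MonoidAlgebra.of ℝ Γ).comp τ)

lemma algMap_of (g : Γ) : algMap τ (MonoidAlgebra.of ℝ Γ g) = MonoidAlgebra.of ℝ Γ (τ g) := by
  rw [algMap, MonoidAlgebra.lift_of]; rfl

lemma aug_mul_aug_le : aug Γ * aug Γ ≤ aug Γ := by
  conv_lhs => rw [aug]
  rw [Submodule.span_mul_span, Submodule.span_le]
  rintro _ ⟨_, ⟨g, rfl⟩, _, ⟨h, rfl⟩, rfl⟩
  have : (MonoidAlgebra.of ℝ Γ g - 1) * (MonoidAlgebra.of ℝ Γ h - 1) =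
      (MonoidAlgebra.of ℝ Γ (g * h) - 1) - (MonoidAlgebra.of ℝ Γ g - 1) -
        (MonoidAlgebra.of ℝ Γ h - 1) := by
    rw [map_mul]; noncomm_ring
  simp only [this]
  exact sub_mem (sub_mem (of_sub_one_mem_aug _) (of_sub_one_mem_aug _)) (of_sub_one_mem_aug _)

lemma aug_pow_le {m n : ℕ} (hm : 1 ≤ m) (h : m ≤ n) : aug Γ ^ n ≤ aug Γ ^ m := by
  induction n, h using Nat.le_induction with
  | base => exact le_rfl
  | succ n hn ih =>
    refine le_trans ?_ ih
    obtain ⟨k, rfl⟩ : ∃ k, n = k + 1 := ⟨n - 1, by omega⟩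
    rw [pow_succ, pow_succ, mul_assoc]
    exact mul_le_mul' le_rfl aug_mul_aug_le

lemma algMap_mem_aug_pow {n : ℕ} (hn : 1 ≤ n) {z : MonoidAlgebra ℝ Γ} (hz : z ∈ aug Γ ^ n) :
    algMap τ z ∈ aug Γ ^ n :=
  lift_mem_of_mem_aug_pow _ (fun n => aug Γ ^ n)
    (fun g => by rw [pow_one]; exact of_sub_one_mem_aug (τ g))
    (fun n a ha b hb => by rw [pow_one] at hb; rw [pow_succ]; exact Submodule.mul_mem_mul ha hb)
    hn hz

lemma aug_pow_chain (h : Relation.ReflTransGen (Step (algMap τ)) (aug Γ ^ 2) (aug Γ)) {n : ℕ}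
    (hn : 1 ≤ n) : Relation.ReflTransGen (Step (algMap τ)) (aug Γ ^ (n + 1)) (aug Γ ^ n) := by
  induction n, hn using Nat.le_induction with
  | base => simpa using h
  | succ n hn ih =>
    have := chain_mul h ih (fun a ha => algMap_mem_aug_pow τ hn ha)
      (le_of_eq (by rw [← pow_succ', ← pow_add]; congr 1; omega))
    rw [← pow_succ', ← pow_add] at this
    convert this using 2
    omega

/-- If `τ` acts on the abelianisation through a chain of positive eigenvalues, a residual group
has a `τ`-invariant bi-order. -/
lemma exists_positive_cone (hres : ∀ g : Γ, IsResidual g → g = 1)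
    (h : Relation.ReflTransGen (Step (algMap τ)) (aug Γ ^ 2) (aug Γ)) :
    ∃ P : Set Γ, 1 ∉ P ∧ (∀ a ∈ P, ∀ b ∈ P, a * b ∈ P) ∧ (∀ a, a ≠ 1 → a ∈ P ∨ a⁻¹ ∈ P) ∧
      (∀ a ∈ P, ∀ b, b * a * b⁻¹ ∈ P) ∧ ∀ a ∈ P, τ a ∈ P := by
  have key := fun n : ℕ => exists_cone_of_chain (aug_pow_chain τ h (Nat.le_add_left 1 n))
  choose Q q1 q2 q3 q4 q5 using key
  let D : Γ → MonoidAlgebra ℝ Γ := fun g => MonoidAlgebra.of ℝ Γ g - 1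
  have hmul : ∀ {i j k : ℕ}, 1 ≤ k → k ≤ i + j → ∀ {a b}, a ∈ aug Γ ^ i → b ∈ aug Γ ^ j →
      a * b ∈ aug Γ ^ k := fun {i j k} hk hkij {a b} ha hb =>
    aug_pow_le hk hkij (by rw [pow_add]; exact Submodule.mul_mem_mul ha hb)
  have hD : ∀ g, D g ∈ aug Γ ^ 1 := fun g => by rw [pow_one]; exact of_sub_one_mem_aug g
  have hDmul : ∀ g h, D (g * h) = D g + D h + D g * D h := fun g h => by
    simp only [D, map_mul]; noncomm_ring
  refine ⟨{g | ∃ n, D g ∈ Q n}, ?_, ?_, ?_, ?_, ?_⟩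
  · rintro ⟨n, hn⟩
    refine (q1 n _ hn).2 ?_
    simp only [D, map_one, sub_self]
    exact zero_mem _
  · rintro a ⟨n, hn⟩ b ⟨m, hm⟩
    have ha := (q1 n _ hn).1
    have hb := (q1 m _ hm).1
    rcases lt_trichotomy n m with h | rfl | h
    · refine ⟨n, ?_⟩
      rw [hDmul, add_assoc]
      exact q3 n _ hn _ (add_mem (aug_pow_le (by omega) (by omega) hb)
        (hmul (by omega) (by omega) ha hb))
    · refine ⟨n, ?_⟩
      rw [hDmul]
      exact q3 n _ (q2 n _ hn _ hm) _ (hmul (by omega) (by omega) ha hb)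
    · refine ⟨m, ?_⟩
      rw [hDmul, add_comm (D a), add_assoc]
      exact q3 m _ hm _ (add_mem (aug_pow_le (by omega) (by omega) ha)
        (hmul (by omega) (by omega) ha hb))
  · intro a ha
    have h1 : ∃ n, D a ∉ aug Γ ^ (n + 1) := by
      by_contra! hcon
      refine ha (hres a fun n hn => ?_)
      have := hcon (n - 1)
      rwa [Nat.sub_add_cancel hn] at this
    classical
    obtain ⟨n, hn, hmin⟩ : ∃ n, D a ∉ aug Γ ^ (n + 1) ∧ ∀ m < n, D a ∈ aug Γ ^ (m + 1) :=
      ⟨Nat.find h1, Nat.find_spec h1, fun m hm => not_not.1 (Nat.find_min h1 hm)⟩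
    obtain ⟨k, rfl⟩ : ∃ k, n = k + 1 := ⟨n - 1, by
      have : n ≠ 0 := by rintro rfl; exact hn (hD a)
      omega⟩
    rcases q4 k _ (hmin k (by omega)) hn with h | h
    · exact Or.inl ⟨k, h⟩
    · refine Or.inr ⟨k, ?_⟩
      have e : D a⁻¹ = -D a + -(D a⁻¹ * D a) := by
        have := hDmul a⁻¹ a
        rw [inv_mul_cancel] at this
        have h0 : D 1 = 0 := by simp only [D, map_one, sub_self]
        rw [h0] at this
        rw [eq_comm, ← sub_eq_zero, ← neg_eq_zero]
        rw [eq_comm] at this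
        rw [← this]; abel
      rw [e]
      exact q3 k _ h _ (neg_mem (hmul (by omega) (by omega) (hD a⁻¹) (hmin k (by omega))))
  · rintro a ⟨n, hn⟩ b
    have ha := (q1 n _ hn).1
    refine ⟨n, ?_⟩
    have e : D (b * a * b⁻¹) = D a + (D b * D a + (D a * D b⁻¹ + D b * D a * D b⁻¹)) := by
      have h0 : MonoidAlgebra.of ℝ Γ b * MonoidAlgebra.of ℝ Γ b⁻¹ = 1 := by
        rw [← map_mul, mul_inv_cancel, map_one]
      simp only [D, map_mul]
      have e1 : MonoidAlgebra.of ℝ Γ b * MonoidAlgebra.of ℝ Γ a * MonoidAlgebra.of ℝ Γ b⁻¹ - 1 =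
          MonoidAlgebra.of ℝ Γ b * (MonoidAlgebra.of ℝ Γ a - 1) * MonoidAlgebra.of ℝ Γ b⁻¹ := by
        rw [mul_sub, mul_one, sub_mul, h0]
      rw [e1]
      noncomm_ring
    rw [e]
    have h1 : D b * D a ∈ aug Γ ^ (n + 1 + 1) := hmul (by omega) (by omega) (hD b) ha
    exact q3 n _ hn _ (add_mem h1 (add_mem (hmul (by omega) (by omega) ha (hD b⁻¹))
      (hmul (by omega) (by omega) h1 (hD b⁻¹))))
  · rintro a ⟨n, hn⟩
    refine ⟨n, ?_⟩
    have := q5 n _ hn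
    simpa only [D, map_sub, map_one, algMap_of] using this

end AugOrder

section BaseChain

open Polynomial

variable {Γ : Type*} [Group Γ] {τ : Γ →* Γ} {x : ℕ → Γ}

/-- The linear map sending `X ^ k` to `x k - 1`. -/
noncomputable def evAug (x : ℕ → Γ) : ℝ[X] →ₗ[ℝ] MonoidAlgebra ℝ Γ :=
  (Polynomial.basisMonomials ℝ).constr ℝ fun k => MonoidAlgebra.of ℝ Γ (x k) - 1

lemma evAug_X_pow (k : ℕ) : evAug x (X ^ k) = MonoidAlgebra.of ℝ Γ (x k) - 1 := by
  have := (Polynomial.basisMonomials ℝ).constr_basis ℝ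
    (fun k => MonoidAlgebra.of ℝ Γ (x k) - 1) k
  rw [coe_basisMonomials] at this
  rw [X_pow_eq_monomial]
  exact this

lemma algMap_evAug (hτ : ∀ k, τ (x k) = x (k + 1)) (p : ℝ[X]) :
    algMap τ (evAug x p) = evAug x (X * p) := by
  have : (algMap τ).toLinearMap ∘ₗ evAug x = evAug x ∘ₗ LinearMap.mulLeft ℝ X := by
    refine (Polynomial.basisMonomials ℝ).ext fun k => ?_
    rw [coe_basisMonomials]
    change ((algMap τ).toLinearMap ∘ₗ evAug x) (monomial k 1) =
      (evAug x ∘ₗ LinearMap.mulLeft ℝ X) (monomial k 1)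
    rw [← X_pow_eq_monomial]
    simp only [LinearMap.comp_apply, LinearMap.mulLeft_apply, AlgHom.toLinearMap_apply,
      ← pow_succ', evAug_X_pow, map_sub, map_one, algMap_of, hτ]
  exact LinearMap.congr_fun this p

/-- The part of the augmentation ideal coming from multiples of `p`. -/
noncomputable def augPart (x : ℕ → Γ) (p : ℝ[X]) : Submodule ℝ (MonoidAlgebra ℝ Γ) :=
  aug Γ ^ 2 ⊔ LinearMap.range (evAug x ∘ₗ LinearMap.mulLeft ℝ p)

lemma augPart_step (hτ : ∀ k, τ (x k) = x (k + 1)) (p : ℝ[X]) {μ : ℝ} (hμ : 0 < μ) :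
    Step (algMap τ) (augPart x ((X - C μ) * p)) (augPart x p) := by
  refine ⟨sup_le_sup_left ?_ _, μ, hμ, fun a ha => ?_⟩
  · rintro _ ⟨r, rfl⟩
    exact ⟨(X - C μ) * r, by simp only [LinearMap.comp_apply, LinearMap.mulLeft_apply]; ring_nf⟩
  · obtain ⟨i, hi, _, ⟨r, rfl⟩, rfl⟩ := Submodule.mem_sup.1 ha
    refine Submodule.mem_sup.2 ⟨algMap τ i - μ • i, sub_mem (algMap_mem_aug_pow τ (by omega) hi)
      (Submodule.smul_mem _ _ hi), _, ⟨r, rfl⟩, ?_⟩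
    simp only [LinearMap.comp_apply, LinearMap.mulLeft_apply, map_add, smul_add,
      algMap_evAug hτ, ← map_smul (evAug x)]
    have : (X - C μ) * p * r = X * (p * r) - μ • (p * r) := by
      rw [smul_eq_C_mul]; ring
    rw [this, map_sub, map_smul]
    abel

lemma augPart_eq_aug (hx : Subgroup.closure (Set.range x) = ⊤) {c : ℝ} (hc : c ≠ 0) :
    augPart x (C c) = aug Γ := by
  refine le_antisymm (sup_le ?_ ?_) ((aug_le_of_closure hx).trans (sup_le ?_ le_sup_left))
  · simpa using aug_pow_le (Γ := Γ) le_rfl one_le_two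
  · rintro _ ⟨r, rfl⟩
    rw [LinearMap.comp_apply, evAug, Module.Basis.constr_apply]
    exact sum_mem fun k _ => Submodule.smul_mem _ _ (of_sub_one_mem_aug _)
  · refine le_sup_of_le_right (Submodule.span_le.2 ?_)
    rintro _ ⟨k, rfl⟩
    refine ⟨C c⁻¹ * X ^ k, ?_⟩
    rw [LinearMap.comp_apply, LinearMap.mulLeft_apply, ← mul_assoc, ← C_mul, mul_inv_cancel₀ hc,
      C_1, one_mul, evAug_X_pow]

lemma aug_chain (hx : Subgroup.closure (Set.range x) = ⊤) (hτ : ∀ k, τ (x k) = x (k + 1))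
    {c : ℝ} (hc : c ≠ 0) (s : Multiset ℝ) (hs : ∀ μ ∈ s, 0 < μ)
    (hA : ∀ l, evAug x (C c * (s.map fun μ => X - C μ).prod * X ^ l) ∈ aug Γ ^ 2) :
    Relation.ReflTransGen (Step (algMap τ)) (aug Γ ^ 2) (aug Γ) := by
  have h1 : Relation.ReflTransGen (Step (algMap τ))
      (augPart x (C c * (s.map fun μ => X - C μ).prod)) (augPart x (C c)) := by
    clear hA
    induction s using Multiset.induction_on with
    | empty => simpa using Relation.ReflTransGen.refl
    | cons μ s ih =>
      have h2 := ih fun ν hν => hs ν (Multiset.mem_cons_of_mem hν)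
      refine Relation.ReflTransGen.head ?_ h2
      rw [Multiset.map_cons, Multiset.prod_cons, mul_left_comm]
      exact augPart_step hτ _ (hs μ (Multiset.mem_cons_self _ _))
  rw [augPart_eq_aug hx hc] at h1
  convert h1 using 1
  refine (sup_eq_left.2 ?_).symm
  rintro _ ⟨r, rfl⟩
  induction r using Polynomial.induction_on' with
  | add p q hp hq => rw [map_add]; exact add_mem hp hq
  | monomial k a =>
    have : monomial k a = a • (X ^ k : ℝ[X]) := by rw [← C_mul_X_pow_eq_monomial, smul_eq_C_mul]
    rw [this, map_smul]
    exact Submodule.smul_mem _ _ (hA k)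

end BaseChain

end PrincipalGroup

namespace PrincipalGroup

section Data

variable {n : ℕ}

/-- The relator `∏ i, x (κ i + l) ^ m i`. -/
def towerRel (m : Fin n → ℤ) (κ : Fin n → ℕ) (l : ℕ) : FreeGroup ℕ :=
  ((List.finRange n).map fun i => FreeGroup.of (κ i + l) ^ m i).prod

/-- The group generated by `x 0, x 1, …` subject to all translates of the relator. -/
abbrev Tower (m : Fin n → ℤ) (κ : Fin n → ℕ) : Type :=
  PresentedGroup (Set.range (towerRel m κ))

/-- The generators of `Tower m κ`. -/
def towerGen (m : Fin n → ℤ) (κ : Fin n → ℕ) (k : ℕ) : Tower m κ := PresentedGroup.of k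

/-- The polynomial recording the exponent sums in the relators. -/
noncomputable def relPoly (m : Fin n → ℤ) (κ : Fin n → ℕ) : Polynomial ℤ :=
  ∑ i, Polynomial.C (m i) * Polynomial.X ^ κ i

/-- The index `i₀` is the only one at which `κ` attains its maximum `δ`. -/
def IsTop (κ : Fin n → ℕ) (δ : ℕ) (i₀ : Fin n) : Prop := κ i₀ = δ ∧ ∀ i ≠ i₀, κ i < δ

variable {m : Fin n → ℤ} {κ : Fin n → ℕ} {δ : ℕ} {i₀ : Fin n}

lemma closure_range_towerGen : Subgroup.closure (Set.range (towerGen m κ)) = ⊤ :=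
  PresentedGroup.closure_range_of _

lemma lift_towerRel {U : Type*} [Group U] (u : ℕ → U) (l : ℕ) :
    FreeGroup.lift u (towerRel m κ l) =
      ((List.finRange n).map fun i => u (κ i + l) ^ m i).prod := by
  simp [towerRel, map_list_prod, Function.comp_def]

lemma towerGen_rel (l : ℕ) :
    ((List.finRange n).map fun i => towerGen m κ (κ i + l) ^ m i).prod = 1 := by
  have h : PresentedGroup.mk (Set.range (towerRel m κ)) (towerRel m κ l) = 1 :=
    PresentedGroup.one_of_mem ⟨l, rfl⟩
  rw [← h, towerRel, map_list_prod, List.map_map]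
  congr 1

/-- The homomorphism out of `Tower m κ` given by a solution of all the relations. -/
def towerLift {U : Type*} [Group U] (u : ℕ → U)
    (hu : ∀ l, ((List.finRange n).map fun i => u (κ i + l) ^ m i).prod = 1) : Tower m κ →* U :=
  PresentedGroup.toGroup (f := u) (by rintro _ ⟨l, rfl⟩; rw [lift_towerRel, hu])

lemma towerLift_gen {U : Type*} [Group U] (u : ℕ → U)
    (hu : ∀ l, ((List.finRange n).map fun i => u (κ i + l) ^ m i).prod = 1) (k : ℕ) :
    towerLift u hu (towerGen m κ k) = u k :=
  PresentedGroup.toGroup.of _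

/-- The shift endomorphism. -/
def towerShift (m : Fin n → ℤ) (κ : Fin n → ℕ) : Tower m κ →* Tower m κ :=
  towerLift (fun k => towerGen m κ (k + 1)) fun l => by
    simpa only [add_assoc] using towerGen_rel (m := m) (κ := κ) (l + 1)

lemma towerShift_gen (k : ℕ) : towerShift m κ (towerGen m κ k) = towerGen m κ (k + 1) :=
  towerLift_gen _ _ k

lemma toAdd_map_rel {G W : Type*} [Group G] [AddCommGroup W] (φ : G →* Multiplicative W)
    (y : Fin n → G) :
    (φ ((List.finRange n).map fun i => y i ^ m i).prod).toAdd = ∑ i, m i • (φ (y i)).toAdd := by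
  rw [map_list_prod, List.map_map, ← Fin.prod_univ_def, toAdd_prod]
  simp

lemma exists_split (h : IsTop κ δ i₀) : ∃ L₁ L₂ : List (Fin n),
    List.finRange n = L₁ ++ i₀ :: L₂ ∧ (∀ i ∈ L₁, κ i < δ) ∧ ∀ i ∈ L₂, κ i < δ := by
  obtain ⟨L₁, L₂, hL⟩ := List.append_of_mem (List.mem_finRange i₀)
  have hn := List.nodup_finRange n
  rw [hL, List.nodup_append, List.nodup_cons] at hn
  refine ⟨L₁, L₂, hL, fun i hi => h.2 i ?_, fun i hi => h.2 i ?_⟩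
  · rintro rfl
    exact hn.2.2 _ hi _ List.mem_cons_self rfl
  · rintro rfl
    exact hn.2.1.1 hi

lemma exists_zpow_root {U : Type*} [Group U] {a : ℤ}
    (hU : ∀ u : U, ∃ v, v ^ a.natAbs = u) (u : U) : ∃ v, v ^ a = u := by
  rcases Int.natAbs_eq a with h | h
  · obtain ⟨v, hv⟩ := hU u
    exact ⟨v, by rw [h, zpow_natCast, hv]⟩
  · obtain ⟨v, hv⟩ := hU u⁻¹
    exact ⟨v, by rw [h, zpow_neg, zpow_natCast, hv, inv_inv]⟩

lemma tower_exists_hom (h : IsTop κ δ i₀) {U : Type*} [Group U]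
    (hU : ∀ u : U, ∃ v, v ^ (m i₀).natAbs = u) (f : ℕ → U) :
    ∃ ρ : Tower m κ →* U, ∀ j < δ, ρ (towerGen m κ j) = f j := by
  obtain ⟨L₁, L₂, hL, h1, h2⟩ := exists_split h
  choose root hroot using exists_zpow_root hU
  let word (g : ℕ → U) (l : ℕ) (L : List (Fin n)) : U := (L.map fun i => g (κ i + l) ^ m i).prod
  have hword {g g' : ℕ → U} {l : ℕ} {L : List (Fin n)} (hL : ∀ i ∈ L, κ i < δ)
      (hg : ∀ j < δ + l, g j = g' j) : word g l L = word g' l L := by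
    refine congrArg List.prod (List.map_congr_left fun i hi => ?_)
    rw [hg _ (by have := hL i hi; omega)]
  obtain ⟨u, hu⟩ : ∃ u : ℕ → U, ∀ k, u k = if k < δ then f k else
      root ((word u (k - δ) L₁)⁻¹ * (word u (k - δ) L₂)⁻¹) := by
    let F (k : ℕ) (g : ∀ j, j < k → U) : U := if k < δ then f k else
      root ((word (fun j => if hj : j < k then g j hj else 1) (k - δ) L₁)⁻¹ *
        (word (fun j => if hj : j < k then g j hj else 1) (k - δ) L₂)⁻¹)
    refine ⟨(Nat.lt_wfRel.wf).fix F, fun k => ?_⟩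
    rw [WellFounded.fix_eq]
    by_cases hk : k < δ
    · simp only [F, if_pos hk]
    · have hg : ∀ j < δ + (k - δ), (if j < k then (Nat.lt_wfRel.wf).fix F j else 1) =
          (Nat.lt_wfRel.wf).fix F j := fun j hj => if_pos (by omega)
      simp only [F, if_neg hk, dite_eq_ite]
      exact congrArg root (congrArg₂ (fun a b => a⁻¹ * b⁻¹) (hword h1 hg) (hword h2 hg))
  have hrel : ∀ l, ((List.finRange n).map fun i => u (κ i + l) ^ m i).prod = 1 := fun l => by
    have := hu (δ + l)
    rw [if_neg (by omega), Nat.add_sub_cancel_left] at this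
    rw [hL, List.map_append, List.prod_append, List.map_cons, List.prod_cons, h.1, this, hroot]
    change word u l L₁ * (_ * word u l L₂) = 1
    group
  refine ⟨towerLift u hrel, fun j hj => ?_⟩
  rw [towerLift_gen, hu, if_pos hj]

lemma tower_pow_mem (h : IsTop κ δ i₀) {k : ℕ} (hk : δ ≤ k) :
    towerGen m κ k ^ (m i₀).natAbs ∈ Subgroup.closure (towerGen m κ '' Set.Iio k) := by
  obtain ⟨L₁, L₂, hL, h1, h2⟩ := exists_split h
  have hmem {L : List (Fin n)} (hL : ∀ i ∈ L, κ i < δ) :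
      (L.map fun i => towerGen m κ (κ i + (k - δ)) ^ m i).prod ∈
        Subgroup.closure (towerGen m κ '' Set.Iio k) := by
    refine Subgroup.list_prod_mem _ fun y hy => ?_
    obtain ⟨i, hi, rfl⟩ := List.mem_map.1 hy
    have h' : κ i + (k - δ) ∈ Set.Iio k := Set.mem_Iio.2 (by have := hL i hi; omega)
    have h'' := Subgroup.subset_closure (Set.mem_image_of_mem (towerGen m κ) h')
    exact Subgroup.zpow_mem _ h'' _
  have hr := towerGen_rel (m := m) (κ := κ) (k - δ)
  rw [hL, List.map_append, List.prod_append, List.map_cons, List.prod_cons, h.1,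
    Nat.add_sub_cancel' hk] at hr
  have key : towerGen m κ k ^ m i₀ ∈ Subgroup.closure (towerGen m κ '' Set.Iio k) := by
    rw [← Subgroup.mul_mem_cancel_right _ (hmem h2), ← Subgroup.mul_mem_cancel_left _ (hmem h1), hr]
    exact one_mem _
  rcases Int.natAbs_eq (m i₀) with h' | h'
  · rwa [h', zpow_natCast] at key
  · rwa [h', zpow_neg, zpow_natCast, inv_mem_iff] at key

end Data

end PrincipalGroup

namespace PrincipalGroup

section Arithmetic

open Polynomial

lemma isPrimitive_of_prime {A : ℤ[X]} (hA : ∀ p : ℕ, p.Prime → ∃ k, ¬ (p : ℤ) ∣ A.coeff k) :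
    A.IsPrimitive := by
  intro r hr
  rw [C_dvd_iff_dvd_coeff] at hr
  rw [Int.isUnit_iff_natAbs_eq]
  by_contra h
  obtain ⟨p, hp, hpr⟩ := Nat.exists_prime_and_dvd h
  obtain ⟨k, hk⟩ := hA p hp
  exact hk ((Int.natCast_dvd.2 hpr).trans (hr k))

lemma eq_zero_of_map_dvd {A v : ℤ[X]} {k : ℕ} (hk : k < A.natDegree) (hv : v.degree < k) {q : ℚ}
    (h : A.map (Int.castRingHom ℚ) ∣ v.map (Int.castRingHom ℚ) - C q * X ^ k) : q = 0 := by
  have hv' : (v.map (Int.castRingHom ℚ)).degree < k := degree_map_le.trans_lt hv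
  have h0 : v.map (Int.castRingHom ℚ) - C q * X ^ k = 0 := by
    have hA0 : A ≠ 0 := by
      rintro rfl
      simp at hk
    refine Polynomial.eq_zero_of_dvd_of_degree_lt h ?_
    rw [degree_map_eq_of_injective (RingHom.injective_int _),
      degree_eq_natDegree hA0]
    refine (degree_sub_le _ _).trans_lt (max_lt (hv'.trans ?_)
      ((degree_C_mul_X_pow_le _ _).trans_lt ?_))
    all_goals exact_mod_cast hk
  have := congrArg (fun p => p.coeff k) h0
  simp only [coeff_sub, coeff_eq_zero_of_degree_lt hv', coeff_C_mul_X_pow, if_true, coeff_zero,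
    zero_sub, neg_eq_zero] at this
  exact this

lemma exists_eq_mul_leadingCoeff {A v : ℤ[X]}
    (hA : ∀ p : ℕ, p.Prime → ∃ k < A.natDegree, ¬ (p : ℤ) ∣ A.coeff k)
    {k : ℕ} (hk : A.natDegree ≤ k) (hv : v.degree < k) {q : ℚ}
    (h : A.map (Int.castRingHom ℚ) ∣ v.map (Int.castRingHom ℚ) - C q * X ^ k) :
    ∃ j : ℤ, q = j * A.leadingCoeff := by
  have hprim : A.IsPrimitive := isPrimitive_of_prime fun p hp => by
    obtain ⟨k, -, hk⟩ := hA p hp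
    exact ⟨k, hk⟩
  have hdvd : A ∣ C (q.den : ℤ) * v - C q.num * X ^ k := by
    have hvp : (C (q.den : ℤ) * v - C q.num * X ^ k).map (Int.castRingHom ℚ) =
        C (q.den : ℚ) * (v.map (Int.castRingHom ℚ) - C q * X ^ k) := by
      have : (C (q.num : ℚ) : ℚ[X]) = C (q.den : ℚ) * C q := by
        rw [← C_mul, Rat.den_mul_eq_num]
      simp only [Polynomial.map_sub, Polynomial.map_mul, map_C, Polynomial.map_pow, map_X,
        Int.coe_castRingHom, Int.cast_natCast, this]
      ring
    rw [IsPrimitive.Int.dvd_iff_map_cast_dvd_map_cast _ _ hprim, hvp]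
    exact h.mul_left _
  obtain ⟨c, hc⟩ := hdvd
  have hnum : A.leadingCoeff ∣ q.num := by
    have h1 : (C (q.den : ℤ) * v - C q.num * X ^ k).coeff k = - q.num := by
      rw [coeff_sub, coeff_C_mul, coeff_eq_zero_of_degree_lt hv, coeff_C_mul_X_pow]
      simp
    have h2 : (C (q.den : ℤ) * v - C q.num * X ^ k).natDegree ≤ k := by
      refine (natDegree_sub_le _ _).trans (max_le ((natDegree_C_mul_le _ _).trans ?_)
        (natDegree_C_mul_X_pow_le _ _))
      exact natDegree_le_of_degree_le hv.le
    have hc0 : c.natDegree ≤ k - A.natDegree := by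
      by_cases hc0 : c = 0
      · simp [hc0]
      rw [hc, natDegree_mul hprim.ne_zero hc0] at h2
      omega
    have h3 := coeff_mul_add_eq_of_natDegree_le (f := A) (g := c) le_rfl hc0
    rw [Nat.add_sub_cancel' hk, ← hc, h1] at h3
    exact (dvd_neg).1 ⟨_, h3⟩
  have hden : q.den = 1 := by
    by_contra hne
    obtain ⟨p, hp, hpd⟩ := Nat.exists_prime_and_dvd hne
    have hpn : ¬ (p : ℤ) ∣ q.num := fun h => by
      have := Nat.dvd_gcd (Int.natCast_dvd.1 h) hpd
      rw [q.reduced] at this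
      exact hp.one_lt.ne' (Nat.dvd_one.1 this)
    have := Fact.mk hp
    let f : ℤ →+* ZMod p := Int.castRingHom (ZMod p)
    have hf (z : ℤ) : f z = 0 ↔ (p : ℤ) ∣ z := ZMod.intCast_zmod_eq_zero_iff_dvd z p
    have hlead : f A.leadingCoeff ≠ 0 := fun h => hpn (((hf _).1 h).trans hnum)
    have h1 : A.map f ∣ X ^ k := by
      have h2 := congrArg (Polynomial.map f) hc
      rw [Polynomial.map_mul, Polynomial.map_sub, Polynomial.map_mul, Polynomial.map_mul, map_C,
        map_C, (hf _).2 (by exact_mod_cast hpd), C_0, zero_mul, zero_sub, Polynomial.map_pow,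
        map_X] at h2
      have hu : IsUnit (C (f q.num)) := isUnit_C.2 (Ne.isUnit (mt (hf _).1 hpn))
      rw [← hu.dvd_mul_left, ← dvd_neg]
      exact ⟨_, h2⟩
    obtain ⟨j, -, hj⟩ := (dvd_prime_pow prime_X k).1 h1
    have hdeg : j = A.natDegree := by
      have := natDegree_eq_of_degree_eq (degree_eq_degree_of_associated hj)
      rw [natDegree_X_pow, natDegree_map_of_leadingCoeff_ne_zero f hlead] at this
      exact this.symm
    obtain ⟨i, hi, hi'⟩ := hA p hp
    have := (X_pow_dvd_iff.1 hj.symm.dvd) i (hdeg ▸ hi)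
    rw [coeff_map] at this
    exact hi' ((hf _).1 this)
  obtain ⟨j, hj⟩ := hnum
  refine ⟨j, ?_⟩
  rw [← Rat.num_div_den q, hden, hj]
  push_cast
  ring

end Arithmetic

end PrincipalGroup

namespace PrincipalGroup

section TowerInstance

open Polynomial

variable {n : ℕ} {m : Fin n → ℤ} {κ : Fin n → ℕ} {δ : ℕ} {i₀ : Fin n}

lemma coeff_relPoly (k : ℕ) :
    (relPoly m κ).coeff k = ∑ i, if k = κ i then m i else 0 := by
  simp only [relPoly, finsetSum_coeff, coeff_C_mul_X_pow]

lemma natDegree_relPoly_le (h : IsTop κ δ i₀) : (relPoly m κ).natDegree ≤ δ := by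
  refine natDegree_le_iff_coeff_eq_zero.2 fun N hN => ?_
  rw [coeff_relPoly]
  refine Finset.sum_eq_zero fun i _ => if_neg ?_
  have : κ i ≤ δ := by
    by_cases hi : i = i₀
    · rw [hi, h.1]
    · exact (h.2 i hi).le
  omega

lemma coeff_relPoly_top (h : IsTop κ δ i₀) : (relPoly m κ).coeff δ = m i₀ := by
  rw [coeff_relPoly, Finset.sum_eq_single i₀, if_pos h.1.symm]
  · intro i _ hi
    exact if_neg (h.2 i hi).ne'
  · simp

lemma natDegree_relPoly (h : IsTop κ δ i₀) (hm : m i₀ ≠ 0) : (relPoly m κ).natDegree = δ :=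
  natDegree_eq_of_le_of_coeff_ne_zero (natDegree_relPoly_le h) (by rwa [coeff_relPoly_top h])

lemma leadingCoeff_relPoly (h : IsTop κ δ i₀) (hm : m i₀ ≠ 0) :
    (relPoly m κ).leadingCoeff = m i₀ := by
  rw [leadingCoeff, natDegree_relPoly h hm, coeff_relPoly_top h]

/-- The rationalised abelianisation of the tower group. -/
abbrev TowerAb (m : Fin n → ℤ) (κ : Fin n → ℕ) : Type :=
  AdjoinRoot ((relPoly m κ).map (Int.castRingHom ℚ))

lemma map_relPoly {R : Type*} [CommRing R] (f : ℤ →+* R) :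
    (relPoly m κ).map f = ∑ i, C (f (m i)) * X ^ κ i := by
  simp [relPoly, Polynomial.map_sum]

/-- The abelianisation map, as a homomorphism. -/
noncomputable def towerAbHom (m : Fin n → ℤ) (κ : Fin n → ℕ) :
    Tower m κ →* Multiplicative (TowerAb m κ) :=
  towerLift (fun k => Multiplicative.ofAdd (AdjoinRoot.mk _ (X ^ k))) fun l => by
    have := toAdd_map_rel (m := m) (MonoidHom.id (Multiplicative (TowerAb m κ)))
      fun i => Multiplicative.ofAdd (AdjoinRoot.mk _ (X ^ (κ i + l)))
    rw [MonoidHom.id_apply] at this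
    rw [← toAdd_eq_zero, this]
    simp only [MonoidHom.id_apply, toAdd_ofAdd]
    have h2 : ∑ i, m i • (X ^ (κ i + l) : ℚ[X]) =
        (relPoly m κ).map (Int.castRingHom ℚ) * X ^ l := by
      rw [map_relPoly, Finset.sum_mul]
      refine Finset.sum_congr rfl fun i _ => ?_
      rw [zsmul_eq_mul, pow_add, mul_assoc]
      simp
    simp only [← map_zsmul]
    rw [← map_sum, h2, map_mul, AdjoinRoot.mk_self, zero_mul]

/-- The abelianisation map. -/
noncomputable def towerAb (m : Fin n → ℤ) (κ : Fin n → ℕ) (g : Tower m κ) : TowerAb m κ :=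
  (towerAbHom m κ g).toAdd

lemma towerAb_gen (k : ℕ) : towerAb m κ (towerGen m κ k) = AdjoinRoot.mk _ (X ^ k) := by
  rw [towerAb, towerAbHom, towerLift_gen, toAdd_ofAdd]

lemma isLog_towerAb : IsLog (towerAb m κ) := fun g h => by
  simp [towerAb]

lemma exists_poly_of_mem_closure {k : ℕ} {g : Tower m κ}
    (hg : g ∈ Subgroup.closure (towerGen m κ '' Set.Iio k)) :
    ∃ v : ℤ[X], v.degree < k ∧ towerAb m κ g = AdjoinRoot.mk _ (v.map (Int.castRingHom ℚ)) := by
  induction hg using Subgroup.closure_induction with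
  | mem y hy =>
    obtain ⟨j, hj, rfl⟩ := hy
    refine ⟨X ^ j, ?_, ?_⟩
    · rw [degree_X_pow]
      exact_mod_cast hj
    · rw [towerAb_gen, Polynomial.map_pow, map_X]
  | one => exact ⟨0, by simp [bot_lt_iff_ne_bot], by simp [isLog_towerAb.map_one]⟩
  | mul a b _ _ ha hb =>
    obtain ⟨v, hv, hv'⟩ := ha
    obtain ⟨w, hw, hw'⟩ := hb
    exact ⟨v + w, (degree_add_le _ _).trans_lt (max_lt hv hw), by
      rw [isLog_towerAb, hv', hw', Polynomial.map_add, map_add]⟩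
  | inv a _ ha =>
    obtain ⟨v, hv, hv'⟩ := ha
    exact ⟨-v, by rwa [degree_neg], by
      rw [isLog_towerAb.map_inv, hv', Polynomial.map_neg, map_neg]⟩

lemma isRootTower (h : IsTop κ δ i₀) (hm : m i₀ ≠ 0)
    (hp : ∀ p : ℕ, p.Prime → ∃ k < δ, ¬ (p : ℤ) ∣ (relPoly m κ).coeff k) :
    IsRootTower (towerGen m κ) δ (m i₀).natAbs (towerAb m κ) where
  isLog := isLog_towerAb
  closure_range := closure_range_towerGen
  pos := Int.natAbs_pos.2 hm
  pow_mem k hk := tower_pow_mem h hk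
  exists_hom U _ hU f := tower_exists_hom h hU f
  lattice k g hg q hq := by
    obtain ⟨v, hv, hv'⟩ := exists_poly_of_mem_closure hg
    have hdvd : (relPoly m κ).map (Int.castRingHom ℚ) ∣
        v.map (Int.castRingHom ℚ) - C q * X ^ k := by
      rw [← AdjoinRoot.mk_eq_mk, ← hv', hq, towerAb_gen, ← smul_eq_C_mul, AdjoinRoot.smul_mk]
    split_ifs with hk
    · rw [← natDegree_relPoly h hm] at hk
      exact ⟨0, by rw [eq_zero_of_map_dvd hk hv hdvd]; simp⟩
    · rw [← natDegree_relPoly h hm] at hp hk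
      obtain ⟨j, hj⟩ := exists_eq_mul_leadingCoeff hp (not_lt.1 hk) hv hdvd
      rw [leadingCoeff_relPoly h hm] at hj
      rcases Int.natAbs_eq (m i₀) with h' | h'
      · exact ⟨j, by rw [hj, ← Int.cast_natCast (R := ℚ), ← h']⟩
      · refine ⟨-j, ?_⟩
        have h'' := congrArg (Int.cast : ℤ → ℚ) h'
        rw [Int.cast_neg, Int.cast_natCast] at h''
        rw [hj, h'', Int.cast_neg]
        ring

lemma finiteDimensional_towerAb (h : IsTop κ δ i₀) (hm : m i₀ ≠ 0) :
    FiniteDimensional ℚ (TowerAb m κ) := by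
  refine (AdjoinRoot.powerBasis ?_).finite
  rw [Ne, Polynomial.map_eq_zero_iff (RingHom.injective_int _)]
  intro h0
  have := coeff_relPoly_top (m := m) h
  rw [h0, coeff_zero] at this
  exact hm this.symm

lemma evAug_relPoly_mem (l : ℕ) :
    evAug (towerGen m κ) ((relPoly m κ).map (Int.castRingHom ℝ) * X ^ l) ∈ aug (Tower m κ) ^ 2 := by
  let φ : Tower m κ →* Multiplicative (MonoidAlgebra ℝ (Tower m κ) ⧸ (aug (Tower m κ) ^ 2)) :=
    MonoidHom.mk' (fun g => Multiplicative.ofAdd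
      (Submodule.Quotient.mk (MonoidAlgebra.of ℝ _ g - 1))) fun a b => by
        rw [← ofAdd_add, ← Submodule.Quotient.mk_add]
        refine congrArg Multiplicative.ofAdd ((Submodule.Quotient.eq _).2 ?_)
        have : MonoidAlgebra.of ℝ (Tower m κ) (a * b) - 1 -
            (MonoidAlgebra.of ℝ _ a - 1 + (MonoidAlgebra.of ℝ _ b - 1)) =
            (MonoidAlgebra.of ℝ _ a - 1) * (MonoidAlgebra.of ℝ _ b - 1) := by
          rw [map_mul]; noncomm_ring
        rw [this, pow_two]
        exact Submodule.mul_mem_mul (of_sub_one_mem_aug a) (of_sub_one_mem_aug b)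
  have hφ (g : Tower m κ) : (φ g).toAdd = Submodule.Quotient.mk (MonoidAlgebra.of ℝ _ g - 1) := rfl
  have h1 := toAdd_map_rel (m := m) φ fun i => towerGen m κ (κ i + l)
  rw [towerGen_rel, map_one, toAdd_one] at h1
  simp only [hφ] at h1
  rw [← Submodule.Quotient.mk_eq_zero, map_relPoly, Finset.sum_mul, map_sum, ← Submodule.mkQ_apply,
    map_sum, h1]
  refine Finset.sum_congr rfl fun i _ => ?_
  rw [mul_assoc, ← pow_add, ← smul_eq_C_mul, map_smul, evAug_X_pow, map_smul, Submodule.mkQ_apply,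
    Int.coe_castRingHom, Int.cast_smul_eq_zsmul]

lemma real_factorization {A : ℤ[X]}
    (hroots : ∀ z : ℂ, aeval z A = 0 → z.im = 0 ∧ 0 < z.re) :
    ∃ s : Multiset ℝ, (∀ μ ∈ s, 0 < μ) ∧
      A.map (Int.castRingHom ℝ) = C (A.leadingCoeff : ℝ) * (s.map fun μ => X - C μ).prod := by
  let B := A.map (Int.castRingHom ℂ)
  have hroot (z) (hz : z ∈ B.roots) : z.im = 0 ∧ 0 < z.re := hroots z (by
    have := (mem_roots'.1 hz).2
    rw [IsRoot.def, eval_map] at this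
    rwa [aeval_def])
  refine ⟨B.roots.map Complex.re, fun μ hμ => ?_, ?_⟩
  · obtain ⟨z, hz, rfl⟩ := Multiset.mem_map.1 hμ
    exact (hroot z hz).2
  · apply Polynomial.map_injective Complex.ofRealHom Complex.ofRealHom.injective
    have h1 := (IsAlgClosed.splits B).eq_prod_roots
    rw [Polynomial.map_map, Subsingleton.elim (Complex.ofRealHom.comp (Int.castRingHom ℝ))
      (Int.castRingHom ℂ)]
    change B = _
    conv_lhs => rw [h1]
    rw [Polynomial.map_mul, map_C, Polynomial.map_multiset_prod, Multiset.map_map,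
      Multiset.map_map]
    congr 2
    · rw [leadingCoeff_map_of_injective (RingHom.injective_int _)]
      simp
    · refine Multiset.map_congr rfl fun z hz => ?_
      have : ((z.re : ℝ) : ℂ) = z := Complex.ext rfl (by simp [(hroot z hz).1])
      simp [this]

/-- The tower group carries a conjugation-invariant positive cone preserved by the shift. -/
theorem tower_exists_positive_cone (h : IsTop κ δ i₀) (hm : m i₀ ≠ 0)
    (hp : ∀ p : ℕ, p.Prime → ∃ k < δ, ¬ (p : ℤ) ∣ (relPoly m κ).coeff k)
    (hroots : ∀ z : ℂ, aeval z (relPoly m κ) = 0 → z.im = 0 ∧ 0 < z.re) :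
    ∃ P : Set (Tower m κ), 1 ∉ P ∧ (∀ a ∈ P, ∀ b ∈ P, a * b ∈ P) ∧
      (∀ a, a ≠ 1 → a ∈ P ∨ a⁻¹ ∈ P) ∧ (∀ a ∈ P, ∀ b, b * a * b⁻¹ ∈ P) ∧
      ∀ a ∈ P, towerShift m κ a ∈ P := by
  have := finiteDimensional_towerAb h hm
  obtain ⟨s, hs, hA⟩ := real_factorization hroots
  refine exists_positive_cone _ (fun g => (isRootTower h hm hp).eq_one_of_isResidual) ?_
  refine aug_chain closure_range_towerGen towerShift_gen (c := m i₀) (by exact_mod_cast hm) s hs ?_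
  rw [leadingCoeff_relPoly h hm] at hA
  rw [← hA]
  exact evAug_relPoly_mem

end TowerInstance

end PrincipalGroup

namespace PrincipalGroup

/-- A conjugation-invariant positive cone yields a bi-order. -/
lemma isBiOrderable_of_cone {G : Type*} [Group G] (Q : Set G) (h1 : 1 ∉ Q)
    (hmul : ∀ a ∈ Q, ∀ b ∈ Q, a * b ∈ Q) (htot : ∀ a, a ≠ 1 → a ∈ Q ∨ a⁻¹ ∈ Q)
    (hconj : ∀ a ∈ Q, ∀ b, b * a * b⁻¹ ∈ Q) : IsBiOrderable G := by
  refine ⟨fun a b => a⁻¹ * b ∈ Q, { trichotomous := ?_, irrefl := ?_, trans := ?_ }, ?_⟩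
  · intro a b hab hba
    by_contra hne
    rcases htot (a⁻¹ * b) (fun h => hne (inv_mul_eq_one.1 h)) with h | h
    · exact hab h
    · exact hba (by simpa using h)
  · intro a h
    exact h1 (by simpa using h)
  · intro a b c h h'
    simpa [mul_assoc] using hmul _ h _ h'
  · intro a b c h
    refine ⟨by simpa [mul_assoc] using h, ?_⟩
    simpa [mul_assoc] using hconj _ h c⁻¹

section Extension

variable {G Γ : Type*} [Group G] [Group Γ] {ι : Γ →* G} {τ : Γ →* Γ} {t : G}

lemma map_mul_pow (hτ : ∀ γ, ι γ * t = t * ι (τ γ)) (γ : Γ) (j : ℕ) :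
    ι γ * t ^ j = t ^ j * ι (τ^[j] γ) := by
  induction j generalizing γ with
  | zero => simp
  | succ j ih =>
    rw [pow_succ', ← mul_assoc, hτ, mul_assoc, ih, ← mul_assoc, Function.iterate_succ_apply]

lemma exists_pow_mul_map_mul (hτ : ∀ γ, ι γ * t = t * ι (τ γ))
    (hgen : Subgroup.closure (insert t (Set.range ι)) = ⊤) (g : G) :
    ∃ (j l : ℕ) (γ : Γ), g = t ^ j * ι γ * (t ^ l)⁻¹ := by
  have hg : g ∈ Subgroup.closure (insert t (Set.range ι)) := hgen ▸ Subgroup.mem_top g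
  have hι (β : Γ) (y : G) (hy : ∃ (j l : ℕ) (γ : Γ), y = t ^ j * ι γ * (t ^ l)⁻¹) :
      ∃ (j l : ℕ) (γ : Γ), ι β * y = t ^ j * ι γ * (t ^ l)⁻¹ := by
    obtain ⟨j, l, γ, rfl⟩ := hy
    refine ⟨j, l, τ^[j] β * γ, ?_⟩
    rw [← mul_assoc, ← mul_assoc, map_mul_pow hτ, map_mul, mul_assoc (t ^ j)]
  induction hg using Subgroup.closure_induction_left with
  | one => exact ⟨0, 0, 1, by simp⟩
  | mul_left y hy z _ hz =>
    rcases hy with rfl | ⟨β, rfl⟩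
    · obtain ⟨j, l, γ, rfl⟩ := hz
      exact ⟨j + 1, l, γ, by rw [pow_succ']; simp only [mul_assoc]⟩
    · exact hι β z hz
  | inv_mul_cancel y hy z _ hz =>
    rcases hy with rfl | ⟨β, rfl⟩
    · obtain ⟨j, l, γ, rfl⟩ := hz
      cases j with
      | zero =>
        refine ⟨0, l + 1, τ γ, ?_⟩
        rw [inv_mul_eq_iff_eq_mul, pow_zero, one_mul, one_mul, ← mul_assoc, ← hτ, pow_succ]
        group
      | succ j => exact ⟨j, l, γ, by rw [pow_succ']; simp only [mul_assoc, inv_mul_cancel_left]⟩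
    · rw [← map_inv]
      exact hι β⁻¹ z hz

/-- An ascending extension of a group with a positive cone preserved by the defining endomorphism
is bi-orderable. -/
theorem isBiOrderable_of_ascending (hι : Function.Injective ι)
    (hτ : ∀ γ, ι γ * t = t * ι (τ γ)) (hgen : Subgroup.closure (insert t (Set.range ι)) = ⊤)
    (deg : G →* Multiplicative ℤ) (hdt : deg t = Multiplicative.ofAdd 1)
    (hdι : ∀ γ, deg (ι γ) = 1) (P : Set Γ) (h1 : 1 ∉ P) (hmul : ∀ a ∈ P, ∀ b ∈ P, a * b ∈ P)
    (htot : ∀ a, a ≠ 1 → a ∈ P ∨ a⁻¹ ∈ P) (hconj : ∀ a ∈ P, ∀ b, b * a * b⁻¹ ∈ P)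
    (hP : ∀ a ∈ P, τ a ∈ P) : IsBiOrderable G := by
  let N (g : G) : Prop := ∃ (j : ℕ), ∃ γ ∈ P, g = t ^ j * ι γ * (t ^ j)⁻¹
  have hN : ∀ g, N g → ∃ j₀, ∀ j, j₀ ≤ j → ∃ γ ∈ P, g = t ^ j * ι γ * (t ^ j)⁻¹ := by
    rintro g ⟨j₀, γ, hγ, rfl⟩
    refine ⟨j₀, fun j hj => ?_⟩
    obtain ⟨i, rfl⟩ := Nat.exists_eq_add_of_le hj
    refine ⟨τ^[i] γ, ?_, ?_⟩
    · clear hj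
      induction i with
      | zero => exact hγ
      | succ i ih => rw [Function.iterate_succ_apply']; exact hP _ ih
    · rw [pow_add, mul_assoc (t ^ j₀) (t ^ i), ← map_mul_pow hτ]
      group
  have hdeg : ∀ g, N g → deg g = 1 := by
    rintro g ⟨j, γ, -, rfl⟩
    simp [hdι]
  have hNmul : ∀ g h, N g → N h → N (g * h) := by
    intro g h hg hh
    obtain ⟨i, hi⟩ := hN g hg
    obtain ⟨j, hj⟩ := hN h hh
    obtain ⟨γ, hγ, hγ'⟩ := hi (max i j) (le_max_left _ _)
    obtain ⟨β, hβ, hβ'⟩ := hj (max i j) (le_max_right _ _)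
    refine ⟨max i j, γ * β, hmul _ hγ _ hβ, ?_⟩
    rw [hγ', hβ', map_mul]
    group
  let S : Submonoid G :=
    { carrier := {b | ∀ g, N g → N (b * g * b⁻¹)}
      one_mem' := fun g hg => by simpa using hg
      mul_mem' := fun {a b} ha hb g hg => by
        have := ha _ (hb g hg)
        simpa [mul_assoc] using this }
  have hS : ∀ b, b ∈ S := by
    have ht : t ∈ S := by
      rintro _ ⟨j, γ, hγ, rfl⟩
      exact ⟨j + 1, γ, hγ, by rw [pow_succ']; simp [mul_assoc]⟩
    have ht' : t⁻¹ ∈ S := by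
      intro g hg
      obtain ⟨j, hj⟩ := hN g hg
      obtain ⟨γ, hγ, rfl⟩ := hj (j + 1) (Nat.le_succ j)
      exact ⟨j, γ, hγ, by rw [pow_succ']; simp [mul_assoc]⟩
    have hβ (β : Γ) : ι β ∈ S := by
      rintro _ ⟨j, γ, hγ, rfl⟩
      refine ⟨j, τ^[j] β * γ * (τ^[j] β)⁻¹, hconj _ hγ _, ?_⟩
      have h := map_mul_pow hτ β j
      have h' : ι β = t ^ j * ι (τ^[j] β) * (t ^ j)⁻¹ := by rw [← h]; group
      rw [h', map_mul, map_mul, map_inv]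
      group
    intro b
    obtain ⟨j, l, γ, rfl⟩ := exists_pow_mul_map_mul hτ hgen b
    rw [← inv_pow]
    exact S.mul_mem (S.mul_mem (S.pow_mem ht j) (hβ γ)) (S.pow_mem ht' l)
  refine isBiOrderable_of_cone {g | 0 < (deg g).toAdd ∨ N g} ?_ ?_ ?_ ?_
  · rintro (h | ⟨j, γ, hγ, h⟩)
    · simp at h
    · have h2 : ι γ = 1 := by
        have h3 : ι γ = (t ^ j)⁻¹ * (t ^ j * ι γ * (t ^ j)⁻¹) * t ^ j := by group
        rw [h3, ← h]; group
      rw [(map_eq_one_iff ι hι).1 h2] at hγ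
      exact h1 hγ
  · rintro a ha b hb
    rcases ha with ha | ha <;> rcases hb with hb | hb
    · exact Or.inl (by rw [map_mul, toAdd_mul]; exact add_pos ha hb)
    · exact Or.inl (by rwa [map_mul, hdeg b hb, mul_one])
    · exact Or.inl (by rwa [map_mul, hdeg a ha, one_mul])
    · exact Or.inr (hNmul a b ha hb)
  · intro a ha
    rcases lt_trichotomy 0 (deg a).toAdd with h | h | h
    · exact Or.inl (Or.inl h)
    · obtain ⟨j, l, γ, rfl⟩ := exists_pow_mul_map_mul hτ hgen a
      have hjl : j = l := by
        have h2 : (deg (t ^ j * ι γ * (t ^ l)⁻¹)).toAdd = (j : ℤ) - l := by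
          simp [hdι, hdt, sub_eq_add_neg]
        omega
      subst hjl
      have hγ : γ ≠ 1 := by
        rintro rfl
        simp at ha
      rcases htot γ hγ with h' | h'
      · exact Or.inl (Or.inr ⟨j, γ, h', rfl⟩)
      · exact Or.inr (Or.inr ⟨j, γ⁻¹, h', by rw [map_inv]; group⟩)
    · exact Or.inr (Or.inl (by rw [map_inv, toAdd_inv]; omega))
  · rintro a (ha | ha) b
    · exact Or.inl (by simpa using ha)
    · exact Or.inr (hS b a ha)

end Extension

section Presentation

variable {n : ℕ} {m d : Fin n → ℤ} {κ : Fin n → ℕ} {e : ℤ}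

/-- The relator `∏ i, t ^ (-d i) x ^ (m i) t ^ (d i)`. -/
def principalRel (m d : Fin n → ℤ) : FreeGroup Bool :=
  ((List.finRange n).map fun i => (FreeGroup.of false) ^ (-(d i)) * (FreeGroup.of true) ^ (m i) *
    (FreeGroup.of false) ^ (d i)).prod

lemma map_principalRel {H : Type*} [Group H] (f : FreeGroup Bool →* H) :
    f (principalRel m d) = ((List.finRange n).map fun i =>
      f (.of false) ^ (-(d i)) * f (.of true) ^ (m i) * f (.of false) ^ (d i)).prod := by
  simp only [principalRel, map_list_prod, List.map_map, Function.comp_def, map_mul, map_zpow]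

/-- The conjugates `t ^ (-k) x t ^ k` satisfy the translated relators up to conjugation. -/
lemma prod_conj_eq (hκ : ∀ i, (κ i : ℤ) = d i - e) {H : Type*} [Group H] (s y : H) (l : ℕ) :
    ((List.finRange n).map fun i => ((s ^ (κ i + l))⁻¹ * y * s ^ (κ i + l)) ^ m i).prod =
      s ^ (e - l) * ((List.finRange n).map fun i => s ^ (-(d i)) * y ^ (m i) * s ^ (d i)).prod *
        (s ^ (e - l))⁻¹ := by
  rw [← MulAut.conj_apply, map_list_prod, List.map_map]
  refine congrArg List.prod (List.map_congr_left fun i _ => ?_)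
  have h1 : s ^ (κ i + l) = s ^ d i * (s ^ (e - l))⁻¹ := by
    rw [← zpow_natCast, ← zpow_neg, ← zpow_add]
    congr 1
    push_cast
    rw [hκ]
    ring
  have h2 : (s ^ (κ i + l))⁻¹ * y * s ^ (κ i + l) =
      MulAut.conj (s ^ (κ i + l))⁻¹ y := by rw [MulAut.conj_apply, inv_inv]
  rw [h2, ← map_zpow, Function.comp_apply, MulAut.conj_apply, MulAut.conj_apply, h1]
  group

/-- The conjugate `t ^ (-k) x t ^ k` of the generator `x`. -/
def conjGen (m d : Fin n → ℤ) (k : ℕ) : PresentedGroup {principalRel m d} :=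
  (PresentedGroup.of false ^ k)⁻¹ * PresentedGroup.of true * PresentedGroup.of false ^ k

/-- The tower group maps to the group presented by the principal word. -/
def towerMap (m : Fin n → ℤ) (hκ : ∀ i, (κ i : ℤ) = d i - e) :
    Tower m κ →* PresentedGroup {principalRel m d} :=
  towerLift (conjGen m d) fun l => by
    have h0 : PresentedGroup.mk {principalRel m d} (principalRel m d) = 1 :=
      PresentedGroup.one_of_mem rfl
    rw [map_principalRel] at h0
    have h := prod_conj_eq (m := m) hκ
      (PresentedGroup.of false : PresentedGroup {principalRel m d}) (PresentedGroup.of true) l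
    refine h.trans ?_
    rw [conj_eq_one_iff]
    exact h0

lemma towerMap_gen (hκ : ∀ i, (κ i : ℤ) = d i - e) (k : ℕ) :
    towerMap m hκ (towerGen m κ k) = conjGen m d k :=
  towerLift_gen _ _ k

lemma tower_induction {H : Type*} [Group H] {f g : Tower m κ →* H}
    (h : ∀ k, f (towerGen m κ k) = g (towerGen m κ k)) : f = g :=
  PresentedGroup.ext h

lemma towerMap_mul (hκ : ∀ i, (κ i : ℤ) = d i - e) (γ : Tower m κ) :
    towerMap m hκ γ * PresentedGroup.of false =
      PresentedGroup.of false * towerMap m hκ (towerShift m κ γ) := by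
  have : ((MulAut.conj (PresentedGroup.of false : PresentedGroup
      {principalRel m d})⁻¹).toMonoidHom.comp
      (towerMap m hκ)) = (towerMap m hκ).comp (towerShift m κ) := by
    refine tower_induction fun k => ?_
    simp only [MonoidHom.comp_apply, towerShift_gen, towerMap_gen, conjGen, pow_succ]
    simp [mul_assoc]
  have h := DFunLike.congr_fun this γ
  simp only [MonoidHom.comp_apply] at h
  rw [← h]
  simp [mul_assoc]

/-- The exponent sum in `t`. -/
def tDegree (m d : Fin n → ℤ) : PresentedGroup {principalRel m d} →* Multiplicative ℤ :=
  PresentedGroup.toGroup (f := fun b => if b then 1 else Multiplicative.ofAdd 1) (by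
    rintro _ rfl
    simp only [map_principalRel, FreeGroup.lift_apply_of]
    refine List.prod_eq_one fun y hy => ?_
    obtain ⟨i, -, rfl⟩ := List.mem_map.1 hy
    simp)

lemma towerMap_injective (hκ : ∀ i, (κ i : ℤ) = d i - e)
    (hτ : Function.Injective (towerShift m κ)) : Function.Injective (towerMap m hκ) := by
  let φ : (⊤ : Subgroup (Tower m κ)) ≃* (towerShift m κ).range :=
    Subgroup.topEquiv.trans (MonoidHom.ofInjective hτ)
  let H := HNNExtension (Tower m κ) ⊤ (towerShift m κ).range φ
  let inc : Tower m κ →* H := HNNExtension.of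
  let s : H := (HNNExtension.t : H)⁻¹
  have hs (γ : Tower m κ) : inc γ * s = s * inc (towerShift m κ γ) := by
    have h : (HNNExtension.t : H) * inc γ = inc (towerShift m κ γ) * HNNExtension.t :=
      HNNExtension.t_mul_of (φ := φ) (⟨γ, trivial⟩ : (⊤ : Subgroup (Tower m κ)))
    rw [mul_inv_eq_iff_eq_mul, mul_assoc, ← h, inv_mul_cancel_left]
  have hgen (k : ℕ) : (s ^ k)⁻¹ * inc (towerGen m κ 0) * s ^ k = inc (towerGen m κ k) := by
    induction k with
    | zero => simp
    | succ k ih =>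
      have h : s⁻¹ * inc (towerGen m κ k) * s = inc (towerGen m κ (k + 1)) := by
        rw [mul_assoc, hs, towerShift_gen, inv_mul_cancel_left]
      rw [← h, ← ih, pow_succ]
      simp only [mul_inv_rev, mul_assoc]
  let f : PresentedGroup {principalRel m d} →* H :=
    PresentedGroup.toGroup (f := fun b => if b then inc (towerGen m κ 0) else s) (by
      rintro _ rfl
      simp only [map_principalRel, FreeGroup.lift_apply_of]
      have h := prod_conj_eq (m := m) hκ s (inc (towerGen m κ 0)) 0
      simp only [hgen, ← map_zpow] at h
      rw [eq_comm] at h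
      have h0 := congrArg inc (towerGen_rel (m := m) (κ := κ) 0)
      rw [map_list_prod, List.map_map, map_one] at h0
      have h1 := h.trans h0
      rw [conj_eq_one_iff] at h1
      simpa using h1)
  have hf : f.comp (towerMap m hκ) = inc := by
    refine tower_induction fun k => ?_
    rw [MonoidHom.comp_apply, towerMap_gen, ← hgen]
    simp [conjGen, f, PresentedGroup.toGroup.of]
  have hinj : Function.Injective (f.comp (towerMap m hκ)) := by
    rw [hf]
    exact HNNExtension.of_injective φ
  exact fun a b hab => hinj (congrArg f hab)

lemma closure_insert_range_towerMap (hκ : ∀ i, (κ i : ℤ) = d i - e) :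
    Subgroup.closure (insert (PresentedGroup.of false : PresentedGroup {principalRel m d})
      (Set.range (towerMap m hκ))) = ⊤ := by
  rw [eq_top_iff, ← PresentedGroup.closure_range_of, Subgroup.closure_le]
  rintro _ ⟨b, rfl⟩
  refine Subgroup.subset_closure ?_
  cases b with
  | false => exact Set.mem_insert _ _
  | true => exact Set.mem_insert_of_mem _ ⟨towerGen m κ 0, by rw [towerMap_gen]; simp [conjGen]⟩

/-- The group of a principal word is bi-orderable once its tower group has a positive cone
preserved by the shift. -/
theorem isBiOrderable_of_tower_cone (hκ : ∀ i, (κ i : ℤ) = d i - e) (P : Set (Tower m κ))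
    (h1 : 1 ∉ P) (hmul : ∀ a ∈ P, ∀ b ∈ P, a * b ∈ P) (htot : ∀ a, a ≠ 1 → a ∈ P ∨ a⁻¹ ∈ P)
    (hconj : ∀ a ∈ P, ∀ b, b * a * b⁻¹ ∈ P) (hP : ∀ a ∈ P, towerShift m κ a ∈ P) :
    IsBiOrderable (PresentedGroup {principalRel m d}) := by
  have hτ : Function.Injective (towerShift m κ) := by
    rw [injective_iff_map_eq_one]
    intro a ha
    by_contra hne
    rcases htot a hne with h | h
    · exact h1 (ha ▸ hP a h)
    · have := hP _ h
      rw [map_inv, ha, inv_one] at this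
      exact h1 this
  refine isBiOrderable_of_ascending (towerMap_injective hκ hτ) (towerMap_mul hκ)
    (closure_insert_range_towerMap hκ) (tDegree m d) (PresentedGroup.toGroup.of _) (fun γ => ?_)
    P h1 hmul htot hconj hP
  have : (tDegree m d).comp (towerMap m hκ) = 1 := by
    refine tower_induction fun k => ?_
    rw [MonoidHom.comp_apply, towerMap_gen]
    simp [conjGen, tDegree, PresentedGroup.toGroup.of]
  exact DFunLike.congr_fun this γ

end Presentation

end PrincipalGroup

/-- **Theorem D.** Let `G = ⟨x, t ∣ w⟩` where `w = ∏ i, t^(-d i) x^(m i) t^(d i)` is a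
principal word (tidy, with a unique index attaining the maximal `t`-exponent `D`).
With `δ = D - e` and `a k = ∑_{d i - e = k} m i`, the associated polynomial is
`A(X) = a 0 + a 1 * X + ⋯ + a (δ-1) * X^(δ-1) - mval * X^δ` where `-mval = a δ`.
If `gcd (a 0, …, a (δ-1)) = 1`, `mval` does not divide `a (δ-1)`, and every complex
root of `A(X)` is a positive real number, then `G` is bi-orderable.
Here `x = FreeGroup.of true`, `t = FreeGroup.of false`. -/
theorem biorderable_of_principal_positive_real_roots
    (n : ℕ) (hn : 1 ≤ n) (m d : Fin n → ℤ)
    (e D : ℤ)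
    (he : IsLeast (Set.range d) e) (hD : IsGreatest (Set.range d) D)
    (htidyE : (∑ i ∈ Finset.univ.filter fun i => d i = e, m i) ≠ 0)
    (htidyD : (∑ i ∈ Finset.univ.filter fun i => d i = D, m i) ≠ 0)
    (hprincipal : ∃! i : Fin n, d i = D)
    (δ : ℕ) (hδ : (δ : ℤ) = D - e)
    (a : ℕ → ℤ)
    (ha : ∀ k : ℕ, a k = ∑ i ∈ Finset.univ.filter fun i => d i - e = (k : ℤ), m i)
    (mval : ℤ) (hmval : mval = -(a δ))
    (hgcd : (Finset.range δ).gcd a = 1)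
    (hndvd : ¬ mval ∣ a (δ - 1))
    (hroots : ∀ z : ℂ,
      Polynomial.aeval z
        ((∑ k ∈ Finset.range δ, Polynomial.C (a k) * Polynomial.X ^ k) -
          Polynomial.C mval * Polynomial.X ^ δ) = 0 →
      z.im = 0 ∧ 0 < z.re) :
    IsBiOrderable (PresentedGroup
      ({((List.finRange n).map fun i =>
          (FreeGroup.of false) ^ (-(d i)) * (FreeGroup.of true) ^ (m i) *
            (FreeGroup.of false) ^ (d i)).prod} : Set (FreeGroup Bool))) := by
  obtain ⟨i₀, hi₀, huniq⟩ := hprincipal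
  have hκ (i : Fin n) : ((d i - e).toNat : ℤ) = d i - e :=
    Int.toNat_of_nonneg (sub_nonneg.2 (he.2 ⟨i, rfl⟩))
  let κ (i : Fin n) : ℕ := (d i - e).toNat
  have htop : PrincipalGroup.IsTop κ δ i₀ := by
    refine ⟨?_, fun i hi => ?_⟩
    · have := hκ i₀
      simp only [κ]
      omega
    · have h1 := hκ i
      have h2 : d i ≤ D := hD.2 ⟨i, rfl⟩
      have h3 : d i ≠ D := fun h => hi (huniq i h)
      simp only [κ]
      omega
  have hm : m i₀ ≠ 0 := by
    have : Finset.univ.filter (fun i => d i = D) = {i₀} := by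
      ext i
      simp only [Finset.mem_filter, Finset.mem_univ, true_and, Finset.mem_singleton]
      exact ⟨huniq i, fun h => h ▸ hi₀⟩
    rwa [this, Finset.sum_singleton] at htidyD
  have hcoeff (k : ℕ) : (PrincipalGroup.relPoly m κ).coeff k = a k := by
    rw [PrincipalGroup.coeff_relPoly, ha, Finset.sum_filter]
    refine Finset.sum_congr rfl fun i _ => if_congr ?_ rfl rfl
    have := hκ i
    simp only [κ]
    omega
  have hpoly : (∑ k ∈ Finset.range δ, Polynomial.C (a k) * Polynomial.X ^ k) -
      Polynomial.C mval * Polynomial.X ^ δ = PrincipalGroup.relPoly m κ := by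
    rw [(PrincipalGroup.relPoly m κ).as_sum_range_C_mul_X_pow' (n := δ + 1)
      (Nat.lt_succ_of_le (PrincipalGroup.natDegree_relPoly_le htop)), Finset.sum_range_succ, hmval]
    simp only [hcoeff, Polynomial.C_neg, neg_mul, sub_neg_eq_add]
  rw [hpoly] at hroots
  obtain ⟨P, h1, hmul, htot, hconj, hP⟩ :=
    PrincipalGroup.tower_exists_positive_cone htop hm (fun p hp => by
      by_contra! h
      have : (p : ℤ) ∣ (Finset.range δ).gcd a := Finset.dvd_gcd fun k hk => by
        rw [← hcoeff]
        exact h k (Finset.mem_range.1 hk)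
      rw [hgcd] at this
      exact hp.one_lt.ne' (by exact_mod_cast Int.eq_one_of_dvd_one (by positivity) this)) hroots
  exact PrincipalGroup.isBiOrderable_of_tower_cone hκ P h1 hmul htot hconj hP
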